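/- arXiv:1405.6408 — 3 statements merged into one kernel-verified Lean document; each statement's English description precedes it below -/
import Mathlib

section
/- Fix a positive integer p, positive integers a < b, set c = a/b ∈ (0,1), and fix an integer N ≥ 0. For a positive integer t set n = a·t and m = b·t, and let κ(p) = κ(p,n,m) be the p-th cumulant associated with the moment sequence q ↦ μ0(q,n,m). Define α_{1,j}(c) = β_{1,j}(c) and, recursively for p ≥ 2, α_{p,j}(c) = β_{p,p−1+j}(c) − Σ_{r=1}^{p−1} C(p−1,r−1) · Σ_{ℓ=0}^{p−r+j} α_{r,ℓ}(c)·β_{p−r,p−r+j−ℓ}(c). Then there exist a constant C > 0 and a positive integer T such that for all integers t ≥ T, |κ(p,n,m) − Σ_{j=0}^N α_{p,j}(c)/n^{2(p−1+j)}| ≤ C·n^{−2(p+N)}. -/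
open Finset
open Finset

/-- Exact `p`-th moment of the GLRT statistic under `H₀`. -/
noncomputable def mu0 (p n m : ℕ) : ℝ :=
  Real.Gamma ((m : ℝ) * n) / ((n : ℝ) ^ p * Real.Gamma ((m : ℝ) * n - p)) *
    ∏ j ∈ Finset.range n,
      Real.Gamma ((m : ℝ) - n + 1 - p / n + j) / Real.Gamma ((m : ℝ) - n + 1 + j)

/-- Rising factorial `(a)_r = a (a+1) ⋯ (a+r-1)` as a real number. -/
noncomputable def risingFactorial (a : ℕ) (r : ℕ) : ℝ :=
  ∏ i ∈ Finset.range r, ((a : ℝ) + i)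

/-- Coefficients `A_{p,q}(c)` of the asymptotic expansion of `ln μ0`. -/
noncomputable def Acoef (p : ℕ) (c : ℝ) : ℕ → ℝ
  | 0 => p - p * (1 - 1 / c) * Real.log (1 - c)
  | 1 => -((p : ℝ) ^ 2 / 2) * Real.log (1 - c)
          + c * p * (12 - 11 * c + 6 * (1 - (p : ℝ)) * (c - 1)) / (12 * (c - 1))
  | (q + 2) =>
      (c * p) ^ (q + 2) * (c + 12 * p - 12 * c * p - c * ((q + 2 : ℕ) : ℝ) ^ 2)
          / (12 * c * ((q + 2 : ℕ) : ℝ) * (((q + 2 : ℕ) : ℝ) ^ 2 - 1) * (1 - c) ^ (q + 2))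
        + (c * p) ^ (q + 2) * (-12 * p + c * (((q + 2 : ℕ) : ℝ) ^ 2 - 1))
          / (12 * c * ((q + 2 : ℕ) : ℝ) * (((q + 2 : ℕ) : ℝ) ^ 2 - 1))
        - (c ^ (q + 2) / ((q + 2 : ℕ) : ℝ)) * ∑ j ∈ Finset.Icc 1 p, (j : ℝ) ^ (q + 2)
        + ∑ j ∈ Finset.Icc 1 (q + 1),
            (bernoulli (2 * j + 2) : ℝ) * c ^ (2 * j) * risingFactorial (2 * j) (q + 2 - j)
              * (p * c) ^ (q + 2 - j)
              / (4 * j * (j + 1) * (Nat.factorial (q + 2 - j)))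
              * (1 - (1 - c) ^ (-(j : ℤ) - (q + 2 : ℤ)))

/-- Coefficients `β_{p,j}(c)` of the asymptotic expansion of `μ0`. -/
noncomputable def bcoef (p : ℕ) (c : ℝ) (j : ℕ) : ℝ :=
  Real.exp (Acoef p c 0) *
    ∑ i ∈ Finset.univ.filter
        (fun i : Fin j → Fin (j + 1) => ∑ r : Fin j, (r.1 + 1) * (i r).1 = j),
      ∏ r : Fin j, (Acoef p c (r.1 + 1)) ^ (i r).1 / (Nat.factorial (i r).1)

/-- Coefficients `α_{p,j}(c)` of the asymptotic expansion of the cumulants. -/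
noncomputable def acoef (c : ℝ) : ℕ → ℕ → ℝ
  | 0, _ => 0
  | 1, j => bcoef 1 c j
  | (p + 2), j =>
      bcoef (p + 2) c (p + 1 + j) -
        ∑ s ∈ (Finset.range (p + 1)).attach,
          (Nat.choose (p + 1) s.1 : ℝ) *
            ∑ l ∈ Finset.range (p + 1 - s.1 + j + 1),
              acoef c (s.1 + 1) l * bcoef (p + 1 - s.1) c (p + 1 - s.1 + j - l)
termination_by p _ => p
decreasing_by
  have h := Finset.mem_range.mp s.2
  omega

/-- Cumulants associated with a sequence of moments `μ`:
`κ(1) = μ(1)` and `κ(p) = μ(p) − Σ_{ℓ=1}^{p−1} C(p−1,ℓ−1)·κ(ℓ)·μ(p−ℓ)` for `p ≥ 2`. -/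
noncomputable def cumulant (μ : ℕ → ℝ) : ℕ → ℝ
  | 0 => 0
  | 1 => μ 1
  | (p + 2) =>
      μ (p + 2) -
        ∑ l ∈ (Finset.range (p + 1)).attach,
          (Nat.choose (p + 1) l.1 : ℝ) * cumulant μ (l.1 + 1) * μ (p + 1 - l.1)
termination_by p => p
decreasing_by
  have h := Finset.mem_range.mp l.2
  omega

/-! The logarithm of `μ0 p n m` is elementary up to the sum over `n` consecutive values `y` of
`log Γ(y - p/n) - log Γ(y)`. The second central difference operator `e^D + e^{-D} - 2` is `D²`
times an invertible power series in `D`, so applying the (truncated) inverse series to the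
derivatives of a second antiderivative of `log` gives a function `W` whose second central difference
is `log` up to any prescribed order; `W` behaves like the logarithm of the Barnes `G`-function, and
the sum telescopes to values of `W`. Expanding these in powers of `n⁻²` produces the `A_{p,q}`, and
exponentiating produces the `β_{p,j}`.

The cumulant recursion is polynomial, so it carries expansions to expansions. What remains is that
the orders below `p - 1` cancel. The difference `A_{p+1,q} - A_{p,q}` is a polynomial in `p` of
degree at most `q`, so the `k`-th forward difference in `p` of the quotient of consecutive moment
series is divisible by `X^k`. By Newton's forward difference formula this says that the quotient of
their exponential generating functions has its `l`-th coefficient divisible by `X^l`, and the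
divisibility passes to the derivative of the cumulant generating function. -/

section AsymptoticExpansion

open Filter Asymptotics Topology PowerSeries

theorem X_pow_dvd_sub_trunc {R : Type*} [CommRing R] (F : R⟦X⟧) (Q : ℕ) :
    X ^ Q ∣ F - (F.trunc Q : R⟦X⟧) :=
  Dvd.intro _ (eq_sub_of_add_eq (eq_X_pow_mul_shift_add_trunc Q F).symm)

theorem X_pow_dvd_subst_sub_aeval_trunc {R : Type*} [CommRing R] {D : R⟦X⟧}
    (hD : constantCoeff D = 0) (F : R⟦X⟧) (Q : ℕ) :
    X ^ Q ∣ F.subst D - (F.trunc Q).aeval D := by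
  have hsubst : HasSubst D := HasSubst.of_constantCoeff_zero' hD
  obtain ⟨H, hH⟩ := X_pow_dvd_sub_trunc F Q
  rw [← subst_coe hsubst, ← subst_sub hsubst, hH, subst_mul hsubst, subst_pow hsubst,
    subst_X hsubst]
  exact (pow_dvd_pow_of_dvd (X_dvd_iff.2 hD) Q).mul_right _

variable {α 𝕜 : Type*} [NontriviallyNormedField 𝕜] {l : Filter α} {ε f g : α → 𝕜}
  {F G : 𝕜⟦X⟧}

/-- `f` has the asymptotic expansion `∑ k, F_k ε ^ k` along `l`, to all orders in the
infinitesimal `ε`. The series `F` need not converge. -/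
structure HasExpansion (l : Filter α) (ε f : α → 𝕜) (F : 𝕜⟦X⟧) : Prop where
  tendsto_zero : Tendsto ε l (𝓝 0)
  isBigO : ∀ Q : ℕ, (fun t => f t - (F.trunc Q).eval (ε t)) =O[l] fun t => ε t ^ Q

theorem isBigO_one_eval (hε : Tendsto ε l (𝓝 0)) (P : Polynomial 𝕜) :
    (fun t => P.eval (ε t)) =O[l] fun _ => (1 : 𝕜) :=
  ((P.continuous.tendsto 0).comp hε).isBigO_one 𝕜

theorem isBigO_eval_of_X_pow_dvd (hε : Tendsto ε l (𝓝 0)) {P : Polynomial 𝕜} {Q : ℕ}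
    (h : (X : 𝕜⟦X⟧) ^ Q ∣ (P : 𝕜⟦X⟧)) :
    (fun t => P.eval (ε t)) =O[l] fun t => ε t ^ Q := by
  obtain ⟨P', rfl⟩ : Polynomial.X ^ Q ∣ P := by
    simpa only [X_pow_dvd_iff, Polynomial.coeff_coe, Polynomial.X_pow_dvd_iff] using h
  simpa only [Polynomial.eval_mul, Polynomial.eval_pow, Polynomial.eval_X, mul_one] using
    (isBigO_refl (fun t => ε t ^ Q) l).mul (isBigO_one_eval hε P')

namespace HasExpansion

theorem of_approx (hε : Tendsto ε l (𝓝 0))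
    (h : ∀ Q : ℕ, ∃ g G, HasExpansion l ε g G ∧ X ^ Q ∣ G - F ∧
      (fun t => f t - g t) =O[l] fun t => ε t ^ Q) :
    HasExpansion l ε f F where
  tendsto_zero := hε
  isBigO Q := by
    obtain ⟨g, G, hg, hGF, hfg⟩ := h Q
    have hdvd : X ^ Q ∣ ((G.trunc Q - F.trunc Q : Polynomial 𝕜) : 𝕜⟦X⟧) := by
      have := (dvd_sub hGF (X_pow_dvd_sub_trunc (G - F) Q))
      simpa only [trunc_sub, sub_sub_cancel] using this
    refine ((hfg.add (hg.isBigO Q)).add (isBigO_eval_of_X_pow_dvd hε hdvd)).congr_left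
      fun t => ?_
    rw [Polynomial.eval_sub]
    ring

protected theorem polynomial (hε : Tendsto ε l (𝓝 0)) (P : Polynomial 𝕜) :
    HasExpansion l ε (fun t => P.eval (ε t)) (P : 𝕜⟦X⟧) where
  tendsto_zero := hε
  isBigO Q := by
    have hdvd : X ^ Q ∣ ((P - trunc Q (P : 𝕜⟦X⟧) : Polynomial 𝕜) : 𝕜⟦X⟧) := by
      simpa only [Polynomial.coe_sub] using X_pow_dvd_sub_trunc (P : 𝕜⟦X⟧) Q
    simpa only [Polynomial.eval_sub] using isBigO_eval_of_X_pow_dvd hε hdvd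

protected theorem const (hε : Tendsto ε l (𝓝 0)) (x : 𝕜) :
    HasExpansion l ε (fun _ => x) (C x) := by
  simpa using HasExpansion.polynomial hε (Polynomial.C x)

protected theorem X_pow (hε : Tendsto ε l (𝓝 0)) (k : ℕ) :
    HasExpansion l ε (fun t => ε t ^ k) (X ^ k) := by
  simpa using HasExpansion.polynomial hε (Polynomial.X ^ k)

theorem congr' (hf : HasExpansion l ε f F) (h : f =ᶠ[l] g) : HasExpansion l ε g F where
  tendsto_zero := hf.tendsto_zero
  isBigO Q := (hf.isBigO Q).congr' (h.mono fun t ht => by simp only [ht]) EventuallyEq.rfl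

theorem isBigO_one (hf : HasExpansion l ε f F) : f =O[l] fun _ => (1 : 𝕜) := by
  simpa using hf.isBigO 0

protected theorem add (hf : HasExpansion l ε f F) (hg : HasExpansion l ε g G) :
    HasExpansion l ε (fun t => f t + g t) (F + G) where
  tendsto_zero := hf.tendsto_zero
  isBigO Q := ((hf.isBigO Q).add (hg.isBigO Q)).congr_left fun t => by
    rw [map_add, Polynomial.eval_add]
    ring

protected theorem mul (hf : HasExpansion l ε f F) (hg : HasExpansion l ε g G) :
    HasExpansion l ε (fun t => f t * g t) (F * G) := by
  refine of_approx hf.tendsto_zero fun Q =>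
    ⟨_, _, HasExpansion.polynomial hf.tendsto_zero (F.trunc Q * G.trunc Q), ?_, ?_⟩
  · have hsplit : ((F.trunc Q * G.trunc Q : Polynomial 𝕜) : 𝕜⟦X⟧) - F * G =
        -(F * (G - G.trunc Q) + (F - F.trunc Q) * G.trunc Q) := by
      push_cast
      ring
    rw [hsplit]
    exact (((X_pow_dvd_sub_trunc G Q).mul_left _).add
      ((X_pow_dvd_sub_trunc F Q).mul_right _)).neg_right
  · have hfG := hf.isBigO_one.mul (hg.isBigO Q)
    have hFg := (hf.isBigO Q).mul (isBigO_one_eval hf.tendsto_zero (G.trunc Q))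
    simp only [one_mul, mul_one] at hfG hFg
    refine (hfG.add hFg).congr_left fun t => ?_
    rw [Polynomial.eval_mul]
    ring

theorem const_mul (hf : HasExpansion l ε f F) (x : 𝕜) :
    HasExpansion l ε (fun t => x * f t) (C x * F) :=
  (HasExpansion.const hf.tendsto_zero x).mul hf

protected theorem sub (hf : HasExpansion l ε f F) (hg : HasExpansion l ε g G) :
    HasExpansion l ε (fun t => f t - g t) (F - G) := by
  simpa [sub_eq_add_neg] using hf.add (hg.const_mul (-1))

protected theorem sum {ι : Type*} (s : Finset ι) {f : ι → α → 𝕜} {F : ι → 𝕜⟦X⟧}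
    (hε : Tendsto ε l (𝓝 0)) (h : ∀ i ∈ s, HasExpansion l ε (f i) (F i)) :
    HasExpansion l ε (fun t => ∑ i ∈ s, f i t) (∑ i ∈ s, F i) := by
  classical
  induction s using Finset.induction_on with
  | empty => simpa using HasExpansion.const hε 0
  | insert i s hi ih =>
    simp only [Finset.sum_insert hi]
    exact (h i (s.mem_insert_self i)).add (ih fun j hj => h j (Finset.mem_insert_of_mem hj))

protected theorem pow (hf : HasExpansion l ε f F) (k : ℕ) :
    HasExpansion l ε (fun t => f t ^ k) (F ^ k) := by
  induction k with
  | zero => simpa using HasExpansion.const hf.tendsto_zero 1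
  | succ k ih => simpa only [pow_succ] using ih.mul hf

theorem eval (hf : HasExpansion l ε f F) (P : Polynomial 𝕜) :
    HasExpansion l ε (fun t => P.eval (f t)) (P.aeval F) := by
  simp only [Polynomial.eval_eq_sum, Polynomial.sum, Polynomial.aeval_def,
    Polynomial.eval₂_eq_sum]
  exact HasExpansion.sum _ hf.tendsto_zero fun k _ => (hf.pow k).const_mul _

theorem subst {δ : α → 𝕜} {D : 𝕜⟦X⟧} (hf : HasExpansion l δ f F) (hδ : HasExpansion l ε δ D)
    (hD : constantCoeff D = 0) : HasExpansion l ε f (F.subst D) := by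
  refine of_approx hδ.tendsto_zero fun Q => ⟨_, _, hδ.eval (F.trunc Q), ?_, ?_⟩
  · rw [← dvd_neg, neg_sub]
    exact X_pow_dvd_subst_sub_aeval_trunc hD F Q
  · have hδε : δ =O[l] ε := by
      simpa [trunc_one_left, hD] using hδ.isBigO 1
    exact (hf.isBigO Q).trans (hδε.pow Q)

theorem rescale {y : 𝕜} (hf : HasExpansion l (fun t => y * ε t) f F)
    (hε : Tendsto ε l (𝓝 0)) : HasExpansion l ε f (PowerSeries.rescale y F) := by
  rw [rescale_eq_subst]
  refine hf.subst ?_ (by simp)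
  simpa [smul_eq_C_mul] using (HasExpansion.X_pow hε 1).const_mul y

theorem of_hasSum {φ : 𝕜 → 𝕜} (hφ : ∀ᶠ x in 𝓝 0, HasSum (fun k => coeff k F * x ^ k) (φ x))
    (hε : Tendsto ε l (𝓝 0)) : HasExpansion l ε (fun t => φ (ε t)) F where
  tendsto_zero := hε
  isBigO Q := by
    have hseries : HasFPowerSeriesAt φ (.ofScalars 𝕜 fun k => coeff k F) 0 := by
      rw [hasFPowerSeriesAt_iff]
      filter_upwards [hφ] with x hx
      simpa [FormalMultilinearSeries.coeff_ofScalars, mul_comm] using hx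
    have hO := (hseries.isBigO_sub_partialSum_pow Q).comp_tendsto hε
    refine (hO.congr_left fun t => ?_).trans (isBigO_of_le _ fun t => by simp)
    simp [FormalMultilinearSeries.partialSum, Polynomial.eval, eval₂_trunc_eq_sum_range, mul_comm]

theorem of_mul (hf : HasExpansion l ε (fun t => ε t * f t) (X * F)) (hne : ∀ᶠ t in l, ε t ≠ 0) :
    HasExpansion l ε f F where
  tendsto_zero := hf.tendsto_zero
  isBigO Q := by
    have hO := (isBigO_refl (fun t => (ε t)⁻¹) l).mul (hf.isBigO (Q + 1))
    refine hO.congr' (hne.mono fun t ht => ?_) (hne.mono fun t ht => ?_)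
    · have htrunc : (trunc (Q + 1) (X * F)).eval (ε t) = ε t * (F.trunc Q).eval (ε t) := by
        simp only [Polynomial.eval, eval₂_trunc_eq_sum_range, RingHom.id_apply,
          Finset.sum_range_succ', coeff_succ_X_mul, coeff_zero_X_mul, zero_mul, add_zero, mul_sum]
        exact Finset.sum_congr rfl fun _ _ => by ring
      simp only [htrunc]
      field_simp
    · simp only [pow_succ]
      field_simp

theorem isBigO_sub_sum {p : ℕ} (hf : HasExpansion l ε f F) (hF : X ^ p ∣ F) (N : ℕ) :
    (fun t => f t - ∑ j ∈ range N, coeff (p + j) F * ε t ^ (p + j)) =O[l]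
      fun t => ε t ^ (p + N) := by
  have hlow (t : α) : ∑ j ∈ range p, coeff j F * ε t ^ j = 0 :=
    sum_eq_zero fun j hj => by rw [X_pow_dvd_iff.1 hF j (mem_range.1 hj), zero_mul]
  simpa only [Polynomial.eval, eval₂_trunc_eq_sum_range, RingHom.id_apply, sum_range_add, hlow,
    zero_add] using hf.isBigO (p + N)

end HasExpansion

end AsymptoticExpansion

section ExpSeries

open Filter Topology PowerSeries

theorem dvd_subst_sub_C_constantCoeff {R : Type*} [CommRing R] {D : R⟦X⟧}
    (hD : constantCoeff D = 0) (F : R⟦X⟧) : D ∣ F.subst D - C (constantCoeff F) := by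
  have hsubst : HasSubst D := HasSubst.of_constantCoeff_zero' hD
  have hC : (C (constantCoeff F)).subst D = C (constantCoeff F) := subst_C _
  obtain ⟨G, hG⟩ : X ∣ F - C (constantCoeff F) := X_dvd_iff.2 (by simp)
  rw [← hC, ← subst_sub hsubst, hG, subst_mul hsubst, subst_X hsubst]
  exact dvd_mul_right _ _

section Substitution

variable {R : Type*} [CommRing R] [Algebra ℚ R] {A B : R⟦X⟧}

theorem constantCoeff_exp_subst (hA : constantCoeff A = 0) :
    constantCoeff ((exp R).subst A : R⟦X⟧) = 1 := by
  have hX := (X_dvd_iff.2 hA).trans (dvd_subst_sub_C_constantCoeff hA (exp R))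
  rwa [constantCoeff_exp, map_one, X_dvd_iff, map_sub, map_one, sub_eq_zero] at hX

variable [IsAddTorsionFree R]

theorem exp_subst_mul_exp_subst_neg (hA : constantCoeff A = 0) :
    (exp R).subst A * (exp R).subst (-A) = (1 : R⟦X⟧) := by
  have hA' : constantCoeff (-A) = 0 := by rw [map_neg, hA, neg_zero]
  refine derivative.ext ?_ (by simp [constantCoeff_exp_subst, hA])
  rw [Derivation.leibniz, derivative_subst (.of_constantCoeff_zero' hA),
    derivative_subst (.of_constantCoeff_zero' hA'), derivative_exp, map_neg,
    Derivation.map_one_eq_zero, smul_eq_mul, smul_eq_mul]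
  ring

theorem exp_subst_add (hA : constantCoeff A = 0) (hB : constantCoeff B = 0) :
    ((exp R).subst (A + B) : R⟦X⟧) = (exp R).subst A * (exp R).subst B := by
  have hA' : constantCoeff (-A) = 0 := by rw [map_neg, hA, neg_zero]
  have hB' : constantCoeff (-B) = 0 := by rw [map_neg, hB, neg_zero]
  have hAB : constantCoeff (A + B) = 0 := by rw [map_add, hA, hB, add_zero]
  have hone : (exp R).subst (A + B) * ((exp R).subst (-A) * (exp R).subst (-B)) =
      (1 : R⟦X⟧) := by
    refine derivative.ext ?_ (by simp [constantCoeff_exp_subst, hA, hB])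
    simp only [Derivation.leibniz, derivative_subst (.of_constantCoeff_zero' hA'),
      derivative_subst (.of_constantCoeff_zero' hB'),
      derivative_subst (.of_constantCoeff_zero' hAB), derivative_exp, map_neg, map_add,
      Derivation.map_one_eq_zero, smul_eq_mul]
    ring
  linear_combination ((exp R).subst A * (exp R).subst B) * hone -
    (exp R).subst (A + B) * ((exp R).subst B * (exp R).subst (-B) *
      exp_subst_mul_exp_subst_neg hA + exp_subst_mul_exp_subst_neg hB)

theorem exp_subst_sum {ι : Type*} (s : Finset ι) (A : ι → R⟦X⟧)
    (hA : ∀ i ∈ s, constantCoeff (A i) = 0) :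
    ((exp R).subst (∑ i ∈ s, A i) : R⟦X⟧) = ∏ i ∈ s, (exp R).subst (A i) := by
  classical
  induction s using Finset.induction_on with
  | empty => simp [subst_zero_eq_C_constantCoeff]
  | insert i s hi ih =>
    have hs : ∀ j ∈ s, constantCoeff (A j) = 0 := fun j hj => hA j (mem_insert_of_mem hj)
    rw [sum_insert hi, prod_insert hi, exp_subst_add (hA i (mem_insert_self i s)), ih hs]
    rw [map_sum, Finset.sum_eq_zero hs]

theorem dvd_exp_subst_sub_exp_subst {D : R⟦X⟧} (hA : constantCoeff A = 0)
    (hB : constantCoeff B = 0) (h : D ∣ A - B) :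
    D ∣ (exp R).subst A - (exp R).subst B := by
  have hAB : constantCoeff (A - B) = 0 := by rw [map_sub, hA, hB, sub_zero]
  have hdvd := dvd_subst_sub_C_constantCoeff hAB (exp R)
  rw [constantCoeff_exp, map_one] at hdvd
  have hfactor : (exp R).subst A - (exp R).subst B =
      (exp R).subst B * ((exp R).subst (A - B) - 1) := by
    rw [mul_sub, ← exp_subst_add hB hAB, add_sub_cancel, mul_one]
  rw [hfactor]
  exact (h.trans hdvd).mul_left _

end Substitution

/-- The exponential of a real power series, with constant term `Real.exp` of the constant term.
`PowerSeries.exp` itself can only be substituted at series without constant term. -/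
noncomputable def expSeries (A : ℝ⟦X⟧) : ℝ⟦X⟧ :=
  C (Real.exp (constantCoeff A)) * (exp ℝ).subst (A - C (constantCoeff A))

@[simp]
theorem expSeries_zero : expSeries 0 = 1 := by
  simp [expSeries, subst_zero_eq_C_constantCoeff]

theorem expSeries_add (A B : ℝ⟦X⟧) : expSeries (A + B) = expSeries A * expSeries B := by
  have hsplit : A + B - C (constantCoeff (A + B)) =
      (A - C (constantCoeff A)) + (B - C (constantCoeff B)) := by
    simp only [map_add]
    ring
  rw [expSeries, hsplit, exp_subst_add (by simp) (by simp), map_add, Real.exp_add, map_mul,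
    expSeries, expSeries]
  ring

theorem isUnit_expSeries (A : ℝ⟦X⟧) : IsUnit (expSeries A) :=
  .of_mul_eq_one (expSeries (-A)) (by rw [← expSeries_add, add_neg_cancel, expSeries_zero])

theorem coeff_prod_sum_X_pow {R : Type*} [CommRing R] (j N : ℕ) (w : Fin j → ℕ)
    (u : Fin j → ℕ → R) (k : ℕ) :
    coeff k (∏ r : Fin j, ∑ i ∈ range N, C (u r i) * X ^ (w r * i)) =
      ∑ i : Fin j → Fin N with ∑ r, w r * (i r).1 = k, ∏ r, u r (i r).1 := by
  simp only [Finset.sum_range, prod_univ_sum, Fintype.piFinset_univ, map_sum, sum_filter,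
    prod_mul_distrib, prod_pow_eq_pow_sum, ← map_prod, coeff_C_mul, coeff_X_pow]
  refine Finset.sum_congr rfl fun i _ => ?_
  by_cases h : ∑ r, w r * (i r).1 = k
  · simp [h]
  · simp [h, Ne.symm h]

theorem coeff_exp_subst {A : ℝ⟦X⟧} (hA : constantCoeff A = 0) (j : ℕ) :
    coeff j ((exp ℝ).subst A : ℝ⟦X⟧) =
      ∑ i : Fin j → Fin (j + 1) with ∑ r : Fin j, (r.1 + 1) * (i r).1 = j,
        ∏ r : Fin j, coeff (r.1 + 1) A ^ (i r).1 / (i r).1.factorial := by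
  set I : Ideal ℝ⟦X⟧ := Ideal.span {X ^ (j + 1)}
  have hmod {F G : ℝ⟦X⟧} : F ≡ G [SMOD I] ↔ X ^ (j + 1) ∣ F - G := by
    rw [SModEq.sub_mem, Ideal.mem_span_singleton]
  have hterm (r : ℕ) : constantCoeff (C (coeff (r + 1) A) * X ^ (r + 1)) = 0 := by simp
  have htrunc : A ≡ ∑ r : Fin j, C (coeff (r.1 + 1) A) * X ^ (r.1 + 1) [SMOD I] := by
    rw [hmod, X_pow_dvd_iff]
    rintro (_ | m) hm
    · simp [hA]
    · rw [map_sub, map_sum, Fintype.sum_eq_single ⟨m, by omega⟩ fun r hr => ?_]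
      · simp
      · rw [coeff_C_mul, coeff_X_pow, if_neg (by simpa [Fin.ext_iff, eq_comm] using hr), mul_zero]
  have hfactor (r : Fin j) : (exp ℝ).subst (C (coeff (r.1 + 1) A) * X ^ (r.1 + 1)) ≡
      ∑ i ∈ range (j + 1), C (coeff (r.1 + 1) A ^ i / i.factorial) * X ^ ((r.1 + 1) * i)
        [SMOD I] := by
    rw [hmod]
    convert X_pow_dvd_subst_sub_aeval_trunc (hterm r) (exp ℝ) (j + 1) using 2
    rw [Polynomial.aeval_def, eval₂_trunc_eq_sum_range]
    refine Finset.sum_congr rfl fun i _ => ?_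
    simp [coeff_exp, mul_pow, ← pow_mul, div_eq_inv_mul, mul_assoc]
  have hexp : (exp ℝ).subst A ≡ ∏ r : Fin j, ∑ i ∈ range (j + 1),
      C (coeff (r.1 + 1) A ^ i / i.factorial) * X ^ ((r.1 + 1) * i) [SMOD I] := by
    have hsum := hmod.2 (dvd_exp_subst_sub_exp_subst hA (by simp) (hmod.1 htrunc))
    rw [exp_subst_sum _ _ fun (r : Fin j) _ => hterm r.1] at hsum
    exact hsum.trans (.prod fun r _ => hfactor r)
  rw [← coeff_prod_sum_X_pow j (j + 1) (fun r => r.1 + 1)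
    (fun r i => coeff (r.1 + 1) A ^ i / i.factorial), ← sub_eq_zero, ← map_sub]
  exact X_pow_dvd_iff.1 (hmod.1 hexp) j j.lt_succ_self

theorem hasExpansion_exp {α : Type*} {l : Filter α} {ε : α → ℝ} (hε : Tendsto ε l (𝓝 0)) :
    HasExpansion l ε (fun t => Real.exp (ε t)) (exp ℝ) :=
  .of_hasSum (.of_forall fun x => by
    simpa [Real.exp_eq_exp_ℝ, coeff_exp, div_eq_inv_mul] using
      NormedSpace.expSeries_div_hasSum_exp x) hε

theorem HasExpansion.exp {α : Type*} {l : Filter α} {ε f : α → ℝ} {A : ℝ⟦X⟧}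
    (hf : HasExpansion l ε f A) : HasExpansion l ε (fun t => Real.exp (f t)) (expSeries A) := by
  have hf0 := hf.sub (.const hf.tendsto_zero (constantCoeff A))
  have hlim : Tendsto (fun t => f t - constantCoeff A) l (𝓝 0) := by
    refine (Asymptotics.IsBigO.trans_tendsto ?_ hf.tendsto_zero)
    simpa [trunc_one_left] using hf.isBigO 1
  refine (((hasExpansion_exp hlim).subst hf0 (by simp)).const_mul
    (Real.exp (constantCoeff A))).congr' (.of_forall fun t => ?_)
  simp only [← Real.exp_add, add_sub_cancel]

end ExpSeries

section FormalCumulants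

open Filter PowerSeries

/-- The cumulants of a moment sequence with values in a commutative ring. Over `ℝ⟦X⟧` they are
the asymptotic expansions of the cumulants of a family of real moment sequences. -/
def formalCumulant {R : Type*} [CommRing R] (μ : ℕ → R) : ℕ → R
  | 0 => 0
  | p + 1 => μ (p + 1) - ∑ l : Fin p, (p.choose l : R) * formalCumulant μ (l + 1) * μ (p - l)
termination_by p => p
decreasing_by exact Nat.succ_lt_succ l.isLt

theorem formalCumulant_succ {R : Type*} [CommRing R] (μ : ℕ → R) (p : ℕ) :
    formalCumulant μ (p + 1) = μ (p + 1) -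
      ∑ l ∈ range p, (p.choose l : R) * formalCumulant μ (l + 1) * μ (p - l) := by
  rw [formalCumulant, Finset.sum_range]

theorem cumulant_eq_formalCumulant (μ : ℕ → ℝ) (p : ℕ) : cumulant μ p = formalCumulant μ p := by
  induction p using Nat.strong_induction_on with
  | _ p ih =>
    rcases p with _ | _ | p
    · rw [cumulant, formalCumulant]
    · rw [cumulant, formalCumulant_succ, range_zero, sum_empty, sub_zero]
    · rw [cumulant, formalCumulant_succ, sum_attach (range (p + 1)) fun l =>
        ((p + 1).choose l : ℝ) * cumulant μ (l + 1) * μ (p + 1 - l)]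
      refine congrArg _ (Finset.sum_congr rfl fun l hl => ?_)
      rw [ih (l + 1) (by have := mem_range.1 hl; omega)]

theorem HasExpansion.formalCumulant {α 𝕜 : Type*} [NontriviallyNormedField 𝕜] {l : Filter α}
    {ε : α → 𝕜} {μ : ℕ → α → 𝕜} {M : ℕ → 𝕜⟦X⟧} (h : ∀ q, HasExpansion l ε (μ q) (M q)) (p : ℕ) :
    HasExpansion l ε (fun t => formalCumulant (μ · t) (p + 1)) (formalCumulant M (p + 1)) := by
  induction p using Nat.strong_induction_on with
  | _ p ih =>
    simp_rw [formalCumulant_succ _ p]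
    refine (h (p + 1)).sub (.sum _ (h 0).tendsto_zero fun k hk => ?_)
    simpa only [map_natCast] using
      ((ih k (mem_range.1 hk)).const_mul (p.choose k : 𝕜)).mul (h (p - k))

variable {R : Type*} [CommRing R]

/-- The series `F` with `e ^ l ∣ F_l` for all `l ≤ N`: up to order `N`, those in the image of
`X ↦ e * X`. -/
def coeffDvdSubmonoid (e : R) (N : ℕ) : Submonoid R⟦X⟧ where
  carrier := {F | ∀ l ≤ N, e ^ l ∣ coeff l F}
  one_mem' l _ := by
    rcases eq_or_ne l 0 with rfl | hl <;> simp [coeff_one, *]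
  mul_mem' hF hG l hl := by
    rw [coeff_mul]
    refine dvd_sum fun x hx => ?_
    obtain rfl := mem_antidiagonal.1 hx
    rw [pow_add]
    exact mul_dvd_mul (hF _ (by omega)) (hG _ (by omega))

variable [Algebra ℚ R]

/-- The exponential generating function `∑ p, u_p X ^ p / p!`. -/
noncomputable def egf (u : ℕ → R) : R⟦X⟧ := mk fun p => (p.factorial : ℚ)⁻¹ • u p

theorem inv_factorial_smul_mul_inv_factorial_smul (k m : ℕ) (x y : R) :
    ((k.factorial : ℚ)⁻¹ • x) * ((m.factorial : ℚ)⁻¹ • y) =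
      ((k + m).factorial : ℚ)⁻¹ • (((k + m).choose k : R) * (x * y)) := by
  rw [smul_mul_smul_comm, ← nsmul_eq_mul, ← Nat.cast_smul_eq_nsmul ℚ, smul_smul,
    Nat.cast_add_choose]
  congr 1
  field_simp

theorem egf_mul (u v : ℕ → R) : egf u * egf v =
    egf fun p => ∑ k ∈ range (p + 1), (p.choose k : R) * (u k * v (p - k)) := by
  ext p
  simp only [egf, coeff_mul, coeff_mk, smul_sum]
  rw [Nat.sum_antidiagonal_eq_sum_range_succ_mk]
  refine Finset.sum_congr rfl fun k hk => ?_
  rw [inv_factorial_smul_mul_inv_factorial_smul,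
    Nat.add_sub_cancel' (Nat.lt_succ_iff.1 (mem_range.1 hk))]

/-- The ratio `M_{i+1} / M_i` of the generating functions `M_i = ∑ p, b_{p+i} X ^ p / p!` of
the shifts of `b`. Since `M_{i+1}` is the derivative of `M_i`, the ratio `egfRatio b 0` is the
derivative of the cumulant generating function `log M_0`. -/
noncomputable def egfRatio (b : ℕ → R) (i : ℕ) : R⟦X⟧ :=
  egf (fun p => b (p + (i + 1))) * Ring.inverse (egf fun p => b (p + i))

section Ratio

variable {b g : ℕ → R} (hb : ∀ i, IsUnit (b i))
include hb

theorem isUnit_egf_shift (i : ℕ) : IsUnit (egf fun p => b (p + i)) := by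
  rw [isUnit_iff_constantCoeff, ← coeff_zero_eq_constantCoeff_apply]
  simpa [egf] using hb i

theorem egfRatio_mul_egf (i : ℕ) :
    egfRatio b i * egf (fun p => b (p + i)) = egf fun p => b (p + (i + 1)) :=
  Ring.inverse_mul_cancel_right _ _ (isUnit_egf_shift hb i)

theorem prod_egfRatio_mul_egf (i k : ℕ) :
    (∏ s ∈ range k, egfRatio b (i + s)) * egf (fun p => b (p + i)) =
      egf fun p => b (p + (i + k)) := by
  induction k with
  | zero => simp
  | succ k ih => rw [prod_range_succ, mul_right_comm, ih, mul_comm, egfRatio_mul_egf hb]; rfl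

theorem egfRatio_zero (hb0 : b 0 = 1) :
    egfRatio b 0 = egf fun l => formalCumulant b (l + 1) := by
  refine (isUnit_egf_shift hb 0).mul_right_cancel ((egfRatio_mul_egf hb 0).trans ?_)
  rw [egf_mul]
  refine congrArg egf (funext fun p => ?_)
  simp only [sum_range_succ, formalCumulant_succ b p, Nat.choose_self, Nat.sub_self, hb0,
    mul_assoc, add_zero]
  push_cast
  ring

variable (hg : ∀ i, b (i + 1) = b i * g i)
include hg

omit hb in
theorem coeff_egf_shift_succ (i n : ℕ) :
    coeff n (egf fun p => b (p + (i + 1))) =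
      ∑ k ∈ range (n + 1), ((k.factorial : ℚ)⁻¹ • (fwdDiff 1)^[k] g i) *
        coeff (n - k) (egf fun p => b (p + (i + k))) := by
  have hnewton : g (n + i) = ∑ k ∈ range (n + 1), n.choose k • (fwdDiff 1)^[k] g i := by
    simpa [add_comm] using shift_eq_sum_fwdDiff_iter 1 g n i
  simp only [egf, coeff_mk]
  rw [← add_assoc, hg, hnewton, mul_sum, smul_sum]
  refine Finset.sum_congr rfl fun k hk => ?_
  have hkn : k ≤ n := Nat.lt_succ_iff.1 (mem_range.1 hk)
  rw [inv_factorial_smul_mul_inv_factorial_smul, Nat.add_sub_cancel' hkn, nsmul_eq_mul,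
    show n - k + (i + k) = n + i by omega]
  congr 1
  ring

theorem coeff_egfRatio (i l : ℕ) :
    coeff l (egfRatio b i) = ∑ k ∈ range (l + 1), ((k.factorial : ℚ)⁻¹ • (fwdDiff 1)^[k] g i) *
      coeff (l - k) (∏ s ∈ range k, egfRatio b (i + s)) := by
  set S : R⟦X⟧ := ∑ k ∈ range (l + 1), C ((k.factorial : ℚ)⁻¹ • (fwdDiff 1)^[k] g i) *
    (X ^ k * ∏ s ∈ range k, egfRatio b (i + s))
  have hdvd : X ^ (l + 1) ∣ (egfRatio b i - S) * egf fun p => b (p + i) := by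
    rw [sub_mul, egfRatio_mul_egf hb, sum_mul, X_pow_dvd_iff]
    intro n hn
    simp only [mul_assoc, prod_egfRatio_mul_egf hb, map_sub, map_sum, coeff_C_mul,
      coeff_X_pow_mul', mul_ite, mul_zero]
    rw [sub_eq_zero, coeff_egf_shift_succ hg, ← sum_filter]
    refine Finset.sum_congr ?_ fun _ _ => rfl
    ext k
    simp only [mem_range, mem_filter]
    omega
  have hcoeff := X_pow_dvd_iff.1 ((isUnit_egf_shift hb i).dvd_mul_right.1 hdvd) l l.lt_succ_self
  rw [map_sub, sub_eq_zero] at hcoeff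
  simp only [hcoeff, S, map_sum, coeff_C_mul, coeff_X_pow_mul']
  exact Finset.sum_congr rfl fun k hk => by rw [if_pos (Nat.lt_succ_iff.1 (mem_range.1 hk))]

theorem pow_dvd_coeff_egfRatio {e : R} (hΔ : ∀ k i, e ^ k ∣ (fwdDiff 1)^[k] g i) (l i : ℕ) :
    e ^ l ∣ coeff l (egfRatio b i) := by
  induction l using Nat.strong_induction_on generalizing i with
  | _ l ih =>
    rw [coeff_egfRatio hb hg]
    refine dvd_sum fun k hk => ?_
    have hkl : k ≤ l := Nat.lt_succ_iff.1 (mem_range.1 hk)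
    have hprod : ∏ s ∈ range k, egfRatio b (i + s) ∈ coeffDvdSubmonoid e (l - k) :=
      Submonoid.prod_mem _ fun s hs m hm => ih m (by have := mem_range.1 hs; omega) _
    rw [← Nat.add_sub_cancel' hkl, pow_add, Nat.add_sub_cancel' hkl]
    exact mul_dvd_mul (dvd_smul_of_dvd _ (hΔ k i)) (hprod _ le_rfl)

theorem pow_dvd_formalCumulant (hb0 : b 0 = 1) {e : R}
    (hΔ : ∀ k i, e ^ k ∣ (fwdDiff 1)^[k] g i) (l : ℕ) : e ^ l ∣ formalCumulant b (l + 1) := by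
  have hcoeff := pow_dvd_coeff_egfRatio hb hg hΔ l 0
  rw [egfRatio_zero hb hb0, egf, coeff_mk] at hcoeff
  have hsmul := dvd_smul_of_dvd (l.factorial : ℚ) hcoeff
  rwa [smul_inv_smul₀ (Nat.cast_ne_zero.2 l.factorial_ne_zero)] at hsmul

end Ratio

end FormalCumulants

section PolynomialSequences

open Polynomial

variable {R : Type*} [CommRing R]

/-- The sequences `p ↦ P(p)` with `P` a polynomial of degree at most `d`. -/
noncomputable def polynomialSeq (R : Type*) [CommRing R] (d : ℕ) : Submodule R (ℕ → R) :=
  (degreeLE R d).map (LinearMap.pi fun p : ℕ => leval (p : R))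

theorem mem_polynomialSeq {d : ℕ} {u : ℕ → R} :
    u ∈ polynomialSeq R d ↔ ∃ P : R[X], P.natDegree ≤ d ∧ ∀ p : ℕ, P.eval (p : R) = u p := by
  simp only [polynomialSeq, Submodule.mem_map, mem_degreeLE, natDegree_le_iff_degree_le,
    funext_iff]
  rfl

theorem natCast_pow_mem_polynomialSeq {k d : ℕ} (hkd : k ≤ d) :
    (fun p : ℕ => (p : R) ^ k) ∈ polynomialSeq R d :=
  mem_polynomialSeq.2 ⟨X ^ k, (natDegree_X_pow_le k).trans hkd, fun p => by simp⟩

theorem const_mem_polynomialSeq (x : R) (d : ℕ) : (fun _ => x) ∈ polynomialSeq R d :=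
  mem_polynomialSeq.2 ⟨C x, by simp, fun p => by simp⟩

theorem exists_eq_const_of_mem_polynomialSeq_zero {u : ℕ → R} (hu : u ∈ polynomialSeq R 0) :
    ∃ x, ∀ p, u p = x := by
  obtain ⟨P, hdeg, hP⟩ := mem_polynomialSeq.1 hu
  refine ⟨P.coeff 0, fun p => ?_⟩
  rw [← hP, eq_C_of_natDegree_le_zero hdeg, eval_C, coeff_C_zero]

theorem mul_mem_polynomialSeq {d e : ℕ} {u v : ℕ → R} (hu : u ∈ polynomialSeq R d)
    (hv : v ∈ polynomialSeq R e) : u * v ∈ polynomialSeq R (d + e) := by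
  obtain ⟨P, hPd, hP⟩ := mem_polynomialSeq.1 hu
  obtain ⟨Q, hQe, hQ⟩ := mem_polynomialSeq.1 hv
  exact mem_polynomialSeq.2 ⟨P * Q, natDegree_mul_le_of_le hPd hQe, fun p => by simp [hP, hQ]⟩

theorem pow_mem_polynomialSeq {d : ℕ} {u : ℕ → R} (hu : u ∈ polynomialSeq R d) (k : ℕ) :
    u ^ k ∈ polynomialSeq R (d * k) := by
  induction k with
  | zero => simpa using! const_mem_polynomialSeq (1 : R) 0
  | succ k ih => simpa only [pow_succ, Nat.mul_succ] using mul_mem_polynomialSeq ih hu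

theorem prod_mem_polynomialSeq {ι : Type*} (s : Finset ι) {d : ι → ℕ} {u : ι → ℕ → R}
    (hu : ∀ i ∈ s, u i ∈ polynomialSeq R (d i)) :
    ∏ i ∈ s, u i ∈ polynomialSeq R (∑ i ∈ s, d i) := by
  classical
  induction s using Finset.induction_on with
  | empty => exact const_mem_polynomialSeq 1 0
  | insert i s hi ih =>
    rw [prod_insert hi, sum_insert hi]
    exact mul_mem_polynomialSeq (hu i (mem_insert_self i s))
      (ih fun k hk => hu k (mem_insert_of_mem hk))

theorem fwdDiff_mem_polynomialSeq {d : ℕ} {u : ℕ → R} (hu : u ∈ polynomialSeq R (d + 1)) :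
    fwdDiff 1 u ∈ polynomialSeq R d := by
  obtain ⟨P, hdeg, hP⟩ := mem_polynomialSeq.1 hu
  refine mem_polynomialSeq.2 ⟨taylor 1 P - P, ?_, fun p => by simp [fwdDiff, taylor_eval, ← hP]⟩
  rcases eq_or_ne (taylor 1 P - P) 0 with hzero | hne
  · simp [hzero]
  · have hP0 : P ≠ 0 := by
      rintro rfl
      simp at hne
    have hlt : (taylor 1 P - P).degree < P.degree :=
      degree_taylor P 1 ▸ degree_sub_lt_left (degree_taylor P 1) (by simpa using hP0)
        (leadingCoeff_taylor 1 P)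
    have := natDegree_lt_natDegree hne hlt
    omega

theorem fwdDiff_iter_eq_zero_of_mem_polynomialSeq {d k : ℕ} {u : ℕ → R}
    (hu : u ∈ polynomialSeq R d) (hdk : d < k) : (fwdDiff 1)^[k] u = 0 := by
  obtain ⟨P, hdeg, hP⟩ := mem_polynomialSeq.1 hu
  funext p
  have hzero := congrFun (fwdDiff_iter_eq_zero_of_degree_lt (hdeg.trans_lt hdk)) (p : R)
  simpa [fwdDiff_iter_eq_sum_shift, ← hP] using hzero

end PolynomialSequences

section PolynomialCoefficients

open PowerSeries

theorem X_pow_dvd_fwdDiff_iter {R : Type*} [CommRing R] {g : ℕ → R⟦X⟧}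
    (hg : ∀ j, (fun p => coeff j (g p)) ∈ polynomialSeq R j) (k i : ℕ) :
    X ^ k ∣ (fwdDiff 1)^[k] g i := by
  rw [X_pow_dvd_iff]
  intro j hj
  have hzero := congrFun (fwdDiff_iter_eq_zero_of_mem_polynomialSeq (hg j) hj) i
  simpa only [fwdDiff_iter_eq_sum_shift, map_sum, map_zsmul, Pi.zero_apply] using hzero

theorem coeff_expSeries_mem_polynomialSeq {A : ℕ → ℝ⟦X⟧}
    (hA : ∀ q, (fun p => coeff q (A p)) ∈ polynomialSeq ℝ q) (j : ℕ) :
    (fun p => coeff j (expSeries (A p))) ∈ polynomialSeq ℝ j := by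
  obtain ⟨x, hx⟩ := exists_eq_const_of_mem_polynomialSeq_zero (hA 0)
  simp only [coeff_zero_eq_constantCoeff_apply] at hx
  have hterm (i : Fin j → Fin (j + 1)) (hi : ∑ r : Fin j, (r.1 + 1) * (i r).1 = j) :
      ∏ r : Fin j, ((i r).1.factorial : ℝ)⁻¹ • (fun p => coeff (r.1 + 1) (A p)) ^ (i r).1 ∈
        polynomialSeq ℝ j := by
    have := prod_mem_polynomialSeq univ fun (r : Fin j) _ => Submodule.smul_mem _
      ((i r).1.factorial : ℝ)⁻¹ (pow_mem_polynomialSeq (hA (r.1 + 1)) (i r).1)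
    rwa [hi] at this
  convert Submodule.smul_mem _ (Real.exp x)
    (Submodule.sum_mem (t := univ.filter _) _ fun i hi => hterm i (mem_filter.1 hi).2) using 1
  funext p
  have hconst : constantCoeff (A p - C (constantCoeff (A p))) = 0 := by simp
  rw [expSeries, coeff_C_mul, coeff_exp_subst hconst, hx]
  simp [div_eq_inv_mul]

end PolynomialCoefficients

section Coefficients

open PowerSeries

theorem Acoef_zero_left (c : ℝ) (q : ℕ) : Acoef 0 c q = 0 := by
  match q with
  | 0 => simp [Acoef]
  | 1 => simp [Acoef]
  | q + 2 =>
    rw [Acoef, Finset.sum_eq_zero (s := Icc 1 (q + 1)) fun j hj => ?_]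
    · simp
    · have hpow : q + 2 - j ≠ 0 := by have := (mem_Icc.1 hj).2; omega
      simp [hpow]

theorem Acoef_add_powerSum_mem_polynomialSeq (c : ℝ) (q : ℕ) :
    (fun p => Acoef p c (q + 2) +
      c ^ (q + 2) / ((q + 2 : ℕ) : ℝ) * ∑ j ∈ Icc 1 p, (j : ℝ) ^ (q + 2)) ∈
      polynomialSeq ℝ (q + 3) := by
  have hmonomial (x : ℝ) {k : ℕ} (hk : k ≤ q + 3) :
      (fun p : ℕ => x * (p : ℝ) ^ k) ∈ polynomialSeq ℝ (q + 3) :=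
    Submodule.smul_mem _ x (natCast_pow_mem_polynomialSeq hk)
  simp only [Acoef]
  generalize ((q + 2 : ℕ) : ℝ) = s
  have hbern := Submodule.sum_mem (polynomialSeq ℝ (q + 3)) (t := Icc 1 (q + 1)) fun j _ =>
    hmonomial ((bernoulli (2 * j + 2) : ℝ) * c ^ (2 * j) * risingFactorial (2 * j) (q + 2 - j) *
      c ^ (q + 2 - j) / (4 * j * (j + 1) * (q + 2 - j).factorial) *
      (1 - (1 - c) ^ (-(j : ℤ) - (q + 2 : ℤ)))) (k := q + 2 - j) (by omega)
  convert Submodule.add_mem _ (Submodule.add_mem _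
    (hmonomial (c ^ (q + 2) * (c - c * s ^ 2) / (12 * c * s * (s ^ 2 - 1) * (1 - c) ^ (q + 2)) +
      c ^ (q + 2) * (c * (s ^ 2 - 1)) / (12 * c * s * (s ^ 2 - 1))) (k := q + 2) (by omega))
    (hmonomial (c ^ (q + 2) * (12 - 12 * c) / (12 * c * s * (s ^ 2 - 1) * (1 - c) ^ (q + 2)) -
      c ^ (q + 2) * 12 / (12 * c * s * (s ^ 2 - 1))) (k := q + 3) le_rfl)) hbern using 1
  funext p
  simp only [Pi.add_apply, Finset.sum_apply]
  rw [sub_add_eq_add_sub, sub_add_cancel]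
  refine congrArg₂ (· + ·) ?_ (Finset.sum_congr rfl fun j _ => ?_)
  · rw [mul_pow]
    ring
  · rw [mul_pow]
    ring

theorem fwdDiff_Acoef_mem_polynomialSeq (c : ℝ) (q : ℕ) :
    (fun p => Acoef (p + 1) c q - Acoef p c q) ∈ polynomialSeq ℝ q := by
  match q with
  | 0 =>
    refine fwdDiff_mem_polynomialSeq (u := fun p => Acoef p c 0) ?_
    convert Submodule.smul_mem _ (1 - (1 - 1 / c) * Real.log (1 - c))
      (natCast_pow_mem_polynomialSeq (k := 1) le_rfl) using 1
    funext p
    simp only [Acoef, Pi.smul_apply, smul_eq_mul]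
    ring
  | 1 =>
    refine fwdDiff_mem_polynomialSeq (u := fun p => Acoef p c 1) ?_
    convert Submodule.add_mem _
      (Submodule.smul_mem _ (-Real.log (1 - c) / 2 - c * 6 * (c - 1) / (12 * (c - 1)))
        (natCast_pow_mem_polynomialSeq (k := 2) le_rfl))
      (Submodule.smul_mem _ (c * (12 - 11 * c + 6 * (c - 1)) / (12 * (c - 1)))
        (natCast_pow_mem_polynomialSeq (k := 1) one_le_two)) using 1
    funext p
    simp only [Acoef, Pi.add_apply, Pi.smul_apply, smul_eq_mul]
    ring
  | q + 2 =>
    have hsucc : (fun p : ℕ => (p : ℝ) + 1) ∈ polynomialSeq ℝ 1 := by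
      simpa using! Submodule.add_mem _ (natCast_pow_mem_polynomialSeq (R := ℝ) (k := 1) le_rfl)
        (const_mem_polynomialSeq 1 1)
    convert Submodule.sub_mem _
      (fwdDiff_mem_polynomialSeq (Acoef_add_powerSum_mem_polynomialSeq c q))
      (Submodule.smul_mem _ (c ^ (q + 2) / ((q + 2 : ℕ) : ℝ))
        (one_mul (q + 2) ▸ pow_mem_polynomialSeq hsucc (q + 2))) using 1
    funext p
    simp only [fwdDiff, Pi.sub_apply, Pi.smul_apply, Pi.pow_apply, smul_eq_mul,
      sum_Icc_succ_top (Nat.le_add_left 1 p), Nat.cast_succ]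
    ring

/-- The formal asymptotic expansion `∑ j, β_{p,j}(c) X ^ j` of the `p`-th moment. -/
noncomputable def momentSeries (c : ℝ) (p : ℕ) : ℝ⟦X⟧ := mk (bcoef p c)

theorem momentSeries_eq_expSeries (c : ℝ) (p : ℕ) :
    momentSeries c p = expSeries (mk (Acoef p c)) := by
  ext j
  have hconst : constantCoeff (mk (Acoef p c) - C (constantCoeff (mk (Acoef p c)))) = 0 := by
    simp
  rw [expSeries, coeff_C_mul, coeff_exp_subst hconst]
  simp [momentSeries, bcoef]

/-- The quotient of the formal expansions of two consecutive moments. -/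
noncomputable def momentRatioSeries (c : ℝ) (p : ℕ) : ℝ⟦X⟧ :=
  expSeries (mk fun q => Acoef (p + 1) c q - Acoef p c q)

theorem momentSeries_zero (c : ℝ) : momentSeries c 0 = 1 := by
  have hzero : mk (Acoef 0 c) = 0 := PowerSeries.ext fun q => by simp [Acoef_zero_left]
  rw [momentSeries_eq_expSeries, hzero, expSeries_zero]

theorem momentSeries_succ (c : ℝ) (p : ℕ) :
    momentSeries c (p + 1) = momentSeries c p * momentRatioSeries c p := by
  rw [momentSeries_eq_expSeries, momentSeries_eq_expSeries, momentRatioSeries, ← expSeries_add]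
  congr 1
  ext q
  simp

theorem isUnit_momentSeries (c : ℝ) (p : ℕ) : IsUnit (momentSeries c p) :=
  momentSeries_eq_expSeries c p ▸ isUnit_expSeries _

theorem X_pow_dvd_fwdDiff_iter_momentRatioSeries (c : ℝ) (k i : ℕ) :
    X ^ k ∣ (fwdDiff 1)^[k] (momentRatioSeries c) i :=
  X_pow_dvd_fwdDiff_iter (coeff_expSeries_mem_polynomialSeq fun q => by
    simpa using fwdDiff_Acoef_mem_polynomialSeq c q) k i

theorem X_pow_dvd_formalCumulant_momentSeries (c : ℝ) (p : ℕ) :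
    X ^ p ∣ formalCumulant (momentSeries c) (p + 1) :=
  pow_dvd_formalCumulant (isUnit_momentSeries c) (momentSeries_succ c) (momentSeries_zero c)
    (X_pow_dvd_fwdDiff_iter_momentRatioSeries c) p

theorem acoef_succ (c : ℝ) (p j : ℕ) :
    acoef c (p + 1) j = bcoef (p + 1) c (p + j) - ∑ s ∈ range p, (p.choose s : ℝ) *
      ∑ l ∈ range (p - s + j + 1), acoef c (s + 1) l * bcoef (p - s) c (p - s + j - l) := by
  cases p with
  | zero => simp [acoef]
  | succ p =>
    rw [acoef, sum_attach (range (p + 1)) fun s => ((p + 1).choose s : ℝ) *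
      ∑ l ∈ range (p + 1 - s + j + 1), acoef c (s + 1) l * bcoef (p + 1 - s) c (p + 1 - s + j - l)]

theorem coeff_formalCumulant_momentSeries (c : ℝ) (p j : ℕ) :
    coeff (p + j) (formalCumulant (momentSeries c) (p + 1)) = acoef c (p + 1) j := by
  induction p using Nat.strong_induction_on generalizing j with
  | _ p ih =>
    rw [formalCumulant_succ, acoef_succ, map_sub, map_sum, momentSeries, coeff_mk]
    refine congrArg _ (Finset.sum_congr rfl fun s hs => ?_)
    have hsp : s < p := mem_range.1 hs
    obtain ⟨G, hG⟩ := X_pow_dvd_formalCumulant_momentSeries c s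
    have hGcoeff (l : ℕ) : coeff l G = acoef c (s + 1) l := by
      rw [← ih s hsp l, hG, add_comm s l, coeff_X_pow_mul]
    rw [hG, ← map_natCast C, mul_assoc, coeff_C_mul, mul_assoc,
      show p + j = p - s + j + s by omega, coeff_X_pow_mul, coeff_mul,
      Nat.sum_antidiagonal_eq_sum_range_succ_mk]
    simp only [hGcoeff, momentSeries, coeff_mk]

end Coefficients

section CentralDifference

open PowerSeries

variable {𝕜 E : Type*} [RCLike 𝕜] [NormedAddCommGroup E] [NormedSpace 𝕜 E]

theorem norm_sub_taylor_le_of_hasDerivAt {F : ℕ → 𝕜 → E} {z : 𝕜} {r M : ℝ} {n : ℕ}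
    (hF : ∀ k, ∀ x ∈ Metric.closedBall z r, HasDerivAt (F k) (F (k + 1) x) x)
    (hM : ∀ x ∈ Metric.closedBall z r, ‖F n x‖ ≤ M) {h : 𝕜} (hr : ‖h‖ ≤ r) :
    ‖F 0 (z + h) - ∑ k ∈ range n, (h ^ k / k.factorial) • F k z‖ ≤ M * ‖h‖ ^ n := by
  induction n generalizing F h with
  | zero => simpa using hM (z + h) (by simpa using hr)
  | succ n ih =>
    have hderiv (x : 𝕜) (hx : x ∈ Metric.closedBall (0 : 𝕜) ‖h‖) : HasDerivWithinAt
        (fun x => F 0 (z + x) - ∑ k ∈ range (n + 1), (x ^ k / k.factorial) • F k z)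
        (F 1 (z + x) - ∑ k ∈ range n, (x ^ k / k.factorial) • F (k + 1) z)
        (Metric.closedBall 0 ‖h‖) x := by
      have hxr : ‖x‖ ≤ r := (mem_closedBall_zero_iff.1 hx).trans hr
      have hpow (k : ℕ) : HasDerivAt (fun x : 𝕜 => x ^ (k + 1) / (k + 1).factorial)
          (x ^ k / k.factorial) x := by
        refine ((hasDerivAt_pow (k + 1) x).div_const _).congr_deriv ?_
        rw [Nat.factorial_succ]
        push_cast
        field_simp
      have hpoly : HasDerivAt
          (fun x => ∑ k ∈ range (n + 1), (x ^ k / (k.factorial : 𝕜)) • F k z)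
          (∑ k ∈ range n, (x ^ k / (k.factorial : 𝕜)) • F (k + 1) z) x := by
        simp only [sum_range_succ' _ n, pow_zero]
        exact (HasDerivAt.fun_sum fun k _ => (hpow k).smul_const _).add_const _
      exact (((hF 0 (z + x) (by simpa using hxr)).comp_const_add z x).sub hpoly).hasDerivWithinAt
    have hbound (x : 𝕜) (hx : x ∈ Metric.closedBall (0 : 𝕜) ‖h‖) :
        ‖F 1 (z + x) - ∑ k ∈ range n, (x ^ k / k.factorial) • F (k + 1) z‖ ≤ M * ‖h‖ ^ n := by
      have hxh : ‖x‖ ≤ ‖h‖ := mem_closedBall_zero_iff.1 hx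
      have hM0 : 0 ≤ M := (norm_nonneg _).trans
        (hM z (Metric.mem_closedBall_self ((norm_nonneg h).trans hr)))
      refine (ih (F := fun k => F (k + 1)) (fun k => hF (k + 1)) hM (hxh.trans hr)).trans ?_
      gcongr
    have hmean := (convex_closedBall (0 : 𝕜) ‖h‖).norm_image_sub_le_of_norm_hasDerivWithin_le
      hderiv hbound (x := 0) (y := h) (by simp) (by simp)
    simpa [sum_range_succ', pow_succ, mul_assoc] using hmean

/-- The series `e^X + e^{-X} - 2` of the second central difference in terms of the derivative. -/
noncomputable def centralDiffSeries : ℝ⟦X⟧ := exp ℝ + evalNegHom (exp ℝ) - 2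

/-- The series `X² / (e^X + e^{-X} - 2)`. Applied to the derivatives of an antiderivative of order
two of `f`, it formally solves `W(z + 1) - 2W(z) + W(z - 1) = f(z)`. -/
noncomputable def centralDiffInvSeries : ℝ⟦X⟧ :=
  bernoulliPowerSeries ℝ - X * derivative ℝ (bernoulliPowerSeries ℝ)

theorem coeff_centralDiffSeries (k : ℕ) :
    coeff k centralDiffSeries = (1 + (-1) ^ k) / k.factorial - if k = 0 then 2 else 0 := by
  rw [centralDiffSeries, ← map_ofNat C 2]
  simp only [map_sub, map_add, coeff_C, evalNegHom, coeff_rescale, coeff_exp]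
  simp
  ring

theorem coeff_centralDiffInvSeries (k : ℕ) :
    coeff k centralDiffInvSeries = (1 - k) * (bernoulli k : ℝ) / k.factorial := by
  cases k with
  | zero => simp [centralDiffInvSeries, bernoulliPowerSeries]
  | succ k =>
    rw [centralDiffInvSeries, map_sub, coeff_succ_X_mul]
    simp [bernoulliPowerSeries, coeff_derivative]
    ring

theorem centralDiffInvSeries_mul_centralDiffSeries :
    centralDiffInvSeries * centralDiffSeries = X ^ 2 := by
  have hneg : exp ℝ * evalNegHom (exp ℝ) = 1 := exp_mul_exp_neg_eq_one
  have hβ : bernoulliPowerSeries ℝ * (exp ℝ - 1) = X := bernoulliPowerSeries_mul_exp_sub_one ℝ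
  have hβ' : derivative ℝ (bernoulliPowerSeries ℝ) * (exp ℝ - 1) +
      bernoulliPowerSeries ℝ * exp ℝ = 1 := by
    have := congrArg (derivative ℝ) hβ
    rw [Derivation.leibniz, map_sub, derivative_exp, Derivation.map_one_eq_zero,
      derivative_X] at this
    simp only [smul_eq_mul, sub_zero] at this
    linear_combination this
  rw [centralDiffInvSeries, centralDiffSeries]
  generalize exp ℝ = E at *
  generalize evalNegHom E = E' at *
  have hsq : E + E' - 2 = E' * (E - 1) ^ 2 := by linear_combination (2 - E) * hneg
  rw [hsq]
  linear_combination E' * ((E - 1) * hβ - X * (E - 1) * hβ' + X * E * hβ) + X ^ 2 * hneg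

theorem sum_coeff_mul_sum_coeff_mul {R : Type*} [CommRing R] (A B : R⟦X⟧) (u : ℕ → R) (N : ℕ) :
    ∑ i ∈ range N, coeff i A * ∑ k ∈ range (N - i), coeff k B * u (i + k) =
      ∑ s ∈ range N, coeff s (A * B) * u s := by
  simp only [mul_sum, ← mul_assoc]
  rw [← sum_range_diag_flip N fun i k => coeff i A * coeff k B * u (i + k)]
  refine Finset.sum_congr rfl fun s _ => ?_
  rw [coeff_mul, Nat.sum_antidiagonal_eq_sum_range_succ_mk, sum_mul]
  refine Finset.sum_congr rfl fun i hi => ?_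
  rw [Nat.add_sub_cancel' (Nat.lt_succ_iff.1 (mem_range.1 hi))]

/-- The second central difference with step `1`. -/
def centralDiff (f : ℝ → ℝ) (z : ℝ) : ℝ := f (z + 1) + f (z - 1) - 2 * f z

theorem abs_centralDiff_sub_sum_le {F : ℕ → ℝ → ℝ} {z M : ℝ} {n : ℕ} (hn : 0 < n)
    (hF : ∀ k, ∀ x ∈ Metric.closedBall z 1, HasDerivAt (F k) (F (k + 1) x) x)
    (hM : ∀ x ∈ Metric.closedBall z 1, |F n x| ≤ M) :
    |centralDiff (F 0) z - ∑ k ∈ range n, coeff k centralDiffSeries * F k z| ≤ 2 * M := by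
  have hpos := norm_sub_taylor_le_of_hasDerivAt hF hM (h := 1) (by simp)
  have hneg := norm_sub_taylor_le_of_hasDerivAt hF hM (h := -1) (by simp)
  have hzero : ∑ k ∈ range n, (if k = 0 then (2 : ℝ) else 0) * F k z = 2 * F 0 z := by
    rw [Finset.sum_eq_single_of_mem 0 (mem_range.2 hn) fun k _ hk => by simp [hk]]
    simp
  have hsplit : centralDiff (F 0) z - ∑ k ∈ range n, coeff k centralDiffSeries * F k z =
      (F 0 (z + 1) - ∑ k ∈ range n, ((1 : ℝ) / k.factorial) • F k z) +
      (F 0 (z + -1) - ∑ k ∈ range n, ((-1 : ℝ) ^ k / k.factorial) • F k z) := by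
    have hcoeff : ∑ k ∈ range n, coeff k centralDiffSeries * F k z =
        ∑ k ∈ range n, ((1 : ℝ) / k.factorial) • F k z +
        ∑ k ∈ range n, ((-1 : ℝ) ^ k / k.factorial) • F k z - 2 * F 0 z := by
      rw [← hzero, ← sum_add_distrib, ← sum_sub_distrib]
      refine Finset.sum_congr rfl fun k _ => ?_
      rw [coeff_centralDiffSeries, smul_eq_mul, smul_eq_mul]
      ring
    rw [hcoeff, centralDiff, ← sub_eq_add_neg]
    ring
  simp only [Real.norm_eq_abs, norm_neg, norm_one, one_pow, mul_one] at hpos hneg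
  rw [hsplit, two_mul]
  exact (abs_add_le _ _).trans (add_le_add hpos hneg)

end CentralDifference

section LogBarnes

open PowerSeries

/-- The `k`-th derivative of `z ↦ z² log z / 2 - 3z² / 4`, a second antiderivative of `log`. -/
noncomputable def sqLogDeriv : ℕ → ℝ → ℝ
  | 0, z => z ^ 2 / 2 * Real.log z - 3 * z ^ 2 / 4
  | 1, z => z * Real.log z - z
  | 2, z => Real.log z
  | (k + 3), z => (-1) ^ k * k.factorial * (z ^ (k + 1))⁻¹

theorem hasDerivAt_sqLogDeriv (k : ℕ) {z : ℝ} (hz : z ≠ 0) :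
    HasDerivAt (sqLogDeriv k) (sqLogDeriv (k + 1) z) z := by
  match k with
  | 0 =>
    refine HasDerivAt.congr_deriv (((((hasDerivAt_pow 2 z).div_const 2).mul
      (Real.hasDerivAt_log hz)).sub (((hasDerivAt_pow 2 z).const_mul 3).div_const 4))) ?_
    simp only [sqLogDeriv]
    field_simp
    ring
  | 1 =>
    refine (((hasDerivAt_id z).mul (Real.hasDerivAt_log hz)).sub
      (hasDerivAt_id z)).congr_deriv ?_
    simp [sqLogDeriv, hz]
  | 2 =>
    refine (Real.hasDerivAt_log hz).congr_deriv ?_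
    simp [sqLogDeriv]
  | k + 3 =>
    refine (((hasDerivAt_pow (k + 1) z).inv (pow_ne_zero _ hz)).const_mul
      ((-1) ^ k * (k.factorial : ℝ))).congr_deriv ?_
    simp only [sqLogDeriv, Nat.factorial_succ, Nat.add_sub_cancel]
    push_cast
    field_simp
    ring

theorem abs_sqLogDeriv_le (K : ℕ) {y z : ℝ} (hy : 0 < y) (hyz : y ≤ z) :
    |sqLogDeriv (K + 3) z| ≤ K.factorial * (y ^ (K + 1))⁻¹ := by
  simp only [sqLogDeriv, abs_mul, abs_pow, abs_neg, abs_one, one_pow, one_mul, abs_inv,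
    Nat.abs_cast, abs_of_pos (hy.trans_le hyz)]
  gcongr

/-- The truncated asymptotic series of the logarithm of the Barnes `G`-function at `z + 1`, without
the terms affine in `z`. It is the formal solution of `W(z + 1) - 2W(z) + W(z - 1) = log z`. -/
noncomputable def logBarnesApprox (N : ℕ) (z : ℝ) : ℝ :=
  ∑ i ∈ range N, coeff i centralDiffInvSeries * sqLogDeriv i z

theorem centralDiff_logBarnesApprox (N : ℕ) (z : ℝ) :
    centralDiff (logBarnesApprox N) z =
      ∑ i ∈ range N, coeff i centralDiffInvSeries * centralDiff (sqLogDeriv i) z := by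
  simp only [centralDiff, logBarnesApprox, mul_sub, mul_add, sum_sub_distrib, sum_add_distrib,
    mul_sum, mul_left_comm]

theorem exists_abs_centralDiff_logBarnesApprox_sub_log_le (K : ℕ) : ∃ C, 0 ≤ C ∧ ∀ z : ℝ, 1 < z →
    |centralDiff (logBarnesApprox (K + 3)) z - Real.log z| ≤ C * ((z - 1) ^ (K + 1))⁻¹ := by
  refine ⟨∑ i ∈ range (K + 3), |coeff i centralDiffInvSeries| * (2 * K.factorial), by positivity,
    fun z hz => ?_⟩
  have hball {x : ℝ} (hx : x ∈ Metric.closedBall z 1) : z - 1 ≤ x := by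
    rw [Real.closedBall_eq_Icc] at hx
    exact hx.1
  have hlog : ∑ i ∈ range (K + 3), coeff i centralDiffInvSeries *
      ∑ k ∈ range (K + 3 - i), coeff k centralDiffSeries * sqLogDeriv (i + k) z =
        Real.log z := by
    rw [sum_coeff_mul_sum_coeff_mul _ _ fun s => sqLogDeriv s z,
      centralDiffInvSeries_mul_centralDiffSeries]
    simp [coeff_X_pow, sqLogDeriv]
  rw [centralDiff_logBarnesApprox, ← hlog, ← sum_sub_distrib, sum_mul]
  refine (abs_sum_le_sum_abs _ _).trans (sum_le_sum fun i hi => ?_)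
  have hiK : i < K + 3 := mem_range.1 hi
  rw [← mul_sub, abs_mul, mul_assoc, mul_assoc]
  gcongr
  refine abs_centralDiff_sub_sum_le (F := fun k => sqLogDeriv (i + k)) (by omega)
    (fun k x hx => hasDerivAt_sqLogDeriv (i + k) (by linarith [hball hx])) fun x hx => ?_
  rw [Nat.add_sub_cancel' hiK.le]
  exact abs_sqLogDeriv_le K (sub_pos.2 hz) (hball hx)

theorem coeff_centralDiffInvSeries_mul_sqLogDeriv (M : ℕ) (z : ℝ) :
    coeff (2 * M + 4) centralDiffInvSeries * sqLogDeriv (2 * M + 4) z =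
      (bernoulli (2 * (M + 1) + 2) : ℝ) / (4 * (M + 1 : ℕ) * ((M + 1 : ℕ) + 1)) *
        (z ^ (2 * (M + 1)))⁻¹ := by
  have hsign : (-1 : ℝ) ^ (2 * M + 1) = -1 := Odd.neg_one_pow ⟨M, rfl⟩
  rw [coeff_centralDiffInvSeries, sqLogDeriv, hsign, show 2 * M + 1 + 1 = 2 * (M + 1) by ring,
    show 2 * M + 4 = 2 * (M + 1) + 2 by ring]
  simp only [Nat.factorial_succ, show 2 * (M + 1) + 2 = 2 * M + 1 + 1 + 1 + 1 by ring]
  generalize (bernoulli (2 * M + 1 + 1 + 1 + 1) : ℝ) = B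
  generalize (z ^ (2 * (M + 1)))⁻¹ = w
  push_cast
  field_simp
  ring

theorem logBarnesApprox_two_mul_add_three (M : ℕ) (z : ℝ) :
    logBarnesApprox (2 * M + 3) z = z ^ 2 / 2 * Real.log z - 3 * z ^ 2 / 4 -
      1 / 12 * Real.log z + ∑ j ∈ Icc 1 M,
        (bernoulli (2 * j + 2) : ℝ) / (4 * j * (j + 1)) * (z ^ (2 * j))⁻¹ := by
  induction M with
  | zero =>
    simp only [logBarnesApprox, coeff_centralDiffInvSeries, mul_zero, zero_add, sum_range_succ,
      range_zero, sum_empty, bernoulli_zero, bernoulli_one, bernoulli_two, sqLogDeriv,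
      show Icc 1 0 = (∅ : Finset ℕ) from rfl]
    norm_num
    ring
  | succ M ih =>
    have hodd : coeff (2 * M + 3) centralDiffInvSeries = 0 := by
      rw [coeff_centralDiffInvSeries, bernoulli_eq_zero_of_odd ⟨M + 1, by ring⟩ (by omega)]
      simp
    rw [show 2 * (M + 1) + 3 = 2 * M + 3 + 1 + 1 by ring, logBarnesApprox, sum_range_succ,
      sum_range_succ, ← logBarnesApprox, ih, hodd, zero_mul, add_zero,
      coeff_centralDiffInvSeries_mul_sqLogDeriv, sum_Icc_succ_top (by omega), add_assoc]

end LogBarnes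

section GammaSums

open Filter Topology PowerSeries

/-- The difference of `f` at `y` with step `-δ`. -/
def shiftDiff (f : ℝ → ℝ) (δ y : ℝ) : ℝ := f (y - δ) - f y

theorem exists_shiftDiff_sub_shiftDiff_eq {f f' f'' : ℝ → ℝ} {δ y : ℝ} (h0 : 0 ≤ δ) (h1 : δ ≤ 1)
    (hf : ∀ x ∈ Set.Icc (y - 2) y, HasDerivAt f (f' x) x)
    (hf' : ∀ x ∈ Set.Icc (y - 2) y, HasDerivAt f' (f'' x) x) :
    ∃ ξ ∈ Set.Icc (y - 2) y, shiftDiff f δ y - shiftDiff f δ (y - 1) = -(δ * f'' ξ) := by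
  rcases h0.eq_or_lt with rfl | hδ
  · exact ⟨y, ⟨by linarith, le_rfl⟩, by simp [shiftDiff]⟩
  have hderiv (x : ℝ) (hx : x ∈ Set.Icc (y - δ) y) :
      HasDerivAt (fun z => f z - f (z - 1)) (f' x - f' (x - 1)) x :=
    (hf x ⟨by linarith [hx.1], hx.2⟩).sub
      ((hf (x - 1) ⟨by linarith [hx.1], by linarith [hx.2]⟩).comp_sub_const x 1)
  obtain ⟨η, ⟨hη₁, hη₂⟩, hslope⟩ := exists_hasDerivAt_eq_slope _ _ (sub_lt_self y hδ)
    (fun x hx => (hderiv x hx).continuousAt.continuousWithinAt)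
    (fun x hx => hderiv x (Set.Ioo_subset_Icc_self hx))
  have hmem {x : ℝ} (hx : x ∈ Set.Icc (η - 1) η) : x ∈ Set.Icc (y - 2) y :=
    ⟨by linarith [hx.1], by linarith [hx.2]⟩
  obtain ⟨ξ, hξ, hslope'⟩ := exists_hasDerivAt_eq_slope f' f'' (sub_one_lt η)
    (fun x hx => (hf' x (hmem hx)).continuousAt.continuousWithinAt)
    (fun x hx => hf' x (hmem (Set.Ioo_subset_Icc_self hx)))
  refine ⟨ξ, hmem (Set.Ioo_subset_Icc_self hξ), ?_⟩
  rw [sub_sub_cancel, div_one] at hslope'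
  rw [sub_sub_cancel, ← hslope', eq_div_iff hδ.ne', sub_right_comm y δ 1] at hslope
  simp only [shiftDiff]
  linarith

theorem log_Gamma_add_one {z : ℝ} (hz : 0 < z) :
    Real.log (Real.Gamma (z + 1)) = Real.log z + Real.log (Real.Gamma z) := by
  rw [Real.Gamma_add_one hz.ne', Real.log_mul hz.ne' (Real.Gamma_pos_of_pos hz).ne']

theorem shiftDiff_log_Gamma_mem_Icc {δ y : ℝ} (h0 : 0 ≤ δ) (h1 : δ ≤ 1) (hy : 1 < y) :
    shiftDiff (Real.log ∘ Real.Gamma) δ y ∈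
      Set.Icc (-(δ * Real.log y)) (-(δ * Real.log (y - 1))) := by
  have hpos : 0 < y := one_pos.trans hy
  have hpos' : 0 < y - 1 := sub_pos.2 hy
  have hδ : 0 < 1 + δ := by linarith
  have hconv := Real.convexOn_log_Gamma.2
  have hupper := log_Gamma_add_one hpos
  have hlower := log_Gamma_add_one hpos'
  rw [sub_add_cancel] at hlower
  have hleft : Real.log (Real.Gamma y) ≤ 1 / (1 + δ) * Real.log (Real.Gamma (y - δ)) +
      δ / (1 + δ) * Real.log (Real.Gamma (y + 1)) := by
    have := hconv (x := y - δ) (y := y + 1) (a := 1 / (1 + δ)) (b := δ / (1 + δ))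
      (Set.mem_Ioi.2 (by linarith)) (Set.mem_Ioi.2 (by linarith)) (by positivity) (by positivity)
      (by field_simp)
    simp only [smul_eq_mul, Function.comp_apply] at this
    rwa [show 1 / (1 + δ) * (y - δ) + δ / (1 + δ) * (y + 1) = y by field_simp; ring] at this
  have hright : Real.log (Real.Gamma (y - δ)) ≤ δ * Real.log (Real.Gamma (y - 1)) +
      (1 - δ) * Real.log (Real.Gamma y) := by
    have := hconv (x := y - 1) (y := y) (a := δ) (b := 1 - δ)
      (Set.mem_Ioi.2 hpos') (Set.mem_Ioi.2 hpos) h0 (by linarith) (by ring)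
    simp only [smul_eq_mul, Function.comp_apply] at this
    rwa [show δ * (y - 1) + (1 - δ) * y = y - δ by ring] at this
  rw [hupper, ← mul_le_mul_iff_right₀ hδ] at hleft
  field_simp at hleft
  rw [hlower] at hright
  simp only [shiftDiff, Function.comp_apply]
  constructor <;> linarith

/-- The amount by which the backward difference of a shift of `logBarnesApprox N` misses the same
shift of `log Γ`. It would vanish with `log G` in place of `logBarnesApprox N`, `G` being the
Barnes function. -/
noncomputable def gammaDefect (N : ℕ) (δ x : ℝ) : ℝ :=
  shiftDiff (logBarnesApprox N) δ x - shiftDiff (logBarnesApprox N) δ (x - 1) -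
    shiftDiff (Real.log ∘ Real.Gamma) δ x

theorem exists_shiftDiff_sqLogDeriv_eq (k : ℕ) {δ y : ℝ} (h0 : 0 ≤ δ) (h1 : δ ≤ 1) (hy : 2 < y) :
    ∃ ξ ∈ Set.Icc (y - 2) y,
      shiftDiff (sqLogDeriv k) δ y - shiftDiff (sqLogDeriv k) δ (y - 1) =
        -(δ * sqLogDeriv (k + 2) ξ) :=
  exists_shiftDiff_sub_shiftDiff_eq h0 h1
    (fun x hx => hasDerivAt_sqLogDeriv k (by linarith [hx.1]))
    fun x hx => hasDerivAt_sqLogDeriv (k + 1) (by linarith [hx.1])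

theorem tendsto_shiftDiff_sqLogDeriv_succ (k : ℕ) {δ : ℝ} (h0 : 0 ≤ δ) (h1 : δ ≤ 1) :
    Tendsto (fun y => shiftDiff (sqLogDeriv (k + 1)) δ y - shiftDiff (sqLogDeriv (k + 1)) δ (y - 1))
      atTop (𝓝 0) := by
  have hlim : Tendsto (fun y : ℝ => k.factorial * ((y - 2) ^ (k + 1))⁻¹) atTop (𝓝 0) := by
    have hpow : Tendsto (fun y : ℝ => (y - 2) ^ (k + 1)) atTop atTop :=
      (tendsto_pow_atTop k.succ_ne_zero).comp (tendsto_atTop_add_const_right _ _ tendsto_id)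
    simpa using hpow.inv_tendsto_atTop.const_mul (k.factorial : ℝ)
  refine squeeze_zero_norm' ?_ hlim
  filter_upwards [eventually_gt_atTop 2] with y hy
  obtain ⟨ξ, hξ, heq⟩ := exists_shiftDiff_sqLogDeriv_eq (k + 1) h0 h1 hy
  rw [heq, norm_neg, norm_mul, Real.norm_of_nonneg h0]
  exact (mul_le_of_le_one_left (norm_nonneg _) h1).trans
    (abs_sqLogDeriv_le k (sub_pos.2 hy) hξ.1)

theorem tendsto_shiftDiff_sqLogDeriv_zero_sub {δ : ℝ} (h0 : 0 ≤ δ) (h1 : δ ≤ 1) :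
    Tendsto (fun y => shiftDiff (sqLogDeriv 0) δ y - shiftDiff (sqLogDeriv 0) δ (y - 1) -
      shiftDiff (Real.log ∘ Real.Gamma) δ y) atTop (𝓝 0) := by
  have hlim : Tendsto (fun y => Real.log y - Real.log (y - 2)) atTop (𝓝 0) := by
    simpa [← sub_eq_add_neg] using (Real.tendsto_log_comp_add_sub_log (-2)).neg
  refine squeeze_zero_norm' ?_ hlim
  filter_upwards [eventually_gt_atTop 2] with y hy
  obtain ⟨ξ, hξ, heq⟩ := exists_shiftDiff_sqLogDeriv_eq 0 h0 h1 hy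
  obtain ⟨hlower, hupper⟩ := shiftDiff_log_Gamma_mem_Icc h0 h1 (by linarith : 1 < y)
  have hlog₁ : Real.log (y - 2) ≤ Real.log ξ := Real.log_le_log (by linarith) hξ.1
  have hlog₂ : Real.log ξ ≤ Real.log y := Real.log_le_log (by linarith [hξ.1]) hξ.2
  have hlog₃ : Real.log (y - 2) ≤ Real.log (y - 1) := Real.log_le_log (by linarith) (by linarith)
  rw [heq, Real.norm_eq_abs, abs_le]
  simp only [sqLogDeriv]
  constructor <;> nlinarith

theorem shiftDiff_logBarnesApprox (N : ℕ) (δ y : ℝ) :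
    shiftDiff (logBarnesApprox N) δ y =
      ∑ i ∈ range N, coeff i centralDiffInvSeries * shiftDiff (sqLogDeriv i) δ y := by
  simp only [shiftDiff, logBarnesApprox, mul_sub, sum_sub_distrib]

theorem tendsto_gammaDefect (N : ℕ) {δ : ℝ} (h0 : 0 ≤ δ) (h1 : δ ≤ 1) :
    Tendsto (gammaDefect (N + 1) δ) atTop (𝓝 0) := by
  have hsum := (tendsto_shiftDiff_sqLogDeriv_zero_sub h0 h1).add (tendsto_finsetSum (range N)
    fun i _ => (tendsto_shiftDiff_sqLogDeriv_succ i h0 h1).const_mul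
      (coeff (i + 1) centralDiffInvSeries))
  simp only [mul_zero, sum_const_zero, add_zero] at hsum
  refine hsum.congr fun y => ?_
  have hzero : coeff 0 centralDiffInvSeries = 1 := by simp [coeff_centralDiffInvSeries]
  simp only [gammaDefect, shiftDiff_logBarnesApprox, sum_range_succ' _ N, hzero, one_mul, mul_sub,
    sum_sub_distrib]
  ring

theorem gammaDefect_add_one_sub (N : ℕ) {δ y : ℝ} (hy : 0 < y) (hδ : δ < y) :
    gammaDefect N δ (y + 1) - gammaDefect N δ y =
      (centralDiff (logBarnesApprox N) (y - δ) - Real.log (y - δ)) -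
        (centralDiff (logBarnesApprox N) y - Real.log y) := by
  simp only [gammaDefect, shiftDiff, centralDiff, Function.comp_apply, add_sub_cancel_right,
    sub_right_comm y 1 δ, add_sub_right_comm y 1 δ, log_Gamma_add_one hy,
    log_Gamma_add_one (sub_pos.2 hδ)]
  ring

theorem exists_abs_gammaDefect_add_one_sub_le (M : ℕ) : ∃ C, 0 ≤ C ∧
    ∀ δ ≤ (1 : ℝ), ∀ y : ℝ, 2 < y →
      |gammaDefect (M + 4) δ (y + 1) - gammaDefect (M + 4) δ y| ≤ C * ((y - 2) ^ (M + 2))⁻¹ := by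
  obtain ⟨C, hC, hbound⟩ := exists_abs_centralDiff_logBarnesApprox_sub_log_le (M + 1)
  refine ⟨C + C, add_nonneg hC hC, fun δ h1 y hy => ?_⟩
  have hle {z : ℝ} (hz : y - 1 ≤ z) :
      |centralDiff (logBarnesApprox (M + 4)) z - Real.log z| ≤ C * ((y - 2) ^ (M + 2))⁻¹ := by
    refine (hbound z (by linarith)).trans ?_
    gcongr C * (?_ ^ _)⁻¹
    linarith
  rw [gammaDefect_add_one_sub _ (by linarith) (by linarith), add_mul]
  exact (abs_sub _ _).trans (add_le_add (hle (by linarith)) (hle (by linarith)))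

theorem exists_abs_gammaDefect_le (M : ℕ) : ∃ C, 0 ≤ C ∧
    ∀ δ ∈ Set.Icc (0 : ℝ) 1, ∀ x : ℝ, 3 ≤ x →
      |gammaDefect (M + 4) δ x| ≤ C * ((x - 2) ^ M)⁻¹ := by
  obtain ⟨C, hC, hstep⟩ := exists_abs_gammaDefect_add_one_sub_le M
  have hsummable : Summable fun k : ℕ => (((k : ℝ) + 1) ^ 2)⁻¹ := by
    simpa using (summable_nat_add_iff 1).2 (Real.summable_nat_pow_inv.2 one_lt_two)
  refine ⟨C * ∑' k : ℕ, (((k : ℝ) + 1) ^ 2)⁻¹,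
    mul_nonneg hC (tsum_nonneg fun k => by positivity), fun δ hδ x hx => ?_⟩
  have hx2 : 0 < x - 2 := by linarith
  have hdist (k : ℕ) : dist (gammaDefect (M + 4) δ (x + k))
      (gammaDefect (M + 4) δ (x + (k + 1 : ℕ))) ≤
        C * ((x - 2) ^ M)⁻¹ * (((k : ℝ) + 1) ^ 2)⁻¹ := by
    rw [dist_comm, Real.dist_eq, Nat.cast_add_one, ← add_assoc, mul_assoc, ← mul_inv]
    refine (hstep δ hδ.2 (x + k) (by linarith)).trans ?_
    have hxk : 0 < x + k - 2 := by linarith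
    rw [pow_add]
    gcongr C * (?_ * ?_)⁻¹ <;> gcongr <;> linarith
  have hlim : Tendsto (fun k : ℕ => gammaDefect (M + 4) δ (x + k)) atTop (𝓝 0) :=
    (tendsto_gammaDefect (M + 3) hδ.1 hδ.2).comp
      (tendsto_atTop_add_const_left _ x tendsto_natCast_atTop_atTop)
  have := dist_le_tsum_of_dist_le_of_tendsto₀ _ hdist (hsummable.mul_left _) hlim
  rw [tsum_mul_left] at this
  simpa [mul_right_comm] using this

theorem exists_abs_sum_shiftDiff_log_Gamma_sub_le (M : ℕ) : ∃ C, 0 ≤ C ∧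
    ∀ δ ∈ Set.Icc (0 : ℝ) 1, ∀ x : ℝ, 2 ≤ x → ∀ n : ℕ,
      |∑ j ∈ range n, shiftDiff (Real.log ∘ Real.Gamma) δ (x + 1 + j) -
        (shiftDiff (logBarnesApprox (M + 4)) δ (x + n) - shiftDiff (logBarnesApprox (M + 4)) δ x)| ≤
          n * (C * ((x - 1) ^ M)⁻¹) := by
  obtain ⟨C, hC, hdefect⟩ := exists_abs_gammaDefect_le M
  refine ⟨C, hC, fun δ hδ x hx n => ?_⟩
  have htelescope := sum_range_sub
    (fun j : ℕ => shiftDiff (logBarnesApprox (M + 4)) δ (x + j)) n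
  have hsplit (j : ℕ) : shiftDiff (logBarnesApprox (M + 4)) δ (x + (j + 1 : ℕ)) -
      shiftDiff (logBarnesApprox (M + 4)) δ (x + j) =
        gammaDefect (M + 4) δ (x + 1 + j) + shiftDiff (Real.log ∘ Real.Gamma) δ (x + 1 + j) := by
    rw [gammaDefect, sub_add_cancel, add_right_comm, add_sub_cancel_right, Nat.cast_add_one,
      add_assoc]
  simp only [hsplit, sum_add_distrib, Nat.cast_zero, add_zero] at htelescope
  rw [← htelescope, sub_add_cancel_right, abs_neg]
  have hx1 : 0 < x - 1 := by linarith
  calc |∑ j ∈ range n, gammaDefect (M + 4) δ (x + 1 + j)|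
      ≤ ∑ j ∈ range n, |gammaDefect (M + 4) δ (x + 1 + j)| := abs_sum_le_sum_abs _ _
    _ ≤ ∑ _j ∈ range n, C * ((x - 1) ^ M)⁻¹ := sum_le_sum fun j _ => by
        refine (hdefect δ hδ (x + 1 + j) (by linarith)).trans ?_
        gcongr C * (?_ ^ _)⁻¹
        linarith
    _ = n * (C * ((x - 1) ^ M)⁻¹) := by rw [sum_const, card_range, nsmul_eq_mul]

end GammaSums

section LogBarnesShift

open Filter Topology PowerSeries

/-- The Taylor series of `x ↦ log (1 - x)`. The constant coefficient is `-0⁻¹ = 0`. -/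
noncomputable def logOneSubSeries : ℝ⟦X⟧ := mk fun k => -(k : ℝ)⁻¹

/-- The Taylor series of `x ↦ (1 - x)⁻ᵈ`, for `0 < d`. -/
noncomputable def invPowSeries (d : ℕ) : ℝ⟦X⟧ := mk fun k => risingFactorial d k / k.factorial

/-- The Taylor series of `x ↦ ((1 - x)² log (1 - x) / 2 + 3 (2x - x²) / 4) / x`. The subtracted
coefficients of index `0` and `1` are `0⁻¹ = 0`. -/
noncomputable def sqLogOneSubSeries : ℝ⟦X⟧ :=
  1 - mk fun k => (((k : ℝ) + 1) * k * (k - 1))⁻¹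

theorem X_mul_sqLogOneSubSeries : X * sqLogOneSubSeries =
    C (1 / 2) * ((1 - X) ^ 2 * logOneSubSeries) + C (3 / 4) * (2 * X - X ^ 2) := by
  have hexpand : C (1 / 2) * ((1 - X) ^ 2 * logOneSubSeries) + C (3 / 4) * (2 * X - X ^ 2) =
      C (1 / 2 : ℝ) * logOneSubSeries - X * logOneSubSeries +
        C (1 / 2) * (X * (X * logOneSubSeries)) + C (3 / 2) * X - C (3 / 4) * X ^ 2 := by
    have htwo : C (1 / 2 : ℝ) * 2 = 1 := by rw [← map_ofNat C 2, ← map_mul]; norm_num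
    have hthree : C (3 / 4 : ℝ) * 2 = C (3 / 2) := by rw [← map_ofNat C 2, ← map_mul]; norm_num
    linear_combination X * hthree - X * logOneSubSeries * htwo
  rw [hexpand]
  ext k
  match k with
  | 0 => simp [logOneSubSeries]
  | 1 =>
    simp [sqLogOneSubSeries, logOneSubSeries, coeff_succ_X_mul, coeff_X_pow]
    norm_num
  | 2 =>
    simp [sqLogOneSubSeries, logOneSubSeries, coeff_succ_X_mul, coeff_X_pow, coeff_one]
    norm_num
  | k + 3 =>
    have hk : (k : ℝ) + 2 - 1 = k + 1 := by ring
    simp [sqLogOneSubSeries, logOneSubSeries, coeff_succ_X_mul, coeff_X_pow, coeff_one, hk]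
    field_simp
    ring

variable {α : Type*} {l : Filter α} {ε : α → ℝ}

theorem hasExpansion_log_one_sub (hε : Tendsto ε l (𝓝 0)) :
    HasExpansion l ε (fun t => Real.log (1 - ε t)) logOneSubSeries := by
  refine HasExpansion.of_hasSum (φ := fun x => Real.log (1 - x)) ?_ hε
  filter_upwards [Metric.ball_mem_nhds (0 : ℝ) one_pos] with x hx
  rw [← hasSum_nat_add_iff' 1]
  convert (Real.hasSum_pow_div_log_of_abs_lt_one (mem_ball_zero_iff.1 hx)).neg using 1
  · ext k
    simp [logOneSubSeries, div_eq_inv_mul]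
  · simp [logOneSubSeries]

theorem hasExpansion_inv_one_sub_pow {d : ℕ} (hd : 0 < d) (hε : Tendsto ε l (𝓝 0)) :
    HasExpansion l ε (fun t => ((1 - ε t) ^ d)⁻¹) (invPowSeries d) := by
  obtain ⟨d, rfl⟩ := Nat.exists_eq_add_of_le' hd
  refine HasExpansion.of_hasSum (φ := fun x => ((1 - x) ^ (d + 1))⁻¹) ?_ hε
  filter_upwards [Metric.ball_mem_nhds (0 : ℝ) one_pos] with x hx
  convert hasSum_choose_mul_geometric_of_norm_lt_one d (mem_ball_zero_iff.1 hx) using 1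
  · ext k
    have hrising : risingFactorial (d + 1) k = ((d + 1).ascFactorial k : ℕ) := by
      simp [Nat.ascFactorial_eq_prod_range, risingFactorial]
    rw [invPowSeries, coeff_mk, hrising, Nat.ascFactorial_eq_factorial_mul_choose, Nat.cast_mul,
      mul_div_cancel_left₀ _ (by positivity), add_comm k d, Nat.choose_symm_add]
  · exact (one_div _).symm

theorem hasExpansion_sqLogOneSub (hε : Tendsto ε l (𝓝 0)) :
    HasExpansion l ε
      (fun t => (1 - ε t) ^ 2 / 2 * Real.log (1 - ε t) + 3 / 4 * (2 * ε t - ε t ^ 2))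
      (X * sqLogOneSubSeries) := by
  have hX : HasExpansion l ε ε X := by simpa using HasExpansion.X_pow hε 1
  have hone := HasExpansion.const (𝕜 := ℝ) hε 1
  have htwo := HasExpansion.const (𝕜 := ℝ) hε 2
  rw [map_one] at hone
  rw [map_ofNat] at htwo
  rw [X_mul_sqLogOneSubSeries]
  refine (((((hone.sub hX).pow 2).mul (hasExpansion_log_one_sub hε)).const_mul (1 / 2)).add
    (((htwo.mul hX).sub (hX.pow 2)).const_mul (3 / 4))).congr' (Eventually.of_forall fun t => ?_)
  ring

theorem logBarnesApprox_mul_one_sub_sub (M : ℕ) {z x : ℝ} (hz : 0 < z) (hx : x < 1) :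
    logBarnesApprox (2 * M + 3) (z * (1 - x)) - logBarnesApprox (2 * M + 3) z =
      z ^ 2 * ((1 - x) ^ 2 / 2 * Real.log (1 - x) + 3 / 4 * (2 * x - x ^ 2)) -
        1 / 12 * Real.log (1 - x) +
        ∑ j ∈ Icc 1 M, (bernoulli (2 * j + 2) : ℝ) / (4 * j * (j + 1)) * (z ^ (2 * j))⁻¹ *
          (((1 - x) ^ (2 * j))⁻¹ - 1) +
        z ^ 2 * (x ^ 2 / 2 - x) * Real.log z := by
  have hsum (j : ℕ) : (bernoulli (2 * j + 2) : ℝ) / (4 * j * (j + 1)) * (z ^ (2 * j))⁻¹ *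
        (((1 - x) ^ (2 * j))⁻¹ - 1) =
      (bernoulli (2 * j + 2) : ℝ) / (4 * j * (j + 1)) * ((z * (1 - x)) ^ (2 * j))⁻¹ -
        (bernoulli (2 * j + 2) : ℝ) / (4 * j * (j + 1)) * (z ^ (2 * j))⁻¹ := by
    rw [mul_pow, mul_inv]
    ring
  rw [logBarnesApprox_two_mul_add_three, logBarnesApprox_two_mul_add_three,
    Real.log_mul hz.ne' (sub_pos.2 hx).ne', Finset.sum_congr rfl fun j _ => hsum j,
    sum_sub_distrib]
  ring

/-- The expansion of `W(sn - p/n) - W(sn)` in powers of `n⁻²`, where `W = logBarnesApprox (2M + 3)`,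
except for its logarithmic terms. -/
noncomputable def logBarnesShiftSeries (M : ℕ) (s p : ℝ) : ℝ⟦X⟧ :=
  C (s * p) * rescale (p / s) sqLogOneSubSeries - C (1 / 12) * rescale (p / s) logOneSubSeries +
    ∑ j ∈ Icc 1 M, C ((bernoulli (2 * j + 2) : ℝ) / (4 * j * (j + 1)) * (s ^ (2 * j))⁻¹) *
      (X ^ j * (rescale (p / s) (invPowSeries (2 * j)) - 1))

theorem hasExpansion_logBarnesShift (M : ℕ) {s : ℝ} (hs : s ≠ 0) (p : ℝ)
    (hε : Tendsto ε l (𝓝 0)) (hne : ∀ᶠ t in l, ε t ≠ 0) :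
    HasExpansion l ε (fun t => s ^ 2 * (ε t)⁻¹ * ((1 - p / s * ε t) ^ 2 / 2 *
          Real.log (1 - p / s * ε t) + 3 / 4 * (2 * (p / s * ε t) - (p / s * ε t) ^ 2)) -
        1 / 12 * Real.log (1 - p / s * ε t) +
        ∑ j ∈ Icc 1 M, (bernoulli (2 * j + 2) : ℝ) / (4 * j * (j + 1)) * (s ^ (2 * j))⁻¹ *
          (ε t ^ j * (((1 - p / s * ε t) ^ (2 * j))⁻¹ - 1)))
      (logBarnesShiftSeries M s p) := by
  have hδ : Tendsto (fun t => p / s * ε t) l (𝓝 0) := by simpa using hε.const_mul (p / s)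
  have hone := HasExpansion.const (𝕜 := ℝ) hε 1
  rw [map_one] at hone
  refine ((HasExpansion.of_mul ?_ hne).sub
    (((hasExpansion_log_one_sub hδ).rescale hε).const_mul _)).add
    (HasExpansion.sum _ hε fun j hj => (((HasExpansion.X_pow hε j).mul
      (((hasExpansion_inv_one_sub_pow (by grind) hδ).rescale hε).sub hone)).const_mul _))
  have hscale := ((hasExpansion_sqLogOneSub hδ).rescale hε).const_mul (s ^ 2)
  have hseries : C (s ^ 2) * rescale (p / s) (X * sqLogOneSubSeries) =
      X * (C (s * p) * rescale (p / s) sqLogOneSubSeries) := by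
    rw [map_mul, rescale_X, show s * p = s ^ 2 * (p / s) by field_simp, map_mul C]
    ring
  rw [hseries] at hscale
  refine hscale.congr' (hne.mono fun t ht => ?_)
  field_simp

theorem hasExpansion_shiftDiff_logBarnesApprox {n : α → ℝ} (hn : Tendsto n l atTop) (M : ℕ)
    {s : ℝ} (hs : 0 < s) (p : ℝ) :
    HasExpansion l (fun t => (n t ^ 2)⁻¹)
      (fun t => shiftDiff (logBarnesApprox (2 * M + 3)) (p / n t) (s * n t) -
        (p ^ 2 / 2 * (n t ^ 2)⁻¹ - s * p) * Real.log (s * n t))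
      (logBarnesShiftSeries M s p) := by
  have hpos := hn.eventually_gt_atTop 0
  have hε : Tendsto (fun t => (n t ^ 2)⁻¹) l (𝓝 0) :=
    tendsto_inv_atTop_zero.comp ((tendsto_pow_atTop two_ne_zero).comp hn)
  have hδ : Tendsto (fun t => p / s * (n t ^ 2)⁻¹) l (𝓝 0) := by simpa using hε.const_mul (p / s)
  refine (hasExpansion_logBarnesShift M hs.ne' p hε (hpos.mono fun t ht => by positivity)).congr' ?_
  filter_upwards [hpos, hδ.eventually (gt_mem_nhds one_pos)] with t ht hlt
  have hmul : s * n t - p / n t = s * n t * (1 - p / s * (n t ^ 2)⁻¹) := by field_simp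
  have hlogcoeff : (s * n t) ^ 2 * ((p / s * (n t ^ 2)⁻¹) ^ 2 / 2 - p / s * (n t ^ 2)⁻¹) =
      p ^ 2 / 2 * (n t ^ 2)⁻¹ - s * p := by field_simp
  have hpow (j : ℕ) : ((s * n t) ^ (2 * j))⁻¹ = (s ^ (2 * j))⁻¹ * (n t ^ 2)⁻¹ ^ j := by
    rw [mul_pow, mul_inv, inv_pow, ← pow_mul]
  rw [shiftDiff, hmul, logBarnesApprox_mul_one_sub_sub M (mul_pos hs ht) hlt, hlogcoeff,
    add_sub_cancel_right, mul_pow s (n t) 2, inv_inv]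
  simp only [hpow, mul_assoc]

theorem coeff_X_pow_mul_rescale_invPowSeries_sub_one (q j d : ℕ) (y : ℝ) :
    coeff q (X ^ j * (rescale y (invPowSeries d) - 1)) =
      if j < q then y ^ (q - j) * (risingFactorial d (q - j) / (q - j).factorial) else 0 := by
  rw [coeff_X_pow_mul', map_sub, coeff_rescale, invPowSeries, coeff_mk, coeff_one]
  rcases lt_trichotomy j q with h | rfl | h
  · rw [if_pos h.le, if_pos h, if_neg (Nat.sub_pos_of_lt h).ne', sub_zero]
  · simp [risingFactorial]
  · rw [if_neg h.not_ge, if_neg h.le.not_gt]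

theorem coeff_logBarnesShiftSeries (M : ℕ) (s p : ℝ) (q : ℕ) :
    coeff q (logBarnesShiftSeries M s p) =
      s * p * ((p / s) ^ q * coeff q sqLogOneSubSeries) + 1 / 12 * ((p / s) ^ q * (q : ℝ)⁻¹) +
        ∑ j ∈ Icc 1 M with j < q,
          (bernoulli (2 * j + 2) : ℝ) / (4 * j * (j + 1)) * (s ^ (2 * j))⁻¹ *
            ((p / s) ^ (q - j) * (risingFactorial (2 * j) (q - j) / (q - j).factorial)) := by
  rw [sum_filter]
  simp only [logBarnesShiftSeries, map_add, map_sub, map_sum, coeff_C_mul, coeff_rescale,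
    coeff_X_pow_mul_rescale_invPowSeries_sub_one, mul_ite, mul_zero, logOneSubSeries, coeff_mk,
    mul_neg, sub_neg_eq_add]

end LogBarnesShift

section LogMomentSeries

open PowerSeries

/-- The expansion of `log (μ0 p n m)` in powers of `n⁻²`, for `n = c m`, where Stirling's series is
truncated after `M` terms. The shifts by `1 / c` and `(1 - c) / c` come from `m / n` and
`(m - n) / n`. -/
noncomputable def logMomentSeries (M p : ℕ) (c : ℝ) : ℝ⟦X⟧ :=
  C (p * ((1 - c) / c) * Real.log (1 - c)) - C ((p : ℝ) ^ 2 / 2 * Real.log (1 - c)) * X +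
    ∑ j ∈ Icc 1 p, rescale (j * c) logOneSubSeries +
    (logBarnesShiftSeries M (1 / c) p - logBarnesShiftSeries M ((1 - c) / c) p)

theorem coeff_sum_rescale_logOneSubSeries (p q : ℕ) (c : ℝ) :
    coeff q (∑ j ∈ Icc 1 p, rescale (j * c) logOneSubSeries) =
      -(c ^ q / q * ∑ j ∈ Icc 1 p, (j : ℝ) ^ q) := by
  simp only [map_sum, coeff_rescale, logOneSubSeries, coeff_mk, mul_sum, ← sum_neg_distrib, mul_pow]
  exact Finset.sum_congr rfl fun j _ => by ring

theorem inv_pow_mul_div_pow_sub {c : ℝ} (h0 : 0 < c) (h1 : c < 1) (p : ℝ) {j q : ℕ} (hj : j ≤ q) :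
    ((1 / c) ^ (2 * j))⁻¹ * (p / (1 / c)) ^ (q - j) -
        (((1 - c) / c) ^ (2 * j))⁻¹ * (p / ((1 - c) / c)) ^ (q - j) =
      c ^ (2 * j) * (p * c) ^ (q - j) * (1 - (1 - c) ^ (-(j : ℤ) - (q : ℤ))) := by
  have hc : 0 < 1 - c := sub_pos.2 h1
  obtain ⟨d, rfl⟩ := Nat.exists_eq_add_of_le hj
  have hzpow : (1 - c) ^ (-(j : ℤ) - ((j + d : ℕ) : ℤ)) = ((1 - c) ^ (2 * j) * (1 - c) ^ d)⁻¹ := by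
    rw [show -(j : ℤ) - ((j + d : ℕ) : ℤ) = -((2 * j + d : ℕ) : ℤ) by push_cast; ring, zpow_neg,
      zpow_natCast, pow_add]
  rw [hzpow, Nat.add_sub_cancel_left, div_div_eq_mul_div p, div_div_eq_mul_div p, div_one, div_pow,
    div_pow, div_pow, one_pow]
  field_simp

theorem coeff_logBarnesShiftSeries_sub {M q : ℕ} (hq : q ≤ M) {c : ℝ} (h0 : 0 < c) (h1 : c < 1)
    (p : ℝ) :
    coeff q (logBarnesShiftSeries M (1 / c) p - logBarnesShiftSeries M ((1 - c) / c) p) =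
      p * c⁻¹ * (p * c) ^ q * (1 - (1 - c) / (1 - c) ^ q) * coeff q sqLogOneSubSeries +
      1 / 12 * (p * c) ^ q * (q : ℝ)⁻¹ * (1 - ((1 - c) ^ q)⁻¹) +
      ∑ j ∈ Icc 1 (q - 1), (bernoulli (2 * j + 2) : ℝ) * c ^ (2 * j) *
        risingFactorial (2 * j) (q - j) * (p * c) ^ (q - j) /
          (4 * j * (j + 1) * (q - j).factorial) * (1 - (1 - c) ^ (-(j : ℤ) - (q : ℤ))) := by
  have hfilter : {j ∈ Icc 1 M | j < q} = Icc 1 (q - 1) := by grind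
  have hsum : ∀ j ∈ Icc 1 (q - 1), (bernoulli (2 * j + 2) : ℝ) * c ^ (2 * j) *
        risingFactorial (2 * j) (q - j) * (p * c) ^ (q - j) /
          (4 * j * (j + 1) * (q - j).factorial) * (1 - (1 - c) ^ (-(j : ℤ) - (q : ℤ))) =
      (bernoulli (2 * j + 2) : ℝ) / (4 * j * (j + 1)) * ((1 / c) ^ (2 * j))⁻¹ *
          ((p / (1 / c)) ^ (q - j) * (risingFactorial (2 * j) (q - j) / (q - j).factorial)) -
        (bernoulli (2 * j + 2) : ℝ) / (4 * j * (j + 1)) * (((1 - c) / c) ^ (2 * j))⁻¹ *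
          ((p / ((1 - c) / c)) ^ (q - j) *
            (risingFactorial (2 * j) (q - j) / (q - j).factorial)) := by
    intro j hj
    have hjq : j ≤ q := by grind
    rw [← div_div _ (4 * (j : ℝ) * (j + 1))]
    linear_combination -(bernoulli (2 * j + 2) : ℝ) / (4 * j * (j + 1)) *
      (risingFactorial (2 * j) (q - j) / (q - j).factorial) * inv_pow_mul_div_pow_sub h0 h1 p hjq
  have hp₁ : p / (1 / c) = p * c := by field_simp
  have hp₂ : (p / ((1 - c) / c)) ^ q = (p * c) ^ q / (1 - c) ^ q := by
    rw [div_div_eq_mul_div, div_pow]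
  rw [map_sub, coeff_logBarnesShiftSeries, coeff_logBarnesShiftSeries, hfilter,
    Finset.sum_congr rfl hsum, sum_sub_distrib, hp₂, hp₁]
  ring

theorem coeff_sqLogOneSubSeries_add_two (q : ℕ) :
    coeff (q + 2) sqLogOneSubSeries = -(((q : ℝ) + 3) * (q + 2) * (q + 1))⁻¹ := by
  rw [sqLogOneSubSeries, map_sub, coeff_mk, coeff_one, if_neg (by omega), zero_sub]
  push_cast
  ring_nf

theorem coeff_logMomentSeries {M q : ℕ} (hq : q ≤ M) (p : ℕ) {c : ℝ} (h0 : 0 < c) (h1 : c < 1) :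
    coeff q (logMomentSeries M p c) = Acoef p c q := by
  have hc : 0 < 1 - c := sub_pos.2 h1
  rw [logMomentSeries, map_add, map_add, map_sub, coeff_sum_rescale_logOneSubSeries,
    coeff_logBarnesShiftSeries_sub hq h0 h1, coeff_C, coeff_C_mul, coeff_X]
  match q with
  | 0 =>
    have hsq : coeff 0 sqLogOneSubSeries = 1 := by simp [sqLogOneSubSeries]
    rw [hsq, Acoef]
    simp only [if_true, zero_ne_one, if_false, pow_zero, Nat.cast_zero, div_zero, inv_zero,
      mul_zero, zero_mul, neg_zero, add_zero, Nat.zero_sub, show Icc 1 0 = (∅ : Finset ℕ) from rfl,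
      sum_empty]
    field_simp
    ring
  | 1 =>
    have hsum : ∑ j ∈ Icc 1 p, (j : ℝ) ^ 1 = p * (p + 1) / 2 := by
      clear hq
      simp only [pow_one]
      induction p with
      | zero => simp
      | succ p ih =>
        rw [sum_Icc_succ_top (by omega), ih]
        push_cast
        ring
    have hsq : coeff 1 sqLogOneSubSeries = 0 := by simp [sqLogOneSubSeries, coeff_one]
    rw [hsum, hsq, Acoef, show 12 * (c - 1) = -(12 * (1 - c)) by ring, Nat.sub_self,
      show Icc 1 0 = (∅ : Finset ℕ) from rfl, sum_empty]
    simp only [one_ne_zero, if_true, if_false, Nat.cast_one, pow_one]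
    field_simp
    ring
  | q + 2 =>
    have hsq : ((q : ℝ) + 2) ^ 2 - 1 = (q + 3) * (q + 1) := by ring
    rw [Acoef, coeff_sqLogOneSubSeries_add_two, if_neg (by omega), if_neg (by omega)]
    push_cast
    rw [hsq, ← sub_eq_zero, pow_add (1 - c) q 2, mul_comm c (p : ℝ)]
    have hpow : 0 < (1 - c) ^ q := by positivity
    generalize (1 - c) ^ q = w at *
    generalize ((p : ℝ) * c) ^ (q + 2) = v at *
    field_simp
    ring

end LogMomentSeries

section Moments

open Filter Topology PowerSeries

theorem log_Gamma_sub_log_Gamma_sub_natCast (p : ℕ) {x : ℝ} (hx : p < x) :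
    Real.log (Real.Gamma x) - Real.log (Real.Gamma (x - p)) =
      ∑ j ∈ Icc 1 p, Real.log (x - j) := by
  induction p with
  | zero => simp
  | succ p ih =>
    have hpos : 0 < x - (p + 1 : ℕ) := sub_pos.2 hx
    have hstep := log_Gamma_add_one hpos
    push_cast at hx hstep ⊢
    rw [sub_add_eq_sub_sub, sub_add_cancel] at hstep
    rw [sum_Icc_succ_top (by omega), ← ih (by linarith), hstep]
    push_cast
    rw [sub_add_eq_sub_sub]
    ring

section Mu0

variable {p n m : ℕ} (hp : (p : ℝ) < n * (m - n + 1))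

include hp

theorem pos_of_natCast_lt_mul : 0 < n := by
  rcases Nat.eq_zero_or_pos n with rfl | hn
  · rw [Nat.cast_zero, zero_mul] at hp
    exact absurd hp p.cast_nonneg.not_gt
  · exact hn

theorem natCast_lt_natCast_mul_natCast : (p : ℝ) < m * n := by
  have hn : (1 : ℝ) ≤ n := by exact_mod_cast pos_of_natCast_lt_mul hp
  nlinarith

theorem Gamma_sub_div_pos_and_Gamma_pos (j : ℕ) :
    0 < Real.Gamma ((m : ℝ) - n + 1 - p / n + j) ∧ 0 < Real.Gamma ((m : ℝ) - n + 1 + j) := by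
  have hn : (0 : ℝ) < n := by exact_mod_cast pos_of_natCast_lt_mul hp
  have hδ : (p : ℝ) / n < m - n + 1 := (div_lt_iff₀' hn).2 hp
  have hδ0 : (0 : ℝ) ≤ p / n := by positivity
  exact ⟨Real.Gamma_pos_of_pos (by linarith), Real.Gamma_pos_of_pos (by linarith)⟩

theorem mu0_pos : 0 < mu0 p n m := by
  have hn := pos_of_natCast_lt_mul hp
  have hx := natCast_lt_natCast_mul_natCast hp
  have hΓ : 0 < Real.Gamma ((m : ℝ) * n) := Real.Gamma_pos_of_pos (p.cast_nonneg.trans_lt hx)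
  have hprod := prod_pos fun j (_ : j ∈ range n) =>
    div_pos (Gamma_sub_div_pos_and_Gamma_pos hp j).1 (Gamma_sub_div_pos_and_Gamma_pos hp j).2
  rw [mu0]
  positivity

theorem log_mu0 : Real.log (mu0 p n m) =
    ∑ j ∈ Icc 1 p, Real.log ((m : ℝ) * n - j) - p * Real.log n +
      ∑ j ∈ range n, shiftDiff (Real.log ∘ Real.Gamma) (p / n) ((m : ℝ) - n + 1 + j) := by
  have hpre := left_ne_zero_of_mul (mu0_pos hp).ne'
  have hprod := right_ne_zero_of_mul (mu0_pos hp).ne'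
  have hshift (j : ℕ) : shiftDiff (Real.log ∘ Real.Gamma) (p / n) ((m : ℝ) - n + 1 + j) =
      Real.log (Real.Gamma ((m : ℝ) - n + 1 - p / n + j) / Real.Gamma ((m : ℝ) - n + 1 + j)) := by
    obtain ⟨hnum, hden⟩ := Gamma_sub_div_pos_and_Gamma_pos hp j
    rw [Real.log_div hnum.ne' hden.ne', shiftDiff, add_sub_right_comm]
    rfl
  obtain ⟨hΓ, hden⟩ := div_ne_zero_iff.1 hpre
  rw [mu0, Real.log_mul hpre hprod, Real.log_div hΓ hden,
    Real.log_mul (left_ne_zero_of_mul hden) (right_ne_zero_of_mul hden), Real.log_pow,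
    Real.log_prod (prod_ne_zero_iff.1 hprod), Finset.sum_congr rfl fun j _ => hshift j,
    ← log_Gamma_sub_log_Gamma_sub_natCast p (natCast_lt_natCast_mul_natCast hp)]
  ring

end Mu0

/-- The approximation to `log (μ0 p n m)` in which the product of quotients of Gamma values is
summed by means of `logBarnesApprox N`. -/
noncomputable def logMomentApprox (N p : ℕ) (n m : ℝ) : ℝ :=
  ∑ j ∈ Icc 1 p, Real.log (m * n - j) - p * Real.log n +
    (shiftDiff (logBarnesApprox N) (p / n) m - shiftDiff (logBarnesApprox N) (p / n) (m - n))

theorem exists_abs_log_mu0_sub_logMomentApprox_le (M : ℕ) : ∃ C, 0 ≤ C ∧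
    ∀ {p n m : ℕ}, 0 < n → p ≤ n → n + 2 ≤ m →
      |Real.log (mu0 p n m) - logMomentApprox (M + 4) p n m| ≤
        n * (C * (((m : ℝ) - n - 1) ^ M)⁻¹) := by
  obtain ⟨C, hC, hbound⟩ := exists_abs_sum_shiftDiff_log_Gamma_sub_le M
  refine ⟨C, hC, fun {p n m} hn hpn hnm => ?_⟩
  have hn' : (0 : ℝ) < n := by exact_mod_cast hn
  have hpn' : (p : ℝ) ≤ n := by exact_mod_cast hpn
  have hnm' : (n : ℝ) + 2 ≤ m := by exact_mod_cast hnm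
  have hsum := hbound (p / n) ⟨by positivity, (div_le_one hn').2 hpn'⟩ (m - n) (by linarith) n
  rw [sub_add_cancel] at hsum
  rwa [log_mu0 (by nlinarith), logMomentApprox, add_sub_add_left_eq_sub]

theorem logMomentApprox_eq (N p : ℕ) {c n : ℝ} (h0 : 0 < c) (h1 : c < 1) (hn : 0 < n)
    (hp : ∀ j ∈ Icc 1 p, 0 < 1 - j * c * (n ^ 2)⁻¹) :
    logMomentApprox N p n (1 / c * n) =
      p * ((1 - c) / c) * Real.log (1 - c) - (p : ℝ) ^ 2 / 2 * Real.log (1 - c) * (n ^ 2)⁻¹ +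
        ∑ j ∈ Icc 1 p, Real.log (1 - j * c * (n ^ 2)⁻¹) +
        ((shiftDiff (logBarnesApprox N) (p / n) (1 / c * n) -
            ((p : ℝ) ^ 2 / 2 * (n ^ 2)⁻¹ - 1 / c * p) * Real.log (1 / c * n)) -
          (shiftDiff (logBarnesApprox N) (p / n) ((1 - c) / c * n) -
            ((p : ℝ) ^ 2 / 2 * (n ^ 2)⁻¹ - (1 - c) / c * p) * Real.log ((1 - c) / c * n))) := by
  have hc : 0 < 1 - c := sub_pos.2 h1
  have hlog : ∀ j ∈ Icc 1 p, Real.log (1 / c * n * n - j) =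
      (2 * Real.log n - Real.log c) + Real.log (1 - j * c * (n ^ 2)⁻¹) := by
    intro j hj
    rw [show 1 / c * n * n - j = n ^ 2 / c * (1 - j * c * (n ^ 2)⁻¹) by field_simp,
      Real.log_mul (by positivity) (hp j hj).ne', Real.log_div (by positivity) h0.ne', Real.log_pow]
    norm_num
  have hsum : ∑ j ∈ Icc 1 p, Real.log (1 / c * n * n - j) =
      p * (2 * Real.log n - Real.log c) + ∑ j ∈ Icc 1 p, Real.log (1 - j * c * (n ^ 2)⁻¹) := by
    rw [Finset.sum_congr rfl hlog, sum_add_distrib, sum_const, Nat.card_Icc, nsmul_eq_mul,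
      Nat.add_sub_cancel]
  have hsub : 1 / c * n - n = (1 - c) / c * n := by field_simp
  have hone : 1 / c = (1 - c) / c + 1 := by field_simp; ring
  rw [logMomentApprox, hsum, hsub, Real.log_mul (by positivity) hn.ne',
    Real.log_mul (by positivity) hn.ne', Real.log_div hc.ne' h0.ne',
    Real.log_div one_ne_zero h0.ne', Real.log_one]
  linear_combination (p : ℝ) * (Real.log c - Real.log n) * hone

variable {α : Type*} {l : Filter α} {c : ℝ}

theorem hasExpansion_logMomentApprox {n : α → ℝ} (hn : Tendsto n l atTop) (h0 : 0 < c)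
    (h1 : c < 1) (M p : ℕ) :
    HasExpansion l (fun t => (n t ^ 2)⁻¹)
      (fun t => logMomentApprox (2 * M + 3) p (n t) (1 / c * n t)) (logMomentSeries M p c) := by
  have hc : 0 < 1 - c := sub_pos.2 h1
  have hε : Tendsto (fun t => (n t ^ 2)⁻¹) l (𝓝 0) :=
    tendsto_inv_atTop_zero.comp ((tendsto_pow_atTop two_ne_zero).comp hn)
  have hδ (j : ℕ) : Tendsto (fun t => j * c * (n t ^ 2)⁻¹) l (𝓝 0) := by
    simpa using hε.const_mul (j * c)
  have hX := HasExpansion.X_pow hε 1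
  simp only [pow_one] at hX
  have hmain := (((HasExpansion.const hε (p * ((1 - c) / c) * Real.log (1 - c))).sub
    (hX.const_mul ((p : ℝ) ^ 2 / 2 * Real.log (1 - c)))).add
    (HasExpansion.sum (Icc 1 p) hε fun j _ => (hasExpansion_log_one_sub (hδ j)).rescale hε)).add
    ((hasExpansion_shiftDiff_logBarnesApprox hn M (one_div_pos.2 h0) p).sub
      (hasExpansion_shiftDiff_logBarnesApprox hn M (div_pos hc h0) p))
  refine hmain.congr' ?_
  filter_upwards [hn.eventually_gt_atTop 0, (eventually_all_finset (Icc 1 p)).2 fun j _ =>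
    (hδ j).eventually (gt_mem_nhds one_pos)] with t ht hlt
  exact (logMomentApprox_eq _ p h0 h1 ht fun j hj => sub_pos.2 (hlt j hj)).symm

variable {n m : α → ℕ}

theorem isBigO_log_mu0_sub_logMomentApprox (hn : Tendsto n l atTop) (h0 : 0 < c) (h1 : c < 1)
    (hm : ∀ t, (m t : ℝ) = 1 / c * n t) (p Q : ℕ) :
    (fun t => Real.log (mu0 p (n t) (m t)) - logMomentApprox (2 * (Q + 1) + 3) p (n t) (m t)) =O[l]
      fun t => ((n t : ℝ) ^ 2)⁻¹ ^ Q := by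
  obtain ⟨C, hC, hbound⟩ := exists_abs_log_mu0_sub_logMomentApprox_le (2 * Q + 1)
  set s := (1 - c) / c with hs
  have hs0 : 0 < s := div_pos (sub_pos.2 h1) h0
  have hreal : Tendsto (fun t => (n t : ℝ)) l atTop := tendsto_natCast_atTop_atTop.comp hn
  refine Asymptotics.IsBigO.of_bound (C * ((s / 2) ^ (2 * Q + 1))⁻¹) ?_
  filter_upwards [hn.eventually_gt_atTop 0, hn.eventually_ge_atTop p,
    hreal.eventually_ge_atTop (2 / s)] with t hpos hp hlarge
  have hpos' : (0 : ℝ) < n t := by exact_mod_cast hpos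
  have hgap : (m t : ℝ) - n t = s * n t := by rw [hm, hs]; field_simp
  have hge : 2 ≤ s * n t := by rwa [div_le_iff₀' hs0] at hlarge
  have hnm : n t + 2 ≤ m t := by
    have hcast : (n t : ℝ) + 2 ≤ m t := by linarith
    exact_mod_cast hcast
  rw [Real.norm_eq_abs, Real.norm_of_nonneg (by positivity)]
  calc |Real.log (mu0 p (n t) (m t)) - logMomentApprox (2 * (Q + 1) + 3) p (n t) (m t)|
      ≤ n t * (C * (((m t : ℝ) - n t - 1) ^ (2 * Q + 1))⁻¹) := hbound hpos hp hnm
    _ ≤ n t * (C * ((s / 2 * n t) ^ (2 * Q + 1))⁻¹) := by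
      rw [hgap]
      gcongr n t * (C * (?_ ^ _)⁻¹)
      linarith
    _ = C * ((s / 2) ^ (2 * Q + 1))⁻¹ * ((n t : ℝ) ^ 2)⁻¹ ^ Q := by
      rw [mul_pow, mul_inv, inv_pow, ← pow_mul, pow_succ (n t : ℝ)]
      field_simp

theorem hasExpansion_log_mu0 (hn : Tendsto n l atTop) (h0 : 0 < c) (h1 : c < 1)
    (hm : ∀ t, (m t : ℝ) = 1 / c * n t) (p : ℕ) :
    HasExpansion l (fun t => ((n t : ℝ) ^ 2)⁻¹) (fun t => Real.log (mu0 p (n t) (m t)))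
      (mk (Acoef p c)) := by
  have hreal : Tendsto (fun t => (n t : ℝ)) l atTop := tendsto_natCast_atTop_atTop.comp hn
  have hε : Tendsto (fun t => ((n t : ℝ) ^ 2)⁻¹) l (𝓝 0) :=
    tendsto_inv_atTop_zero.comp ((tendsto_pow_atTop two_ne_zero).comp hreal)
  refine HasExpansion.of_approx hε fun Q =>
    ⟨_, _, hasExpansion_logMomentApprox hreal h0 h1 (Q + 1) p, X_pow_dvd_iff.2 fun q hq => ?_, ?_⟩
  · rw [map_sub, coeff_logMomentSeries (by omega) p h0 h1, coeff_mk, sub_self]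
  · simpa only [hm] using isBigO_log_mu0_sub_logMomentApprox hn h0 h1 hm p Q

theorem hasExpansion_mu0 (hn : Tendsto n l atTop) (h0 : 0 < c) (h1 : c < 1)
    (hm : ∀ t, (m t : ℝ) = 1 / c * n t) (p : ℕ) :
    HasExpansion l (fun t => ((n t : ℝ) ^ 2)⁻¹) (fun t => mu0 p (n t) (m t))
      (momentSeries c p) := by
  rw [momentSeries_eq_expSeries]
  refine (hasExpansion_log_mu0 hn h0 h1 hm p).exp.congr' ?_
  filter_upwards [hn.eventually_gt_atTop p] with t ht
  have hp : (p : ℝ) < n t := by exact_mod_cast ht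
  have hpos : (0 : ℝ) < n t := p.cast_nonneg.trans_lt hp
  have hnm : (n t : ℝ) ≤ m t := by
    rw [hm]
    exact le_mul_of_one_le_left hpos.le (one_le_one_div h0 h1.le)
  exact Real.exp_log (mu0_pos (by nlinarith))

theorem hasExpansion_cumulant_mu0 (hn : Tendsto n l atTop) (h0 : 0 < c) (h1 : c < 1)
    (hm : ∀ t, (m t : ℝ) = 1 / c * n t) (p : ℕ) :
    HasExpansion l (fun t => ((n t : ℝ) ^ 2)⁻¹)
      (fun t => cumulant (fun q => mu0 q (n t) (m t)) (p + 1))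
      (formalCumulant (momentSeries c) (p + 1)) := by
  simpa only [cumulant_eq_formalCumulant] using
    HasExpansion.formalCumulant (hasExpansion_mu0 hn h0 h1 hm) p

end Moments

/-- truncated asymptotic expansion of the `p`-th cumulant of the GLRT
statistic under `H₀` in inverse even powers of `n`, along `n = a·t`, `m = b·t`. -/
theorem cumulant_asymptotic_expansion (p : ℕ) (hp : 0 < p) (a b : ℕ) (ha : 0 < a)
    (hab : a < b) (N : ℕ) :
    ∃ C : ℝ, 0 < C ∧ ∃ T : ℕ, 0 < T ∧ ∀ t : ℕ, T ≤ t →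
      |cumulant (fun q => mu0 q (a * t) (b * t)) p -
          ∑ j ∈ Finset.range (N + 1),
            acoef ((a : ℝ) / b) p j / ((a * t : ℕ) : ℝ) ^ (2 * (p - 1 + j))|
        ≤ C / ((a * t : ℕ) : ℝ) ^ (2 * (p + N)) := by
  obtain ⟨k, rfl⟩ := Nat.exists_eq_add_of_le' hp
  have hb : 0 < b := ha.trans hab
  have hm (t : ℕ) : ((b * t : ℕ) : ℝ) = 1 / ((a : ℝ) / b) * (a * t : ℕ) := by
    push_cast
    field_simp
  have hexpansion := hasExpansion_cumulant_mu0 (Filter.tendsto_id.const_mul_atTop' ha)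
    (by positivity) ((div_lt_one (by positivity)).2 (by exact_mod_cast hab)) hm k
  obtain ⟨C, hC, hbound⟩ := (hexpansion.isBigO_sub_sum
    (X_pow_dvd_formalCumulant_momentSeries ((a : ℝ) / b) k) (N + 1)).exists_pos
  obtain ⟨T, hT⟩ := Filter.eventually_atTop.1 hbound.bound
  refine ⟨C, hC, T + 1, T.succ_pos, fun t ht => ?_⟩
  simpa [coeff_formalCumulant_momentSeries, ← pow_mul, ← div_eq_mul_inv, add_right_comm k 1 N,
    add_assoc] using! hT t (by omega)
end

section
/- Let (n_t) and (m_t) be sequences of positive integers with n_t ≤ m_t, n_t → ∞, and n_t/m_t → c̄ ∈ (0,1) as t → ∞. Then n_t²·(μ0(2, n_t, m_t) − μ0(1, n_t, m_t)²) → e²·(1−c̄)^{2(1−c̄)/c̄}·(ln(1/(1−c̄)) − c̄) as t → ∞. -/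
open Finset Filter Topology

/-!
With `μ₁ = mu0 1 n m` and `μ₂ = mu0 2 n m`, the variance factors as `μ₁² * (μ₂ / μ₁² - 1)`, and
the factors `μ₁²` and `n² * (μ₂ / μ₁² - 1)` have separate limits.

Log-convexity and the functional equation of `Γ` give
`h * log (x - 1) ≤ log Γ(x) - log Γ(x - h) ≤ h * log x`, so `log μ₁` is `log m` minus the mean of
`log` over an interval of length `n` near `[m - n, m]`, and `μ₁ → e (1 - c) ^ ((1 - c) / c)`.

In `log (μ₂ / μ₁²)` the products of Gamma ratios contribute second differences of `log Γ` of step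
`1 / n`. Such a difference vanishes at infinity and its increments under `x ↦ x + 1` are
`log (1 - h² / x²)`, so telescoping shows that it is `h² / x` up to a shift of `x`. The sum of
these is `n⁻² log (1 / (1 - c))` to leading order, and the prefactors of `μ₂ / μ₁²` contribute
`1 - 1 / (m n - 1)`, which is the source of the term `- c`.
-/

section LogGamma

open Real

variable {h x : ℝ}

lemma log_Gamma_add_one_s7 (hx : 0 < x) : log (Gamma (x + 1)) = log (Gamma x) + log x := by
  rw [Gamma_add_one hx.ne', log_mul hx.ne' (Gamma_pos_of_pos hx).ne', add_comm]

lemma mul_log_sub_one_le_log_Gamma_sub (hx : 1 < x) (h0 : 0 ≤ h) (h1 : h ≤ 1) :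
    h * log (x - 1) ≤ log (Gamma x) - log (Gamma (x - h)) := by
  have hconv := convexOn_log_Gamma.2 (x := x - 1) (y := x) (Set.mem_Ioi.2 (by linarith))
    (Set.mem_Ioi.2 (by linarith)) h0 (sub_nonneg.2 h1) (by ring)
  simp only [smul_eq_mul, Function.comp_apply] at hconv
  rw [show h * (x - 1) + (1 - h) * x = x - h by ring] at hconv
  have hstep := log_Gamma_add_one_s7 (x := x - 1) (by linarith)
  rw [sub_add_cancel] at hstep
  rw [hstep] at hconv ⊢
  linarith

lemma log_Gamma_sub_le_mul_log (h0 : 0 ≤ h) (hx : h < x) :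
    log (Gamma x) - log (Gamma (x - h)) ≤ h * log x := by
  rcases h0.eq_or_lt with rfl | h0
  · simp
  have hslope := convexOn_log_Gamma.slope_mono_adjacent (x := x - h) (y := x) (z := x + 1)
    (Set.mem_Ioi.2 (by linarith)) (Set.mem_Ioi.2 (by linarith)) (by linarith) (by linarith)
  simp only [Function.comp_apply] at hslope
  rw [log_Gamma_add_one_s7 (h0.trans hx), sub_sub_cancel, add_sub_cancel_left, add_sub_cancel_left,
    div_one, div_le_iff₀ h0] at hslope
  linarith

/-- The symmetric second difference of `log Γ` at `x` with step `h`. It is the finite-step form of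
`h² ψ'(x)`, where `ψ'` is the trigamma function. -/
noncomputable def logGammaSecondDiff (h x : ℝ) : ℝ :=
  log (Gamma (x + h)) + log (Gamma (x - h)) - 2 * log (Gamma x)

lemma logGammaSecondDiff_add_one (hx : |h| < x) :
    logGammaSecondDiff h (x + 1) = logGammaSecondDiff h x + log (1 - h ^ 2 / x ^ 2) := by
  obtain ⟨hneg, hpos⟩ := abs_lt.1 hx
  have hx0 : 0 < x := (abs_nonneg h).trans_lt hx
  have hadd : 0 < x + h := by linarith
  have hsub : 0 < x - h := by linarith
  have hfactor : 1 - h ^ 2 / x ^ 2 = (x + h) * (x - h) / x ^ 2 := by field_simp; ring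
  rw [hfactor, log_div (by positivity) (by positivity), log_mul hadd.ne' hsub.ne', log_pow,
    logGammaSecondDiff, logGammaSecondDiff, add_right_comm, add_sub_right_comm x 1,
    log_Gamma_add_one_s7 hx0, log_Gamma_add_one_s7 hadd, log_Gamma_add_one_s7 hsub]
  push_cast
  ring

lemma tendsto_log_add_sub_log_add (a b : ℝ) :
    Tendsto (fun x => log (x + a) - log (x + b)) atTop (𝓝 0) := by
  simpa using (tendsto_log_comp_add_sub_log a).sub (tendsto_log_comp_add_sub_log b)

lemma tendsto_logGammaSecondDiff_atTop (h0 : 0 ≤ h) (h1 : h ≤ 1) :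
    Tendsto (logGammaSecondDiff h) atTop (𝓝 0) := by
  have hlower := (tendsto_log_add_sub_log_add (h - 1) 0).const_mul h
  have hupper := (tendsto_log_add_sub_log_add h (-1)).const_mul h
  rw [mul_zero] at hlower hupper
  refine tendsto_of_tendsto_of_tendsto_of_le_of_le' hlower hupper ?_ ?_
  all_goals
    filter_upwards [eventually_gt_atTop 1] with x hx
    have hleft_lower := mul_log_sub_one_le_log_Gamma_sub hx h0 h1
    have hleft_upper := log_Gamma_sub_le_mul_log h0 (h1.trans_lt hx)
    have hright_lower := mul_log_sub_one_le_log_Gamma_sub (x := x + h) (by linarith) h0 h1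
    have hright_upper := log_Gamma_sub_le_mul_log (x := x + h) h0 (by linarith)
    rw [add_sub_cancel_right] at hright_lower hright_upper
    simp only [logGammaSecondDiff, add_zero, ← sub_eq_add_neg, ← add_sub_assoc]
    linarith

lemma nonneg_of_add_one_le_of_tendsto_zero {f : ℝ → ℝ} (hstep : ∀ y ≥ x, f (y + 1) ≤ f y)
    (hlim : Tendsto f atTop (𝓝 0)) : 0 ≤ f x := by
  have hanti : Antitone fun N : ℕ => f (x + N) := antitone_nat_of_succ_le fun N => by
    simpa [add_assoc] using hstep (x + N) (by simp)
  simpa using hanti.le_of_tendsto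
    (hlim.comp (tendsto_atTop_add_const_left _ x tendsto_natCast_atTop_atTop)) 0

lemma tendsto_const_div_sub_atTop (a b : ℝ) : Tendsto (fun x => a / (x - b)) atTop (𝓝 0) :=
  tendsto_const_nhds.div_atTop (tendsto_atTop_add_const_right _ (-b) tendsto_id)

lemma sq_div_le_logGammaSecondDiff (h0 : 0 ≤ h) (h1 : h ≤ 1) (hx : h < x) :
    h ^ 2 / x ≤ logGammaSecondDiff h x := by
  rw [← sub_nonneg]
  refine nonneg_of_add_one_le_of_tendsto_zero (f := fun y => logGammaSecondDiff h y - h ^ 2 / y)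
    (fun y hy => ?_) ?_
  · have hhy : h < y := hx.trans_le hy
    have hy0 : 0 < y := h0.trans_lt hhy
    have hpos : 0 < 1 - h ^ 2 / y ^ 2 := by
      rw [sub_pos, div_lt_one (by positivity)]
      gcongr
    have hlog : log (1 - h ^ 2 / y ^ 2) ≤ -(h ^ 2 / y ^ 2) :=
      (log_le_sub_one_of_pos hpos).trans_eq (by ring)
    have htelescope : h ^ 2 / y - h ^ 2 / (y + 1) = h ^ 2 / (y * (y + 1)) := by field_simp; ring
    have hcompare : h ^ 2 / (y * (y + 1)) ≤ h ^ 2 / y ^ 2 := by gcongr; nlinarith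
    rw [logGammaSecondDiff_add_one (by rwa [abs_of_nonneg h0])]
    linarith
  · simpa using (tendsto_logGammaSecondDiff_atTop h0 h1).sub (tendsto_const_div_sub_atTop (h ^ 2) 0)

-- The shift `1 / 2` makes `(y - 1 / 2) * (y + 1 / 2) ≤ y ^ 2 - h ^ 2`, an equality at `h = 1 / 2`.
lemma logGammaSecondDiff_le_sq_div (h0 : 0 ≤ h) (h1 : h ≤ 1 / 2) (hx : 1 / 2 < x) :
    logGammaSecondDiff h x ≤ h ^ 2 / (x - 1 / 2) := by
  rw [← sub_nonneg]
  refine nonneg_of_add_one_le_of_tendsto_zero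
    (f := fun y => h ^ 2 / (y - 1 / 2) - logGammaSecondDiff h y) (fun y hy => ?_) ?_
  · have hy0 : 0 < y - 1 / 2 := by linarith
    have hhy : 0 < y - h := by linarith
    have hsum : 0 < y + h := by linarith
    have hy1 : 0 < y := by linarith
    have hfactor : 1 - h ^ 2 / y ^ 2 = (y + h) * (y - h) / y ^ 2 := by field_simp; ring
    have hlog : -(h ^ 2 / ((y + h) * (y - h))) ≤ log (1 - h ^ 2 / y ^ 2) := by
      rw [hfactor]
      refine le_trans (le_of_eq ?_) (one_sub_inv_le_log_of_pos (by positivity))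
      field_simp
      ring
    have htelescope : h ^ 2 / (y - 1 / 2) - h ^ 2 / (y + 1 - 1 / 2)
        = h ^ 2 / ((y - 1 / 2) * (y + 1 / 2)) := by
      rw [show y + 1 - 1 / 2 = y + 1 / 2 by ring, div_sub_div _ _ hy0.ne' (by positivity)]
      ring
    have hdenom : (y - 1 / 2) * (y + 1 / 2) ≤ (y + h) * (y - h) := by nlinarith
    have hcompare : h ^ 2 / ((y + h) * (y - h)) ≤ h ^ 2 / ((y - 1 / 2) * (y + 1 / 2)) := by gcongr
    rw [logGammaSecondDiff_add_one (by rw [abs_of_nonneg h0]; linarith)]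
    linarith
  · simpa using (tendsto_const_div_sub_atTop (h ^ 2) (1 / 2)).sub
      (tendsto_logGammaSecondDiff_atTop h0 (h1.trans (by norm_num)))

end LogGamma

section GammaRatioProd

open Real

/-- The product of Gamma ratios in `mu0 p n m`, with `h` for `p / n` and `a` for `m - n`. -/
noncomputable def gammaRatioProd (n : ℕ) (h a : ℝ) : ℝ :=
  ∏ j ∈ range n, Gamma (a + 1 - h + j) / Gamma (a + 1 + j)

variable {n : ℕ} {h a : ℝ}

lemma gammaRatioProd_pos (ha : -1 < a) (hha : h < a + 1) : 0 < gammaRatioProd n h a :=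
  prod_pos fun j _ =>
    div_pos (Gamma_pos_of_pos (by linarith [j.cast_nonneg (α := ℝ)]))
      (Gamma_pos_of_pos (by linarith [j.cast_nonneg (α := ℝ)]))

lemma log_gammaRatioProd (ha : -1 < a) (hha : h < a + 1) :
    log (gammaRatioProd n h a)
      = ∑ j ∈ range n, (log (Gamma (a + 1 + j - h)) - log (Gamma (a + 1 + j))) := by
  have hnum (j : ℕ) : 0 < Gamma (a + 1 + j - h) :=
    Gamma_pos_of_pos (by linarith [j.cast_nonneg (α := ℝ)])
  have hden (j : ℕ) : 0 < Gamma (a + 1 + j) :=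
    Gamma_pos_of_pos (by linarith [j.cast_nonneg (α := ℝ)])
  simp only [gammaRatioProd, sub_add_eq_add_sub]
  rw [log_prod fun j _ => (div_pos (hnum j) (hden j)).ne']
  exact sum_congr rfl fun j _ => log_div (hnum j).ne' (hden j).ne'

lemma log_gammaRatioProd_two_mul (h0 : 0 ≤ h) (hha : 2 * h < a + 1) :
    log (gammaRatioProd n (2 * h) a) - 2 * log (gammaRatioProd n h a)
      = ∑ j ∈ range n, logGammaSecondDiff h (a + 1 + j - h) := by
  rw [log_gammaRatioProd (by linarith) hha, log_gammaRatioProd (by linarith) (by linarith),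
    mul_sum, ← sum_sub_distrib]
  refine sum_congr rfl fun j _ => ?_
  rw [logGammaSecondDiff, sub_add_cancel, sub_sub _ h h, ← two_mul h]
  ring

lemma neg_mul_integral_log_le_log_gammaRatioProd (h0 : 0 ≤ h) (ha : -1 < a) (hha : h < a + 1) :
    -(h * ∫ u in (a + 1)..(a + 1 + n), log u) ≤ log (gammaRatioProd n h a) := by
  have hmono : MonotoneOn log (Set.Icc (a + 1) (a + 1 + n)) :=
    strictMonoOn_log.monotoneOn.mono fun u hu => lt_of_lt_of_le (by linarith) hu.1
  rw [log_gammaRatioProd ha hha]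
  calc -(h * ∫ u in (a + 1)..(a + 1 + n), log u)
      ≤ -(h * ∑ j ∈ range n, log (a + 1 + j)) := by gcongr; exact hmono.sum_le_integral
    _ = ∑ j ∈ range n, -(h * log (a + 1 + j)) := by rw [mul_sum, sum_neg_distrib]
    _ ≤ _ := sum_le_sum fun j _ => by
      have := log_Gamma_sub_le_mul_log (x := a + 1 + j) h0 (by linarith [j.cast_nonneg (α := ℝ)])
      linarith

lemma log_gammaRatioProd_le_neg_mul_integral_log (h0 : 0 ≤ h) (h1 : h ≤ 1) (ha : 1 < a) :
    log (gammaRatioProd n h a) ≤ -(h * ∫ u in (a - 1)..(a - 1 + n), log u) := by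
  have hmono : MonotoneOn log (Set.Icc (a - 1) (a - 1 + n)) :=
    strictMonoOn_log.monotoneOn.mono fun u hu => lt_of_lt_of_le (by linarith) hu.1
  rw [log_gammaRatioProd (by linarith) (by linarith)]
  calc ∑ j ∈ range n, (log (Gamma (a + 1 + j - h)) - log (Gamma (a + 1 + j)))
      ≤ ∑ j ∈ range n, -(h * log (a - 1 + ↑(j + 1))) := sum_le_sum fun j _ => by
        have := mul_log_sub_one_le_log_Gamma_sub (x := a + 1 + j)
          (by linarith [j.cast_nonneg (α := ℝ)]) h0 h1
        rw [show a - 1 + ↑(j + 1) = a + 1 + j - 1 by push_cast; ring]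
        linarith
    _ = -(h * ∑ j ∈ range n, log (a - 1 + ↑(j + 1))) := by rw [mul_sum, sum_neg_distrib]
    _ ≤ _ := by gcongr; exact hmono.integral_le_sum

lemma sq_mul_log_le_log_gammaRatioProd_two_mul (h0 : 0 ≤ h) (h1 : h ≤ 1) (hha : 2 * h < a + 1) :
    h ^ 2 * log ((a + 1 + n) / (a + 1))
      ≤ log (gammaRatioProd n (2 * h) a) - 2 * log (gammaRatioProd n h a) := by
  have ha : 0 < a + 1 := by linarith
  have hanti : AntitoneOn (fun u : ℝ => u⁻¹) (Set.Icc (a + 1) (a + 1 + n)) :=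
    inv_antitoneOn_Icc_right ha
  rw [log_gammaRatioProd_two_mul h0 hha, ← integral_inv_of_pos ha (by positivity)]
  calc h ^ 2 * ∫ u in (a + 1)..(a + 1 + n), u⁻¹
      ≤ h ^ 2 * ∑ j ∈ range n, (a + 1 + j)⁻¹ := by gcongr; exact hanti.integral_le_sum
    _ = ∑ j ∈ range n, h ^ 2 / (a + 1 + j) := by simp only [mul_sum, div_eq_mul_inv]
    _ ≤ _ := sum_le_sum fun j _ => by
      refine le_trans ?_ (sq_div_le_logGammaSecondDiff h0 h1
        (by linarith [j.cast_nonneg (α := ℝ)]))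
      gcongr
      · linarith [j.cast_nonneg (α := ℝ)]
      · linarith

lemma log_gammaRatioProd_two_mul_le_sq_mul_log (h0 : 0 ≤ h) (h1 : h ≤ 1 / 2) (ha : 1 < a) :
    log (gammaRatioProd n (2 * h) a) - 2 * log (gammaRatioProd n h a)
      ≤ h ^ 2 * log ((a - 1 + n) / (a - 1)) := by
  have ha' : 0 < a - 1 := by linarith
  have hanti : AntitoneOn (fun u : ℝ => u⁻¹) (Set.Icc (a - 1) (a - 1 + n)) :=
    inv_antitoneOn_Icc_right ha'
  rw [log_gammaRatioProd_two_mul h0 (by linarith), ← integral_inv_of_pos ha' (by positivity)]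
  calc ∑ j ∈ range n, logGammaSecondDiff h (a + 1 + j - h)
      ≤ ∑ j ∈ range n, h ^ 2 / (a - 1 + ↑(j + 1)) := sum_le_sum fun j _ => by
        refine (logGammaSecondDiff_le_sq_div h0 h1
          (by linarith [j.cast_nonneg (α := ℝ)])).trans ?_
        push_cast
        gcongr
        linarith
    _ = h ^ 2 * ∑ j ∈ range n, (a - 1 + ↑(j + 1))⁻¹ := by simp only [mul_sum, div_eq_mul_inv]
    _ ≤ _ := by gcongr; exact hanti.sum_le_integral

lemma Gamma_eq_sub_one_mul {x : ℝ} (hx : x ≠ 1) : Gamma x = (x - 1) * Gamma (x - 1) := by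
  rw [← Gamma_add_one (sub_ne_zero.2 hx), sub_add_cancel]

variable {m : ℕ}

lemma mu0_one_eq (hmn : 1 < (m : ℝ) * n) :
    mu0 1 n m = (1 - 1 / ((m : ℝ) * n)) * (m * gammaRatioProd n (1 / n) (m - n)) := by
  have hmn0 : (m : ℝ) * n ≠ 0 := by linarith
  have hm := left_ne_zero_of_mul hmn0
  have hn := right_ne_zero_of_mul hmn0
  have hGamma := (Gamma_pos_of_pos (sub_pos.2 hmn)).ne'
  rw [mu0, Nat.cast_one, ← gammaRatioProd, Gamma_eq_sub_one_mul hmn.ne']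
  field_simp

lemma mu0_two_eq (hmn : 2 < (m : ℝ) * n) :
    mu0 2 n m = ((m : ℝ) * n - 1) * (m * n - 2) / n ^ 2 * gammaRatioProd n (2 / n) (m - n) := by
  have hGamma := (Gamma_pos_of_pos (sub_pos.2 hmn)).ne'
  have hprefactor : Gamma ((m : ℝ) * n) = (m * n - 1) * ((m * n - 2) * Gamma (m * n - 2)) := by
    rw [Gamma_eq_sub_one_mul (by linarith), Gamma_eq_sub_one_mul (by linarith), sub_sub]
    norm_num
  rw [mu0, Nat.cast_ofNat, ← gammaRatioProd, hprefactor]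
  field_simp

lemma mu0_two_div_mu0_one_sq (hp : 2 < (n : ℝ) * (m - n + 1)) :
    mu0 2 n m / mu0 1 n m ^ 2 = (1 - 1 / ((m : ℝ) * n - 1)) *
      exp (log (gammaRatioProd n (2 * (1 / n)) (m - n))
        - 2 * log (gammaRatioProd n (1 / n) (m - n))) := by
  have hn0 : (n : ℝ) ≠ 0 := left_ne_zero_of_mul (zero_lt_two.trans hp).ne'
  have hn : (0 : ℝ) < n := n.cast_nonneg.lt_of_ne' hn0
  have hn1 : (1 : ℝ) ≤ n := by exact_mod_cast Nat.cast_pos.1 hn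
  have hmn : 2 < (m : ℝ) * n := by nlinarith
  have hh0 : 0 < 1 / (n : ℝ) := by positivity
  have hh2 : 2 * (1 / (n : ℝ)) < m - n + 1 := by rwa [mul_one_div, div_lt_iff₀' hn]
  have hP₁ : 0 < gammaRatioProd n (1 / n) (m - n) :=
    gammaRatioProd_pos (by linarith) (by linarith)
  have hP₂ : 0 < gammaRatioProd n (2 * (1 / n)) (m - n) :=
    gammaRatioProd_pos (by linarith) hh2
  have hN : (m : ℝ) * n - 1 ≠ 0 := by linarith
  have hm : (m : ℝ) ≠ 0 := left_ne_zero_of_mul (b := (n : ℝ)) (by linarith)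
  rw [mu0_one_eq (by linarith), mu0_two_eq hmn, exp_sub, two_mul (log _), exp_add, exp_log hP₁,
    exp_log hP₂, mul_one_div, one_sub_div hN, one_sub_div (by positivity)]
  field_simp
  ring

end GammaRatioProd

section Limits

open Real

variable {ι : Type*} {l : Filter ι}

lemma tendsto_atTop_of_tendsto_div {x y : ι → ℝ} {c : ℝ} (hc : 0 < c) (hx : Tendsto x l atTop)
    (hxy : Tendsto (fun t => x t / y t) l (𝓝 c)) : Tendsto y l atTop := by
  refine (hx.atTop_mul_pos (inv_pos.2 hc) (hxy.inv₀ hc.ne')).congr' ?_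
  filter_upwards [hx.eventually_ne_atTop 0] with t ht
  rw [inv_div, mul_div_cancel₀ _ ht]

lemma tendsto_sub_add_div {x y : ι → ℝ} {c : ℝ} (hy : Tendsto y l atTop)
    (hxy : Tendsto (fun t => x t / y t) l (𝓝 c)) (s : ℝ) :
    Tendsto (fun t => (y t - x t + s) / y t) l (𝓝 (1 - c)) := by
  have hlim := (hxy.const_sub 1).add (hy.const_div_atTop s)
  rw [add_zero] at hlim
  refine hlim.congr' ?_
  filter_upwards [hy.eventually_ne_atTop 0] with t ht
  field_simp

lemma tendsto_sub_atTop_of_tendsto_div {x y : ι → ℝ} {c : ℝ} (hc : c < 1)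
    (hy : Tendsto y l atTop) (hxy : Tendsto (fun t => x t / y t) l (𝓝 c)) :
    Tendsto (fun t => y t - x t) l atTop := by
  refine ((tendsto_sub_add_div hy hxy 0).pos_mul_atTop (sub_pos.2 hc) hy).congr' ?_
  filter_upwards [hy.eventually_ne_atTop 0] with t ht
  rw [div_mul_cancel₀ _ ht, add_zero]

lemma log_sub_integral_log_div {b x y : ℝ} (hb : b ≠ 0) (hx : x ≠ 0) (hy : y ≠ 0)
    (hbx : b + x ≠ 0) :
    log y - (∫ u in b..(b + x), log u) / x
      = 1 + (negMulLog ((b + x) / y) - negMulLog (b / y)) / (x / y) := by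
  rw [integral_log, negMulLog, negMulLog, log_div hb hy, log_div hbx hy]
  field_simp
  ring

lemma tendsto_log_sub_integral_log_div {b x y : ι → ℝ} {β γ : ℝ} (hβ : β ≠ 0) (hγ : γ ≠ 0)
    (hβγ : β + γ ≠ 0) (hb : Tendsto (fun t => b t / y t) l (𝓝 β))
    (hx : Tendsto (fun t => x t / y t) l (𝓝 γ)) :
    Tendsto (fun t => log (y t) - (∫ u in (b t)..(b t + x t), log u) / x t) l
      (𝓝 (1 + (negMulLog (β + γ) - negMulLog β) / γ)) := by
  have hbx : Tendsto (fun t => (b t + x t) / y t) l (𝓝 (β + γ)) := by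
    simpa only [add_div] using hb.add hx
  have hlim := ((((continuous_negMulLog.tendsto _).comp hbx).sub
    ((continuous_negMulLog.tendsto _).comp hb)).div hx hγ).const_add 1
  refine hlim.congr' ?_
  filter_upwards [hb.eventually_ne hβ, hx.eventually_ne hγ, hbx.eventually_ne hβγ]
    with t hbt hxt hbxt
  exact (log_sub_integral_log_div (div_ne_zero_iff.1 hbt).1 (div_ne_zero_iff.1 hxt).1
    (div_ne_zero_iff.1 hbt).2 (div_ne_zero_iff.1 hbxt).1).symm

lemma tendsto_log_add_div {b x y : ι → ℝ} {β γ : ℝ} (hβ : β ≠ 0) (hβγ : β + γ ≠ 0)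
    (hb : Tendsto (fun t => b t / y t) l (𝓝 β)) (hx : Tendsto (fun t => x t / y t) l (𝓝 γ)) :
    Tendsto (fun t => log ((b t + x t) / b t)) l (𝓝 (log ((β + γ) / β))) := by
  refine (((hb.add hx).div hb hβ).congr' ?_).log (div_ne_zero hβγ hβ)
  filter_upwards [hb.eventually_ne hβ] with t hbt
  rw [Pi.div_apply, ← add_div, div_div_div_cancel_right₀ (div_ne_zero_iff.1 hbt).2]

lemma tendsto_mul_exp_sub_one {r s : ι → ℝ} {L : ℝ} (hr : Tendsto r l atTop)
    (hrs : Tendsto (fun t => r t * s t) l (𝓝 L)) :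
    Tendsto (fun t => r t * (exp (s t) - 1)) l (𝓝 L) := by
  have hs : Tendsto s l (𝓝 0) := (hrs.div_atTop hr).congr' <| by
    filter_upwards [hr.eventually_ne_atTop 0] with t ht
    exact mul_div_cancel_left₀ _ ht
  simpa using (hasDerivAt_exp 0).hasFDerivAt.hasFDerivWithinAt.lim (s := Set.univ) hs
    (.of_forall fun _ => Set.mem_univ _) hrs

variable {n m : ι → ℕ} {c : ℝ}

lemma tendsto_log_add_log_gammaRatioProd (hc : c ∈ Set.Ioo (0 : ℝ) 1)
    (hn : Tendsto (fun t => (n t : ℝ)) l atTop)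
    (hratio : Tendsto (fun t => (n t : ℝ) / (m t : ℝ)) l (𝓝 c)) :
    Tendsto (fun t => log (m t) + log (gammaRatioProd (n t) (1 / n t) (m t - n t))) l
      (𝓝 (1 + (1 - c) / c * log (1 - c))) := by
  have hm := tendsto_atTop_of_tendsto_div hc.1 hn hratio
  have hgap := tendsto_sub_atTop_of_tendsto_div hc.2 hm hratio
  have hmean (s : ℝ) := tendsto_log_sub_integral_log_div (sub_pos.2 hc.2).ne' hc.1.ne' (by simp)
    (tendsto_sub_add_div hm hratio s) hratio
  have hvalue : 1 + (negMulLog (1 - c + c) - negMulLog (1 - c)) / c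
      = 1 + (1 - c) / c * log (1 - c) := by
    rw [sub_add_cancel, negMulLog_one, negMulLog]
    ring
  rw [← hvalue]
  refine tendsto_of_tendsto_of_tendsto_of_le_of_le' (hmean 1) (hmean (-1)) ?_ ?_
  all_goals
    filter_upwards [hn.eventually_ge_atTop 1, hgap.eventually_gt_atTop 1] with t hnt hgt
    have hh0 : 0 ≤ 1 / (n t : ℝ) := by positivity
    have hh1 : 1 / (n t : ℝ) ≤ 1 := div_le_one_of_le₀ hnt (by positivity)
  · have := neg_mul_integral_log_le_log_gammaRatioProd (n := n t) (a := m t - n t) hh0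
      (by linarith) (by linarith)
    rw [one_div_mul_eq_div] at this
    linarith
  · have := log_gammaRatioProd_le_neg_mul_integral_log (n := n t) hh0 hh1 hgt
    rw [one_div_mul_eq_div] at this
    simp only [← sub_eq_add_neg]
    linarith

lemma tendsto_mu0_one (hc : c ∈ Set.Ioo (0 : ℝ) 1) (hn : Tendsto (fun t => (n t : ℝ)) l atTop)
    (hratio : Tendsto (fun t => (n t : ℝ) / (m t : ℝ)) l (𝓝 c)) :
    Tendsto (fun t => mu0 1 (n t) (m t)) l (𝓝 (exp 1 * (1 - c) ^ ((1 - c) / c))) := by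
  have hm := tendsto_atTop_of_tendsto_div hc.1 hn hratio
  have hgap := tendsto_sub_atTop_of_tendsto_div hc.2 hm hratio
  have hmn : Tendsto (fun t => (m t : ℝ) * n t) l atTop := hm.atTop_mul_atTop₀ hn
  have hprefactor : Tendsto (fun t => 1 - 1 / ((m t : ℝ) * n t)) l (𝓝 1) := by
    simpa using (hmn.const_div_atTop 1).const_sub 1
  have hexp := (continuous_exp.tendsto _).comp (tendsto_log_add_log_gammaRatioProd hc hn hratio)
  have hvalue : 1 * exp (1 + (1 - c) / c * log (1 - c)) = exp 1 * (1 - c) ^ ((1 - c) / c) := by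
    rw [one_mul, exp_add, rpow_def_of_pos (sub_pos.2 hc.2), mul_comm (log _)]
  rw [← hvalue]
  refine (hprefactor.mul hexp).congr' ?_
  filter_upwards [hn.eventually_ge_atTop 1, hm.eventually_gt_atTop 0, hmn.eventually_gt_atTop 1,
    hgap.eventually_gt_atTop 1] with t hnt hmt hmnt hgt
  have hh1 : 1 / (n t : ℝ) ≤ 1 := div_le_one_of_le₀ hnt (by positivity)
  rw [Function.comp_apply, exp_add, exp_log hmt,
    exp_log (gammaRatioProd_pos (by linarith) (by linarith)), mu0_one_eq hmnt]

lemma tendsto_sq_mul_log_gammaRatioProd_two_mul (hc : c ∈ Set.Ioo (0 : ℝ) 1)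
    (hn : Tendsto (fun t => (n t : ℝ)) l atTop)
    (hratio : Tendsto (fun t => (n t : ℝ) / (m t : ℝ)) l (𝓝 c)) :
    Tendsto (fun t => (n t : ℝ) ^ 2 * (log (gammaRatioProd (n t) (2 * (1 / n t)) (m t - n t))
      - 2 * log (gammaRatioProd (n t) (1 / n t) (m t - n t)))) l (𝓝 (log (1 / (1 - c)))) := by
  have hm := tendsto_atTop_of_tendsto_div hc.1 hn hratio
  have hgap := tendsto_sub_atTop_of_tendsto_div hc.2 hm hratio
  have hlog (s : ℝ) := tendsto_log_add_div (sub_pos.2 hc.2).ne' (by simp)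
    (tendsto_sub_add_div hm hratio s) hratio
  simp only [sub_add_cancel] at hlog
  refine tendsto_of_tendsto_of_tendsto_of_le_of_le' (hlog 1) (hlog (-1)) ?_ ?_
  all_goals
    filter_upwards [hn.eventually_ge_atTop 2, hgap.eventually_gt_atTop 1] with t hnt hgt
    have hn0 : (0 : ℝ) < n t := by linarith
    have hh0 : 0 ≤ 1 / (n t : ℝ) := by positivity
    have hh1 : 1 / (n t : ℝ) ≤ 1 / 2 := one_div_le_one_div_of_le two_pos hnt
    have hcancel (L : ℝ) : (n t : ℝ) ^ 2 * ((1 / n t) ^ 2 * L) = L := by field_simp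
  · exact (hcancel _).symm.trans_le <| mul_le_mul_of_nonneg_left
      (sq_mul_log_le_log_gammaRatioProd_two_mul hh0 (by linarith) (by linarith)) (sq_nonneg _)
  · refine (mul_le_mul_of_nonneg_left
      (log_gammaRatioProd_two_mul_le_sq_mul_log hh0 hh1 hgt) (sq_nonneg _)).trans_eq ?_
    simp only [hcancel, ← sub_eq_add_neg]

lemma tendsto_sq_mul_mu0_two_div_sub_one (hc : c ∈ Set.Ioo (0 : ℝ) 1)
    (hn : Tendsto (fun t => (n t : ℝ)) l atTop)
    (hratio : Tendsto (fun t => (n t : ℝ) / (m t : ℝ)) l (𝓝 c)) :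
    Tendsto (fun t => (n t : ℝ) ^ 2 * (mu0 2 (n t) (m t) / mu0 1 (n t) (m t) ^ 2 - 1)) l
      (𝓝 (log (1 / (1 - c)) - c)) := by
  have hm := tendsto_atTop_of_tendsto_div hc.1 hn hratio
  have hgap := tendsto_sub_atTop_of_tendsto_div hc.2 hm hratio
  have hmn : Tendsto (fun t => (m t : ℝ) * n t) l atTop := hm.atTop_mul_atTop₀ hn
  have hsq : Tendsto (fun t => (n t : ℝ) ^ 2) l atTop := (tendsto_pow_atTop two_ne_zero).comp hn
  have hexp := tendsto_mul_exp_sub_one hsq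
    (tendsto_sq_mul_log_gammaRatioProd_two_mul hc hn hratio)
  have hδ : Tendsto (fun t => 1 / ((m t : ℝ) * n t - 1)) l (𝓝 0) :=
    (tendsto_const_div_sub_atTop 1 1).comp hmn
  have hlim := ((hδ.const_sub 1).mul hexp).sub (hratio.mul (hδ.const_add 1))
  rw [sub_zero, one_mul, add_zero, mul_one] at hlim
  refine hlim.congr' ?_
  filter_upwards [hn.eventually_ge_atTop 1, hm.eventually_gt_atTop 0, hmn.eventually_gt_atTop 1,
    hgap.eventually_gt_atTop 1] with t hnt hmt hmnt hgt
  have hN : (m t : ℝ) * n t - 1 ≠ 0 := by linarith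
  have hratio_mul : (n t : ℝ) / m t * (1 + 1 / (m t * n t - 1))
      = n t ^ 2 * (1 / (m t * n t - 1)) := by
    rw [one_add_div hN, sub_add_cancel]
    field_simp
  rw [mu0_two_div_mu0_one_sq (by nlinarith), hratio_mul]
  ring

theorem mu0_variance_tendsto_general (hc : c ∈ Set.Ioo (0 : ℝ) 1)
    (hn : Tendsto (fun t => (n t : ℝ)) l atTop)
    (hratio : Tendsto (fun t => (n t : ℝ) / (m t : ℝ)) l (𝓝 c)) :
    Tendsto (fun t => (n t : ℝ) ^ 2 * (mu0 2 (n t) (m t) - mu0 1 (n t) (m t) ^ 2)) l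
      (𝓝 (exp 1 ^ 2 * (1 - c) ^ (2 * (1 - c) / c) * (log (1 / (1 - c)) - c))) := by
  have hpos : 0 < 1 - c := sub_pos.2 hc.2
  have hmean := tendsto_mu0_one hc hn hratio
  have hmean_ne : exp 1 * (1 - c) ^ ((1 - c) / c) ≠ 0 := by positivity
  have hvalue : (exp 1 * (1 - c) ^ ((1 - c) / c)) ^ 2
      = exp 1 ^ 2 * (1 - c) ^ (2 * (1 - c) / c) := by
    rw [mul_pow, ← rpow_mul_natCast hpos.le, Nat.cast_ofNat, mul_comm (_ / c), mul_div_assoc]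
  rw [← hvalue]
  refine ((hmean.pow 2).mul (tendsto_sq_mul_mu0_two_div_sub_one hc hn hratio)).congr' ?_
  filter_upwards [hmean.eventually_ne hmean_ne] with t ht
  field_simp

end Limits

/-- limit of `n²` times the variance (second cumulant) of the GLRT
statistic under `H₀` when `n → ∞` and `n/m → c̄ ∈ (0,1)`. -/
theorem mu0_variance_tendsto (n m : ℕ → ℕ) (hn0 : ∀ t, 0 < n t) (hnm : ∀ t, n t ≤ m t)
    (hn : Tendsto (fun t => (n t : ℝ)) atTop atTop)
    (c : ℝ) (hc : c ∈ Set.Ioo (0 : ℝ) 1)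
    (hratio : Tendsto (fun t => (n t : ℝ) / (m t : ℝ)) atTop (𝓝 c)) :
    Tendsto (fun t => (n t : ℝ) ^ 2 * (mu0 2 (n t) (m t) - (mu0 1 (n t) (m t)) ^ 2)) atTop
      (𝓝 (Real.exp 1 ^ 2 * (1 - c) ^ (2 * (1 - c) / c) * (Real.log (1 / (1 - c)) - c))) :=
  mu0_variance_tendsto_general hc hn hratio
end

section
/- Let (n_t) and (m_t) be sequences of positive integers with n_t ≤ m_t, n_t → ∞, and n_t/m_t → c̄ ∈ (0,1) as t → ∞. Write μ(p) = μ0(p, n_t, m_t) and κ3 = μ(3) − 3μ(2)μ(1) + 2μ(1)³. Then n_t⁴·κ3 → −e³·(1−c̄)^{3(1−c̄)/c̄ − 1}·( c̄²(2c̄−3) − 6c̄(1−c̄)·ln(1−c̄) − 3(1−c̄)·(ln(1−c̄))² ) as t → ∞. -/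
open Finset Filter Topology

/-!
Let `L` be the logarithm of `p ↦ mu0 p n m`, with `p` real, and let `Δ` be the forward difference of
step `1` at `0`. Since `L 0 = 0`, the third cumulant is
`exp (3 ΔL) * (exp (3 Δ²L + Δ³L) - 3 * exp (Δ²L) + 2)`. As `Δ²L` and `Δ³L` are of order `n⁻²` and
`n⁻⁴`, expanding the exponentials gives the limit `exp (3 λ₁) * (λ₃ + 3 * λ₂ ^ 2)`, where `ΔL → λ₁`,
`n² Δ²L → λ₂` and `n⁴ Δ³L → λ₃`.

These differences are sums of differences of `log Γ` of step `1 / n`. Divided by the power of the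
step, the alternating differences `(-1) ^ k * Δ ^ (k + 1)` of `log Γ` increase when the sampled
interval moves to the right of itself, whatever the two steps are. So the step `1 / n` can be traded
for the step `1`, at the price of a bounded shift of the base point; there
`log Γ (x + 1) - log Γ x = log x` turns them into differences of `log`, whose sums telescope.
-/

open scoped fwdDiff Nat

lemma fwdDiff_iter_comp_sub_mul {R A : Type*} [CommRing R] [AddCommGroup A] (f : R → A) (x h : R)
    (k : ℕ) (p : R) :
    Δ_[1] ^[k] (fun q ↦ f (x - q * h)) p = (-1 : ℤ) ^ k • Δ_[h] ^[k] f (x - (p + k) * h) := by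
  induction k generalizing p with
  | zero => simp
  | succ k ih =>
    rw [Function.iterate_succ_apply', Function.iterate_succ_apply', fwdDiff, ih, ih, fwdDiff,
      pow_succ, mul_neg_one, neg_smul, ← smul_neg, ← smul_sub, neg_sub]
    push_cast
    congr 3 <;> ring_nf

lemma fwdDiff_iter_succ_mul_add_const {R : Type*} [CommRing R] (a b h x : R) (k : ℕ) :
    Δ_[h] ^[k + 1] (fun y ↦ y * a + b) x = h ^ (k + 1) * if k = 0 then a else 0 := by
  have first : Δ_[h] (fun y ↦ y * a + b) = fun _ ↦ h * a := by ext y; simp only [fwdDiff]; ring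
  cases k with
  | zero => simp [first]
  | succ k =>
    rw [Function.iterate_succ_apply, Function.iterate_succ_apply, first, fwdDiff_const,
      fwdDiff_iter_eq_sum_shift]
    simp

lemma sum_range_fwdDiff_iter_succ {R A : Type*} [Semiring R] [AddCommGroup A] (f : R → A) (x : R)
    (k n : ℕ) :
    ∑ j ∈ range n, Δ_[1] ^[k + 1] f (x + j) = Δ_[1] ^[k] f (x + n) - Δ_[1] ^[k] f x := by
  have step (j : ℕ) : Δ_[1] ^[k + 1] f (x + j) =
      Δ_[1] ^[k] f (x + (j + 1 : ℕ)) - Δ_[1] ^[k] f (x + j) := by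
    rw [Function.iterate_succ_apply', fwdDiff, Nat.cast_succ, add_assoc]
  simp only [step, sum_range_sub (fun j : ℕ ↦ Δ_[1] ^[k] f (x + j)), Nat.cast_zero, add_zero]

lemma tendsto_fwdDiff_iter {ι M A : Type*} [AddCommMonoid M] [AddCommGroup A]
    [TopologicalSpace A] [IsTopologicalAddGroup A] {l : Filter ι} {F : ι → M → A} {f : M → A}
    {h x : M} {k : ℕ} (hF : ∀ i ≤ k, Tendsto (F · (x + i • h)) l (𝓝 (f (x + i • h)))) :
    Tendsto (fun t ↦ Δ_[h] ^[k] (F t) x) l (𝓝 (Δ_[h] ^[k] f x)) := by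
  simp only [fwdDiff_iter_eq_sum_shift]
  exact tendsto_finsetSum _ fun i hi ↦ (hF i (mem_range_succ_iff.1 hi)).const_smul _

lemma hasDerivAt_fwdDiff_iter {𝕜 F : Type*} [NontriviallyNormedField 𝕜] [NormedAddCommGroup F]
    [NormedSpace 𝕜 F] {f : 𝕜 → F} {h x : 𝕜} {k : ℕ}
    (hf : ∀ i ≤ k, DifferentiableAt 𝕜 f (x + i * h)) :
    HasDerivAt (Δ_[h] ^[k] f) (Δ_[h] ^[k] (deriv f) x) x := by
  have expand (g : 𝕜 → F) : Δ_[h] ^[k] g = fun y ↦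
      ∑ i ∈ range (k + 1), ((-1 : ℤ) ^ (k - i) * k.choose i) • g (y + i * h) := by
    ext y; simp only [fwdDiff_iter_eq_sum_shift, nsmul_eq_mul]
  rw [expand, expand]
  exact HasDerivAt.fun_sum fun i hi ↦
    ((hf i (mem_range_succ_iff.1 hi)).hasDerivAt.comp_add_const x _).fun_const_smul _

lemma exists_fwdDiff_iter_eq_pow_mul_iteratedDeriv {f : ℝ → ℝ} {h x : ℝ} (h_pos : 0 < h) (k : ℕ)
    (hf : ∀ y ∈ Set.Icc x (x + k * h), ContDiffAt ℝ k f y) :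
    ∃ ξ ∈ Set.Icc x (x + k * h), Δ_[h] ^[k] f x = h ^ k * iteratedDeriv k f ξ := by
  induction k generalizing f x with
  | zero => exact ⟨x, by simp, by simp⟩
  | succ k ih =>
    push_cast at hf ⊢
    have hderiv (y) (hy : y ∈ Set.Icc x (x + h)) :
        HasDerivAt (Δ_[h] ^[k] f) (Δ_[h] ^[k] (deriv f) y) y := by
      refine hasDerivAt_fwdDiff_iter fun i hi ↦ (hf _ ⟨?_, ?_⟩).differentiableAt (by simp)
      · have : 0 ≤ i * h := by positivity
        linarith [hy.1]
      · have : i * h ≤ k * h := by gcongr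
        linarith [hy.2]
    obtain ⟨η, hη, slope⟩ := exists_hasDerivAt_eq_slope _ _ (lt_add_of_pos_right x h_pos)
      (fun y hy ↦ (hderiv y hy).continuousAt.continuousWithinAt)
      (fun y hy ↦ hderiv y (Set.Ioo_subset_Icc_self hy))
    have subset : Set.Icc η (η + k * h) ⊆ Set.Icc x (x + (k + 1) * h) :=
      Set.Icc_subset_Icc hη.1.le (by linarith [hη.2])
    obtain ⟨ξ, hξ, eq⟩ := ih (f := deriv f) (x := η) fun y hy ↦
      (hf y (subset hy)).derivWithin le_rfl
    refine ⟨ξ, subset hξ, ?_⟩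
    rw [Function.iterate_succ_apply', fwdDiff, iteratedDeriv_succ', pow_succ', mul_assoc, ← eq,
      slope, add_sub_cancel_left, mul_div_cancel₀ _ h_pos.ne']

lemma iteratedDeriv_succ_real_log (k : ℕ) (x : ℝ) :
    iteratedDeriv (k + 1) Real.log x = (-1) ^ k * (k ! / x ^ (k + 1)) := by
  rw [iteratedDeriv_succ', Real.deriv_log', iteratedDeriv_eq_iterate, iter_deriv_inv,
    show (-1 - k : ℤ) = -((k + 1 : ℕ) : ℤ) by push_cast; ring, zpow_neg, zpow_natCast, mul_assoc,
    div_eq_mul_inv]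

lemma fwdDiff_iter_succ_log_mem_Icc {h x : ℝ} (h_pos : 0 < h) (x_pos : 0 < x) (k : ℕ) :
    (-1) ^ k * Δ_[h] ^[k + 1] Real.log x ∈
      Set.Icc (h ^ (k + 1) * (k ! / (x + (k + 1) * h) ^ (k + 1)))
        (h ^ (k + 1) * (k ! / x ^ (k + 1))) := by
  obtain ⟨ξ, ⟨x_le_ξ, ξ_le⟩, eq⟩ := exists_fwdDiff_iter_eq_pow_mul_iteratedDeriv (f := Real.log)
    h_pos (k + 1) fun y hy ↦ Real.contDiffAt_log.2 (x_pos.trans_le hy.1).ne'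
  push_cast at ξ_le
  have ξ_pos := x_pos.trans_le x_le_ξ
  rw [eq, iteratedDeriv_succ_real_log, mul_left_comm, ← mul_assoc ((-1) ^ k), ← mul_pow,
    neg_one_mul, neg_neg, one_pow, one_mul]
  constructor <;> gcongr

lemma fwdDiff_iter_succ_log_div_pow_antitone {h h' x y : ℝ} (h_pos : 0 < h) (h'_pos : 0 < h')
    (x_pos : 0 < x) (k : ℕ) (hxy : x + (k + 1) * h ≤ y) :
    (-1) ^ k * Δ_[h'] ^[k + 1] Real.log y / h' ^ (k + 1) ≤
      (-1) ^ k * Δ_[h] ^[k + 1] Real.log x / h ^ (k + 1) := by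
  have end_pos : 0 < x + (k + 1) * h := by positivity
  calc (-1) ^ k * Δ_[h'] ^[k + 1] Real.log y / h' ^ (k + 1)
      ≤ k ! / y ^ (k + 1) := by
        rw [div_le_iff₀' (by positivity)]
        exact (fwdDiff_iter_succ_log_mem_Icc h'_pos (end_pos.trans_le hxy) k).2
    _ ≤ k ! / (x + (k + 1) * h) ^ (k + 1) := by gcongr
    _ ≤ (-1) ^ k * Δ_[h] ^[k + 1] Real.log x / h ^ (k + 1) := by
        rw [le_div_iff₀' (by positivity)]
        exact (fwdDiff_iter_succ_log_mem_Icc h_pos x_pos k).1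

lemma fwdDiff_iter_succ_logGammaSeq_div_pow {h : ℝ} (h_ne : h ≠ 0) (x : ℝ) (k n : ℕ) :
    (-1) ^ k * Δ_[h] ^[k + 1] (Real.BohrMollerup.logGammaSeq · n) x / h ^ (k + 1) =
      (-1) ^ k * (if k = 0 then Real.log n else 0) -
        ∑ m ∈ range (n + 1), (-1) ^ k * Δ_[h] ^[k + 1] Real.log (x + m) / h ^ (k + 1) := by
  have split : (Real.BohrMollerup.logGammaSeq · n) = (fun y ↦ y * Real.log n + Real.log n !) +
      (-1 : ℝ) • ∑ m ∈ range (n + 1), fun y ↦ Real.log (y + m) := by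
    ext y
    simp [Real.BohrMollerup.logGammaSeq, sub_eq_add_neg]
  rw [split, fwdDiff_iter_add, fwdDiff_iter_const_smul, fwdDiff_iter_finsetSum, Pi.add_apply,
    fwdDiff_iter_succ_mul_add_const, Pi.smul_apply, Finset.sum_apply, ← Finset.sum_div,
    ← Finset.mul_sum]
  simp only [fwdDiff_iter_comp_add]
  field_simp
  ring

lemma fwdDiff_iter_succ_log_Gamma_div_pow_monotone {h h' x y : ℝ} (h_pos : 0 < h) (h'_pos : 0 < h')
    (x_pos : 0 < x) (k : ℕ) (hxy : x + (k + 1) * h ≤ y) :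
    (-1) ^ k * Δ_[h] ^[k + 1] (fun z ↦ Real.log (Real.Gamma z)) x / h ^ (k + 1) ≤
      (-1) ^ k * Δ_[h'] ^[k + 1] (fun z ↦ Real.log (Real.Gamma z)) y / h' ^ (k + 1) := by
  have y_pos : 0 < y := lt_of_lt_of_le (by positivity) hxy
  have tendsto_seq {s z : ℝ} (s_pos : 0 < s) (z_pos : 0 < z) : Tendsto
      (fun n ↦ (-1) ^ k * Δ_[s] ^[k + 1] (Real.BohrMollerup.logGammaSeq · n) z / s ^ (k + 1)) atTop
      (𝓝 ((-1) ^ k * Δ_[s] ^[k + 1] (fun z ↦ Real.log (Real.Gamma z)) z / s ^ (k + 1))) :=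
    ((tendsto_fwdDiff_iter fun i _ ↦ Real.BohrMollerup.tendsto_log_gamma
      (by positivity)).const_mul _).div_const _
  refine le_of_tendsto_of_tendsto' (tendsto_seq h_pos x_pos) (tendsto_seq h'_pos y_pos) fun n ↦ ?_
  rw [fwdDiff_iter_succ_logGammaSeq_div_pow h_pos.ne', fwdDiff_iter_succ_logGammaSeq_div_pow
    h'_pos.ne']
  exact sub_le_sub_left (Finset.sum_le_sum fun m _ ↦ fwdDiff_iter_succ_log_div_pow_antitone
    h_pos h'_pos (by positivity) k (by linarith)) _

lemma fwdDiff_one_iter_succ_log_Gamma {x : ℝ} (x_pos : 0 < x) (k : ℕ) :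
    Δ_[1] ^[k + 1] (fun z ↦ Real.log (Real.Gamma z)) x = Δ_[1] ^[k] Real.log x := by
  rw [Function.iterate_succ_apply]
  simp only [fwdDiff_iter_eq_sum_shift]
  refine Finset.sum_congr rfl fun i _ ↦ ?_
  have shift_pos : 0 < x + i • (1 : ℝ) := by positivity
  rw [fwdDiff, Real.Gamma_add_one shift_pos.ne',
    Real.log_mul shift_pos.ne' (Real.Gamma_pos_of_pos shift_pos).ne', add_sub_cancel_right]

lemma fwdDiff_iter_succ_log_Gamma_mem_Icc {h x : ℝ} {k : ℕ} (hh : h ∈ Set.Ioc 0 1)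
    (hx : 2 * (k + 1) < x) :
    (-1) ^ k * Δ_[h] ^[k + 1] (fun z ↦ Real.log (Real.Gamma z)) (x - (k + 1) * h) / h ^ (k + 1) ∈
      Set.Icc ((-1) ^ k * Δ_[1] ^[k] Real.log (x - 2 * (k + 1)))
        ((-1) ^ k * Δ_[1] ^[k] Real.log x) := by
  have shift_le : (k + 1) * h ≤ k + 1 := mul_le_of_le_one_right (by positivity) hh.2
  have : (0 : ℝ) ≤ k := k.cast_nonneg
  have lower := fwdDiff_iter_succ_log_Gamma_div_pow_monotone (x := x - 2 * (k + 1))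
    (y := x - (k + 1) * h) one_pos hh.1 (by linarith) k (by linarith)
  have upper := fwdDiff_iter_succ_log_Gamma_div_pow_monotone (x := x - (k + 1) * h) (y := x)
    hh.1 one_pos (by linarith) k (by linarith)
  rw [fwdDiff_one_iter_succ_log_Gamma (by linarith), one_pow, div_one] at lower upper
  exact ⟨lower, upper⟩

lemma sum_range_log_mem_Icc {y : ℝ} (hy : 1 < y) (n : ℕ) :
    ∑ j ∈ range n, Real.log (y + j) ∈
      Set.Icc (∫ z in (y - 1)..(y - 1 + n), Real.log z) (∫ z in y..(y + n), Real.log z) := by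
  have log_monotoneOn {a b : ℝ} (ha : 0 < a) : MonotoneOn Real.log (Set.Icc a b) :=
    Real.strictMonoOn_log.monotoneOn.mono fun z hz ↦ ha.trans_le hz.1
  refine ⟨?_, (log_monotoneOn (by linarith)).sum_le_integral⟩
  simpa only [Nat.cast_succ, sub_add_add_cancel] using
    (log_monotoneOn (sub_pos.2 hy)).integral_le_sum (a := n)

section

variable {ι : Type*} {l : Filter ι}

lemma tendsto_sq_mul_exp_sub_one_sub_id {r y : ι → ℝ} {b : ℝ} (hr : Tendsto r l atTop)
    (hy : Tendsto (fun t ↦ r t * y t) l (𝓝 b)) :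
    Tendsto (fun t ↦ r t ^ 2 * (Real.exp (y t) - 1 - y t)) l (𝓝 (b ^ 2 / 2)) := by
  have y_tendsto : Tendsto y l (𝓝 0) := by
    refine (hy.div_atTop hr).congr' ?_
    filter_upwards [hr.eventually_ne_atTop 0] with t ht using mul_div_cancel_left₀ _ ht
  have remainder : Tendsto (fun t ↦ r t ^ 2 * (Real.exp (y t) - (1 + y t + y t ^ 2 / 2))) l
      (𝓝 0) := by
    have taylor : (fun t ↦ Real.exp (y t) - (1 + y t + y t ^ 2 / 2)) =o[l] fun t ↦ y t ^ 2 := by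
      simpa [Function.comp_def, sum_range_succ] using
        (Real.exp_sub_sum_range_succ_isLittleO_pow 2).comp_tendsto y_tendsto
    refine (Asymptotics.isLittleO_one_iff ℝ).1 ?_
    refine ((Asymptotics.isBigO_refl (fun t ↦ r t ^ 2) l).mul_isLittleO taylor).trans_isBigO ?_
    simpa only [mul_pow] using (hy.pow 2).isBigO_one ℝ
  convert remainder.add ((hy.pow 2).div_const 2) using 2 <;> ring

lemma tendsto_sq_mul_exp_three_mul_add_sub {r g k : ι → ℝ} {b d : ℝ} (hr : Tendsto r l atTop)
    (hg : Tendsto (fun t ↦ r t * g t) l (𝓝 b)) (hk : Tendsto (fun t ↦ r t ^ 2 * k t) l (𝓝 d)) :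
    Tendsto (fun t ↦ r t ^ 2 * (Real.exp (3 * g t + k t) - 3 * Real.exp (g t) + 2)) l
      (𝓝 (d + 3 * b ^ 2)) := by
  have rk_tendsto : Tendsto (fun t ↦ r t * k t) l (𝓝 0) := by
    refine (hk.div_atTop hr).congr' ?_
    filter_upwards [hr.eventually_ne_atTop 0] with t ht
    field_simp
  have exponent : Tendsto (fun t ↦ r t * (3 * g t + k t)) l (𝓝 (3 * b)) := by
    convert (hg.const_mul 3).add rk_tendsto using 2 <;> ring
  convert ((tendsto_sq_mul_exp_sub_one_sub_id hr exponent).sub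
    ((tendsto_sq_mul_exp_sub_one_sub_id hr hg).const_mul 3)).add hk using 2 <;> ring

variable {s x : ι → ℝ} {ρ : ℝ}

lemma tendsto_add_const_div (hs : Tendsto s l atTop) (hx : Tendsto (fun t ↦ x t / s t) l (𝓝 ρ))
    (b : ℝ) : Tendsto (fun t ↦ (x t + b) / s t) l (𝓝 ρ) := by
  simpa only [add_div, add_zero] using hx.add (hs.const_div_atTop b)

lemma tendsto_log_sub_log (hρ : ρ ≠ 0) (hx : Tendsto (fun t ↦ x t / s t) l (𝓝 ρ)) :
    Tendsto (fun t ↦ Real.log (x t) - Real.log (s t)) l (𝓝 (Real.log ρ)) := by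
  refine (hx.log hρ).congr' ?_
  filter_upwards [hx.eventually_ne hρ] with t ht
  obtain ⟨x_ne, s_ne⟩ := div_ne_zero_iff.1 ht
  exact Real.log_div x_ne s_ne

lemma tendsto_atTop_of_tendsto_div_s8 (hs : Tendsto s l atTop) (hρ : 0 < ρ)
    (hx : Tendsto (fun t ↦ x t / s t) l (𝓝 ρ)) : Tendsto x l atTop := by
  refine (hx.pos_mul_atTop hρ hs).congr' ?_
  filter_upwards [hs.eventually_ne_atTop 0] with t ht using div_mul_cancel₀ _ ht

lemma tendsto_pow_mul_fwdDiff_iter_succ_log (hs : Tendsto s l atTop) (hρ : 0 < ρ)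
    (hx : Tendsto (fun t ↦ x t / s t) l (𝓝 ρ)) (k : ℕ) :
    Tendsto (fun t ↦ s t ^ (k + 1) * ((-1) ^ k * Δ_[1] ^[k + 1] Real.log (x t))) l
      (𝓝 (k ! / ρ ^ (k + 1))) := by
  have bound (b : ℝ) : Tendsto (fun t ↦ k ! / ((x t + b) / s t) ^ (k + 1)) l
      (𝓝 (k ! / ρ ^ (k + 1))) :=
    tendsto_const_nhds.div ((tendsto_add_const_div hs hx b).pow _) (by positivity)
  have sandwich : ∀ᶠ t in l, s t ^ (k + 1) * ((-1) ^ k * Δ_[1] ^[k + 1] Real.log (x t)) ∈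
      Set.Icc (k ! / ((x t + (k + 1)) / s t) ^ (k + 1)) (k ! / ((x t + 0) / s t) ^ (k + 1)) := by
    filter_upwards [hs.eventually_gt_atTop 0,
      (tendsto_atTop_of_tendsto_div_s8 hs hρ hx).eventually_gt_atTop 0] with t s_pos x_pos
    obtain ⟨lower, upper⟩ := fwdDiff_iter_succ_log_mem_Icc one_pos x_pos k
    rw [one_pow, one_mul] at lower upper
    rw [mul_one] at lower
    rw [div_pow, div_pow, div_div_eq_mul_div, div_div_eq_mul_div, mul_comm (k ! : ℝ),
      mul_div_assoc, mul_div_assoc, add_zero]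
    exact ⟨by gcongr, by gcongr⟩
  exact tendsto_of_tendsto_of_tendsto_of_le_of_le' (bound (k + 1)) (bound 0)
    (sandwich.mono fun _ ↦ And.left) (sandwich.mono fun _ ↦ And.right)

end

section

variable {ι : Type*} {l : Filter ι} {n : ι → ℕ} {y : ι → ℝ} {α : ℝ}

lemma tendsto_log_sub_integral_log_div_s8 (hn : Tendsto (fun t ↦ (n t : ℝ)) l atTop) (hα : 0 < α)
    (hy : Tendsto (fun t ↦ y t / n t) l (𝓝 α)) :
    Tendsto (fun t ↦ Real.log (n t) - (∫ z in (y t)..(y t + n t), Real.log z) / n t) l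
      (𝓝 (1 + α * Real.log α - (α + 1) * Real.log (α + 1))) := by
  have hyn : Tendsto (fun t ↦ (y t + n t) / n t) l (𝓝 (α + 1)) := by
    refine (hy.add_const 1).congr' ?_
    filter_upwards [hn.eventually_ne_atTop 0] with t ht
    rw [add_div, div_self ht]
  have rescaled := ((hy.mul (tendsto_log_sub_log hα.ne' hy)).const_add 1).sub
    (hyn.mul (tendsto_log_sub_log (by positivity) hyn))
  refine rescaled.congr' ?_
  filter_upwards [hn.eventually_ne_atTop 0] with t ht
  rw [integral_log]
  field_simp
  ring

lemma tendsto_log_sub_sum_range_log_div (hn : Tendsto (fun t ↦ (n t : ℝ)) l atTop) (hα : 0 < α)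
    (hy : Tendsto (fun t ↦ y t / n t) l (𝓝 α)) :
    Tendsto (fun t ↦ Real.log (n t) - (∑ j ∈ range (n t), Real.log (y t + j)) / n t) l
      (𝓝 (1 + α * Real.log α - (α + 1) * Real.log (α + 1))) := by
  have sandwich := (tendsto_atTop_of_tendsto_div_s8 hn hα hy).eventually_gt_atTop 1 |>.mono
    fun t ht ↦ sum_range_log_mem_Icc ht (n t)
  refine tendsto_of_tendsto_of_tendsto_of_le_of_le' (tendsto_log_sub_integral_log_div_s8 hn hα hy)
    (tendsto_log_sub_integral_log_div_s8 hn hα (tendsto_add_const_div hn hy (-1)))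
    (sandwich.mono fun t ht ↦ ?_) (sandwich.mono fun t ht ↦ ?_)
  · gcongr
    exact ht.2
  · gcongr
    exact ht.1

end

section

variable {ι : Type*} {l : Filter ι} {n : ι → ℕ} {h r u x : ι → ℝ} {k : ℕ} {L : ℝ}

lemma tendsto_sub_mul_sum_fwdDiff_log_Gamma_of_fwdDiff_log (hx : Tendsto x l atTop)
    (hh : ∀ᶠ t in l, h t ∈ Set.Ioc 0 1) (hr : ∀ᶠ t in l, 0 ≤ r t)
    (hL : ∀ b : ℝ, Tendsto (fun t ↦ u t - r t * h t ^ (k + 1) *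
      ∑ j ∈ range (n t), (-1) ^ k * Δ_[1] ^[k] Real.log (x t + b + j)) l (𝓝 L)) :
    Tendsto (fun t ↦ u t - r t * ∑ j ∈ range (n t), (-1) ^ k *
      Δ_[h t] ^[k + 1] (fun z ↦ Real.log (Real.Gamma z)) (x t + j - (k + 1) * h t)) l (𝓝 L) := by
  have sandwich : ∀ᶠ t in l, r t * ∑ j ∈ range (n t), (-1) ^ k *
      Δ_[h t] ^[k + 1] (fun z ↦ Real.log (Real.Gamma z)) (x t + j - (k + 1) * h t) ∈ Set.Icc
        (r t * h t ^ (k + 1) * ∑ j ∈ range (n t), (-1) ^ k *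
          Δ_[1] ^[k] Real.log (x t + -(2 * (k + 1)) + j))
        (r t * h t ^ (k + 1) * ∑ j ∈ range (n t), (-1) ^ k *
          Δ_[1] ^[k] Real.log (x t + 0 + j)) := by
    filter_upwards [hx.eventually_gt_atTop (2 * (k + 1)), hh, hr] with t x_gt h_mem r_nonneg
    have h_pow_pos : 0 < h t ^ (k + 1) := pow_pos h_mem.1 _
    have term (j : ℕ) := fwdDiff_iter_succ_log_Gamma_mem_Icc (k := k) h_mem
      (x_gt.trans_le (le_add_of_nonneg_right (j.cast_nonneg : (0 : ℝ) ≤ j)))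
    simp only [mul_assoc (r t), Finset.mul_sum (a := h t ^ (k + 1)), ← sub_eq_add_neg,
      sub_add_eq_add_sub, add_zero]
    exact ⟨mul_le_mul_of_nonneg_left
        (Finset.sum_le_sum fun j _ ↦ (le_div_iff₀' h_pow_pos).1 (term j).1) r_nonneg,
      mul_le_mul_of_nonneg_left
        (Finset.sum_le_sum fun j _ ↦ (div_le_iff₀' h_pow_pos).1 (term j).2) r_nonneg⟩
  exact tendsto_of_tendsto_of_tendsto_of_le_of_le' (hL 0) (hL (-(2 * (k + 1))))
    (sandwich.mono fun _ ht ↦ sub_le_sub_left ht.2 _)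
    (sandwich.mono fun _ ht ↦ sub_le_sub_left ht.1 _)

end

lemma third_cumulant_exp_eq {L : ℝ → ℝ} (hL : L 0 = 0) :
    Real.exp (L 3) - 3 * Real.exp (L 2) * Real.exp (L 1) + 2 * Real.exp (L 1) ^ 3 =
      Real.exp (3 * Δ_[1] ^[1] L 0) *
        (Real.exp (3 * Δ_[1] ^[2] L 0 + Δ_[1] ^[3] L 0) - 3 * Real.exp (Δ_[1] ^[2] L 0) + 2) := by
  have diff_one : Δ_[1] ^[1] L 0 = L 1 := by simp [fwdDiff, hL]
  have diff_two : Δ_[1] ^[2] L 0 = L 2 - 2 * L 1 := by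
    simp only [Function.iterate_succ, Function.iterate_zero, id_eq, Function.comp_apply, fwdDiff,
      zero_add, one_add_one_eq_two, hL, sub_zero]
    ring
  have diff_three : Δ_[1] ^[3] L 0 = L 3 - 3 * L 2 + 3 * L 1 := by
    simp only [Function.iterate_succ, Function.iterate_zero, id_eq, Function.comp_apply, fwdDiff,
      zero_add, one_add_one_eq_two, two_add_one_eq_three, hL, sub_zero]
    ring
  rw [diff_one, diff_two, diff_three, mul_add, mul_sub, mul_left_comm, ← Real.exp_add,
    ← Real.exp_add, mul_assoc, ← Real.exp_add, ← Real.exp_nat_mul]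
  push_cast
  ring_nf

/-- The logarithm of `p ↦ mu0 p n m`, extended to real `p`. -/
noncomputable def logMu0 (n m : ℕ) (p : ℝ) : ℝ :=
  Real.log (Real.Gamma (m * n)) - Real.log (Real.Gamma (m * n - p)) - p * Real.log n +
    ∑ j ∈ range n, (Real.log (Real.Gamma (m - n + 1 + j - p / n)) -
      Real.log (Real.Gamma (m - n + 1 + j)))

lemma logMu0_zero (n m : ℕ) : logMu0 n m 0 = 0 := by simp [logMu0]

lemma exp_logMu0 {p n m : ℕ} (hp : (p : ℝ) < n * (m - n + 1)) :
    Real.exp (logMu0 n m p) = mu0 p n m := by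
  have n_pos : (0 : ℝ) < n := by
    refine n.cast_nonneg.lt_of_ne fun h ↦ ?_
    rw [← h, zero_mul] at hp
    exact hp.not_ge p.cast_nonneg
  have one_le_n : (1 : ℝ) ≤ n := mod_cast n_pos
  have p_nonneg : (0 : ℝ) ≤ p := p.cast_nonneg
  have a_pos : (0 : ℝ) < m - n + 1 := pos_of_mul_pos_right (p_nonneg.trans_lt hp) n_pos.le
  have shift_pos : (0 : ℝ) < m - n + 1 - p / n := sub_pos.2 ((div_lt_iff₀' n_pos).2 hp)
  have p_lt : (p : ℝ) < m * n := by nlinarith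
  have exp_log_Gamma {x : ℝ} (hx : 0 < x) : Real.exp (Real.log (Real.Gamma x)) = Real.Gamma x :=
    Real.exp_log (Real.Gamma_pos_of_pos hx)
  rw [logMu0, mu0, Real.exp_add, Real.exp_sub, Real.exp_sub, Real.exp_sum, Real.exp_nat_mul,
    Real.exp_log n_pos, exp_log_Gamma (by linarith), exp_log_Gamma (by linarith), div_div,
    mul_comm (Real.Gamma _) (_ ^ p)]
  congr 1
  refine Finset.prod_congr rfl fun j _ ↦ ?_
  rw [Real.exp_sub, add_sub_right_comm, exp_log_Gamma (by positivity),
    exp_log_Gamma (by positivity)]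

lemma fwdDiff_iter_succ_logMu0 {n m k : ℕ} (hk : (k + 1 : ℝ) < m * n) :
    Δ_[1] ^[k + 1] (logMu0 n m) 0 =
      (-1) ^ k * Δ_[1] ^[k] Real.log (m * n - (k + 1)) - (if k = 0 then Real.log n else 0) -
        ∑ j ∈ range n, (-1) ^ k * Δ_[(n : ℝ)⁻¹] ^[k + 1] (fun z ↦ Real.log (Real.Gamma z))
          (m - n + 1 + j - (k + 1) * (n : ℝ)⁻¹) := by
  have split : logMu0 n m = (fun p ↦ p * -Real.log n + (Real.log (Real.Gamma (m * n)) -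
      ∑ j ∈ range n, Real.log (Real.Gamma (m - n + 1 + j)))) +
      ((-1 : ℝ) • (fun p ↦ Real.log (Real.Gamma (m * n - p * 1))) +
        ∑ j ∈ range n, fun p ↦ Real.log (Real.Gamma (m - n + 1 + j - p * (n : ℝ)⁻¹))) := by
    ext p
    simp only [logMu0, Pi.add_apply, Pi.smul_apply, Finset.sum_apply, Finset.sum_sub_distrib,
      mul_one, smul_eq_mul, div_eq_mul_inv]
    ring
  have diff_comp_sub_mul (x h : ℝ) :
      Δ_[1] ^[k + 1] (fun p ↦ Real.log (Real.Gamma (x - p * h))) 0 =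
      -((-1) ^ k * Δ_[h] ^[k + 1] (fun z ↦ Real.log (Real.Gamma z)) (x - (k + 1) * h)) := by
    rw [fwdDiff_iter_comp_sub_mul (fun z ↦ Real.log (Real.Gamma z))]
    simp [pow_succ]
  rw [split, fwdDiff_iter_add, fwdDiff_iter_add, fwdDiff_iter_const_smul, fwdDiff_iter_finsetSum]
  simp only [Pi.add_apply, Pi.smul_apply, Finset.sum_apply, diff_comp_sub_mul,
    fwdDiff_iter_succ_mul_add_const]
  rw [mul_one, fwdDiff_one_iter_succ_log_Gamma (sub_pos.2 hk), Finset.sum_neg_distrib, one_pow]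
  split_ifs <;> simp only [smul_eq_mul] <;> ring

section

variable {ι : Type*} {l : Filter ι} {n m : ι → ℕ} {ρ : ℝ}

lemma tendsto_mul_sub_const_div_sq (hn : Tendsto (fun t ↦ (n t : ℝ)) l atTop)
    (hm : Tendsto (fun t ↦ (m t : ℝ) / n t) l (𝓝 ρ)) (b : ℝ) :
    Tendsto (fun t ↦ ((m t : ℝ) * n t - b) / (n t : ℝ) ^ 2) l (𝓝 ρ) := by
  have quotient : Tendsto (fun t ↦ ((m t : ℝ) * n t) / (n t : ℝ) ^ 2) l (𝓝 ρ) := by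
    refine hm.congr' ?_
    filter_upwards [hn.eventually_ne_atTop 0] with t ht
    field_simp
  simpa only [sub_eq_add_neg, Function.comp_apply] using
    tendsto_add_const_div ((tendsto_pow_atTop two_ne_zero).comp hn) quotient (-b)

lemma tendsto_sub_add_const_div (hn : Tendsto (fun t ↦ (n t : ℝ)) l atTop)
    (hm : Tendsto (fun t ↦ (m t : ℝ) / n t) l (𝓝 ρ)) (b : ℝ) :
    Tendsto (fun t ↦ ((m t : ℝ) - n t + b) / n t) l (𝓝 (ρ - 1)) := by
  refine tendsto_add_const_div hn ((hm.sub_const 1).congr' ?_) b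
  filter_upwards [hn.eventually_ne_atTop 0] with t ht
  rw [sub_div, div_self ht]

lemma tendsto_pow_mul_fwdDiff_logMu0_of_sum_fwdDiff_log
    (hn : Tendsto (fun t ↦ (n t : ℝ)) l atTop) (hρ : 1 < ρ)
    (hm : Tendsto (fun t ↦ (m t : ℝ) / n t) l (𝓝 ρ)) {k : ℕ} {L : ℝ}
    (hL : ∀ b : ℝ, Tendsto (fun t ↦ (n t : ℝ) ^ (2 * k) *
      ((-1) ^ k * Δ_[1] ^[k] Real.log (m t * n t - (k + 1)) -
        (if k = 0 then Real.log (n t) else 0)) - (n t : ℝ) ^ (2 * k) * (n t : ℝ)⁻¹ ^ (k + 1) *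
      ∑ j ∈ range (n t), (-1) ^ k * Δ_[1] ^[k] Real.log (m t - n t + b + j)) l (𝓝 L)) :
    Tendsto (fun t ↦ (n t : ℝ) ^ (2 * k) * Δ_[1] ^[k + 1] (logMu0 (n t) (m t)) 0) l (𝓝 L) := by
  have a_atTop : Tendsto (fun t ↦ (m t : ℝ) - n t + 1) l atTop :=
    tendsto_atTop_of_tendsto_div_s8 hn (sub_pos.2 hρ) (tendsto_sub_add_const_div hn hm 1)
  have mn_atTop : Tendsto (fun t ↦ (m t : ℝ) * n t) l atTop :=
    tendsto_atTop_of_tendsto_div_s8 ((tendsto_pow_atTop two_ne_zero).comp hn) (one_pos.trans hρ)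
      (by simpa using tendsto_mul_sub_const_div_sq hn hm 0)
  have inv_mem : ∀ᶠ t in l, (n t : ℝ)⁻¹ ∈ Set.Ioc 0 1 := by
    filter_upwards [hn.eventually_ge_atTop 1] with t ht
    exact ⟨by positivity, inv_le_one_of_one_le₀ ht⟩
  have comparison := tendsto_sub_mul_sum_fwdDiff_log_Gamma_of_fwdDiff_log (n := n) (k := k) (L := L)
    (r := fun t ↦ (n t : ℝ) ^ (2 * k))
    (u := fun t ↦ (n t : ℝ) ^ (2 * k) * ((-1) ^ k * Δ_[1] ^[k] Real.log (m t * n t - (k + 1)) -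
      (if k = 0 then Real.log (n t) else 0)))
    a_atTop inv_mem (.of_forall fun t ↦ by positivity)
    fun b ↦ by simpa only [add_assoc] using hL (1 + b)
  refine comparison.congr' ?_
  filter_upwards [mn_atTop.eventually_gt_atTop (k + 1 : ℝ)] with t ht
  rw [fwdDiff_iter_succ_logMu0 ht, mul_sub _ _ (∑ j ∈ range (n t), _)]

lemma tendsto_fwdDiff_logMu0 (hn : Tendsto (fun t ↦ (n t : ℝ)) l atTop) (hρ : 1 < ρ)
    (hm : Tendsto (fun t ↦ (m t : ℝ) / n t) l (𝓝 ρ)) :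
    Tendsto (fun t ↦ Δ_[1] ^[1] (logMu0 (n t) (m t)) 0) l
      (𝓝 (1 + (ρ - 1) * (Real.log (ρ - 1) - Real.log ρ))) := by
  have ρ_pos := one_pos.trans hρ
  suffices Tendsto (fun t ↦ (n t : ℝ) ^ (2 * 0) * Δ_[1] ^[0 + 1] (logMu0 (n t) (m t)) 0) l
      (𝓝 (1 + (ρ - 1) * (Real.log (ρ - 1) - Real.log ρ))) by simpa using this
  refine tendsto_pow_mul_fwdDiff_logMu0_of_sum_fwdDiff_log hn hρ hm fun b ↦ ?_
  have log_mn := tendsto_log_sub_log ρ_pos.ne' (tendsto_mul_sub_const_div_sq hn hm 1)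
  have average := tendsto_log_sub_sum_range_log_div hn (sub_pos.2 hρ)
    (tendsto_sub_add_const_div hn hm b)
  convert log_mn.add average using 2
  · simp only [mul_zero, pow_zero, Nat.cast_zero, zero_add, Function.iterate_zero, id_eq, one_mul,
      ↓reduceIte, pow_one, Real.log_pow, Nat.cast_ofNat, div_eq_inv_mul]
    ring
  · rw [sub_add_cancel]
    ring

lemma tendsto_pow_mul_fwdDiff_logMu0_of_fwdDiff_log (hn : Tendsto (fun t ↦ (n t : ℝ)) l atTop)
    (hρ : 1 < ρ) (hm : Tendsto (fun t ↦ (m t : ℝ) / n t) l (𝓝 ρ)) {k : ℕ} {L : ℝ}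
    (hL : ∀ b : ℝ, Tendsto (fun t ↦ (n t : ℝ) ^ k * ((-1) ^ k * Δ_[1] ^[k] Real.log (m t + b)) -
      (n t : ℝ) ^ k * ((-1) ^ k * Δ_[1] ^[k] Real.log (m t - n t + b))) l (𝓝 L)) :
    Tendsto (fun t ↦ (n t : ℝ) ^ (2 * (k + 1)) * Δ_[1] ^[k + 2] (logMu0 (n t) (m t)) 0) l
      (𝓝 (L - k ! / ρ ^ (k + 1))) := by
  refine tendsto_pow_mul_fwdDiff_logMu0_of_sum_fwdDiff_log hn hρ hm fun b ↦ ?_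
  have log_mn := tendsto_pow_mul_fwdDiff_iter_succ_log ((tendsto_pow_atTop two_ne_zero).comp hn)
    (one_pos.trans hρ) (tendsto_mul_sub_const_div_sq hn hm ((k + 1 : ℕ) + 1)) k
  refine ((hL b).sub log_mn).congr' ?_
  filter_upwards [hn.eventually_ne_atTop 0] with t ht
  have scale : (n t : ℝ) ^ (2 * (k + 1)) * (n t : ℝ)⁻¹ ^ (k + 1 + 1) = (n t : ℝ) ^ k := by
    rw [inv_pow, ← div_eq_mul_inv, div_eq_iff (pow_ne_zero _ ht)]
    ring
  have shift : (m t : ℝ) - n t + b + n t = m t + b := by ring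
  rw [scale, ← Finset.mul_sum, sum_range_fwdDiff_iter_succ, shift, if_neg k.succ_ne_zero,
    Function.comp_apply, ← pow_mul]
  ring

lemma tendsto_sq_mul_fwdDiff_iter_two_logMu0 (hn : Tendsto (fun t ↦ (n t : ℝ)) l atTop)
    (hρ : 1 < ρ) (hm : Tendsto (fun t ↦ (m t : ℝ) / n t) l (𝓝 ρ)) :
    Tendsto (fun t ↦ (n t : ℝ) ^ 2 * Δ_[1] ^[2] (logMu0 (n t) (m t)) 0) l
      (𝓝 (Real.log ρ - Real.log (ρ - 1) - 1 / ρ)) := by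
  have log_diff (b : ℝ) :=
    (tendsto_log_sub_log (one_pos.trans hρ).ne' (tendsto_add_const_div hn hm b)).sub
      (tendsto_log_sub_log (sub_pos.2 hρ).ne' (tendsto_sub_add_const_div hn hm b))
  simpa using tendsto_pow_mul_fwdDiff_logMu0_of_fwdDiff_log (k := 0) hn hρ hm
    fun b ↦ by simpa using log_diff b

lemma tendsto_pow_mul_fwdDiff_iter_add_three_logMu0
    (hn : Tendsto (fun t ↦ (n t : ℝ)) l atTop) (hρ : 1 < ρ)
    (hm : Tendsto (fun t ↦ (m t : ℝ) / n t) l (𝓝 ρ)) (k : ℕ) :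
    Tendsto (fun t ↦ (n t : ℝ) ^ (2 * (k + 2)) * Δ_[1] ^[k + 3] (logMu0 (n t) (m t)) 0) l
      (𝓝 (k ! / (ρ - 1) ^ (k + 1) - k ! / ρ ^ (k + 1) - (k + 1)! / ρ ^ (k + 2))) := by
  refine tendsto_pow_mul_fwdDiff_logMu0_of_fwdDiff_log hn hρ hm fun b ↦ ?_
  convert (tendsto_pow_mul_fwdDiff_iter_succ_log hn (sub_pos.2 hρ)
    (tendsto_sub_add_const_div hn hm b) k).sub (tendsto_pow_mul_fwdDiff_iter_succ_log hn
    (one_pos.trans hρ) (tendsto_add_const_div hn hm b) k) using 2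
  ring

lemma tendsto_pow_four_mul_third_cumulant (hn : Tendsto (fun t ↦ (n t : ℝ)) l atTop) (hρ : 1 < ρ)
    (hm : Tendsto (fun t ↦ (m t : ℝ) / n t) l (𝓝 ρ)) :
    Tendsto (fun t ↦ (n t : ℝ) ^ 4 * (mu0 3 (n t) (m t) - 3 * mu0 2 (n t) (m t) * mu0 1 (n t) (m t)
      + 2 * mu0 1 (n t) (m t) ^ 3)) l
      (𝓝 (Real.exp (3 * (1 + (ρ - 1) * (Real.log (ρ - 1) - Real.log ρ))) *
        (1 / (ρ - 1) - 1 / ρ - 1 / ρ ^ 2 +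
          3 * (Real.log ρ - Real.log (ρ - 1) - 1 / ρ) ^ 2))) := by
  have third : Tendsto (fun t ↦ ((n t : ℝ) ^ 2) ^ 2 * Δ_[1] ^[3] (logMu0 (n t) (m t)) 0) l
      (𝓝 (1 / (ρ - 1) - 1 / ρ - 1 / ρ ^ 2)) := by
    simpa [← pow_mul] using tendsto_pow_mul_fwdDiff_iter_add_three_logMu0 hn hρ hm 0
  have expansion := (((tendsto_fwdDiff_logMu0 hn hρ hm).const_mul 3).rexp).mul
    (tendsto_sq_mul_exp_three_mul_add_sub ((tendsto_pow_atTop two_ne_zero).comp hn)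
      (tendsto_sq_mul_fwdDiff_iter_two_logMu0 hn hρ hm) third)
  have n_mul_atTop : Tendsto (fun t ↦ (n t : ℝ) * (m t - n t + 1)) l atTop :=
    hn.atTop_mul_atTop₀
      (tendsto_atTop_of_tendsto_div_s8 hn (sub_pos.2 hρ) (tendsto_sub_add_const_div hn hm 1))
  refine expansion.congr' ?_
  filter_upwards [n_mul_atTop.eventually_gt_atTop 3] with t ht
  have moment {p : ℕ} (hp : p ≤ 3) : mu0 p (n t) (m t) = Real.exp (logMu0 (n t) (m t) p) :=
    (exp_logMu0 (lt_of_le_of_lt (mod_cast hp) ht)).symm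
  rw [moment le_rfl, moment (by norm_num), moment (by norm_num), Nat.cast_ofNat, Nat.cast_ofNat,
    Nat.cast_one, third_cumulant_exp_eq (logMu0_zero _ _), Function.comp_apply, ← pow_mul]
  ring

end

lemma exp_mul_third_cumulant_limit {c : ℝ} (hc : c ∈ Set.Ioo (0 : ℝ) 1) :
    Real.exp (3 * (1 + (c⁻¹ - 1) * (Real.log (c⁻¹ - 1) - Real.log c⁻¹))) *
        (1 / (c⁻¹ - 1) - 1 / c⁻¹ - 1 / c⁻¹ ^ 2 +
          3 * (Real.log c⁻¹ - Real.log (c⁻¹ - 1) - 1 / c⁻¹) ^ 2) =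
      -(Real.exp 1 ^ 3) * (1 - c) ^ (3 * (1 - c) / c - 1) *
        (c ^ 2 * (2 * c - 3) - 6 * c * (1 - c) * Real.log (1 - c)
          - 3 * (1 - c) * Real.log (1 - c) ^ 2) := by
  obtain ⟨c_pos, c_lt_one⟩ := hc
  have one_sub_pos : 0 < 1 - c := sub_pos.2 c_lt_one
  have inv_sub_one : c⁻¹ - 1 = (1 - c) / c := by field_simp
  have log_inv_sub_one : Real.log (c⁻¹ - 1) - Real.log c⁻¹ = Real.log (1 - c) := by
    rw [inv_sub_one, Real.log_div one_sub_pos.ne' c_pos.ne', Real.log_inv]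
    ring
  have exp_eq : Real.exp (3 * (1 + (1 - c) / c * Real.log (1 - c))) =
      Real.exp 1 ^ 3 * (1 - c) ^ (3 * (1 - c) / c) := by
    rw [Real.rpow_def_of_pos one_sub_pos, ← Real.exp_nat_mul, ← Real.exp_add]
    push_cast
    ring_nf
  rw [← neg_sub (Real.log (c⁻¹ - 1)), log_inv_sub_one, inv_sub_one, exp_eq,
    Real.rpow_sub_one one_sub_pos.ne']
  field_simp
  ring

/-- limit of `n⁴` times the third cumulant of the GLRT statistic under `H₀`
when `n → ∞` and `n/m → c̄ ∈ (0,1)`. -/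
theorem mu0_third_cumulant_tendsto (n m : ℕ → ℕ) (hn0 : ∀ t, 0 < n t)
    (hnm : ∀ t, n t ≤ m t)
    (hn : Tendsto (fun t => (n t : ℝ)) atTop atTop)
    (c : ℝ) (hc : c ∈ Set.Ioo (0 : ℝ) 1)
    (hratio : Tendsto (fun t => (n t : ℝ) / (m t : ℝ)) atTop (𝓝 c)) :
    Tendsto
      (fun t => (n t : ℝ) ^ 4 *
        (mu0 3 (n t) (m t) - 3 * mu0 2 (n t) (m t) * mu0 1 (n t) (m t)
          + 2 * (mu0 1 (n t) (m t)) ^ 3))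
      atTop
      (𝓝 (-(Real.exp 1 ^ 3) * (1 - c) ^ (3 * (1 - c) / c - 1) *
        (c ^ 2 * (2 * c - 3) - 6 * c * (1 - c) * Real.log (1 - c)
          - 3 * (1 - c) * (Real.log (1 - c)) ^ 2))) := by
  have hm : Tendsto (fun t ↦ (m t : ℝ) / n t) atTop (𝓝 c⁻¹) := by
    simpa only [inv_div] using hratio.inv₀ hc.1.ne'
  rw [← exp_mul_third_cumulant_limit hc]
  exact tendsto_pow_four_mul_third_cumulant hn ((one_lt_inv₀ hc.1).2 hc.2) hm
end
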